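/- Every convex hexagon that admits a monohedral tiling of the plane admits a periodic edge-to-edge monohedral tiling of the plane. -/

import Mathlib

/-!
The proof recovers Reinhardt's classification of the convex hexagons that tile the plane, and then
exhibits a periodic edge-to-edge tiling for each of the three types. Almost everything happens in
`ℂ`, for the hexagon `Hex p` with vertices `p 0, …, p 5` in counterclockwise order.

**Almost all vertices are ordinary.** The angles of a hexagon average `2π/3`. At a point which is a
corner of some tile, the angles meeting there fill up either `2π` or, if the point is interior to a
side of another tile, `π` (`Tiles.angle_sum`, proved by comparing areas in small discs). Since every
angle is less than `π`, the sum of the excesses over `2π/3` of these angles is at most `0`, and at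
most `-π/3` unless exactly three corners meet there and no tile has the point inside a side
(`Tiles.defect`). The excesses in a single tile sum to zero, so in a large disc the number of
exceptional vertices is controlled by the number of tiles along the boundary. If every disc of some
fixed radius contained an exceptional vertex, the number of tiles would grow exponentially with the
radius, whereas area bounds it quadratically. Hence there are arbitrarily large discs in which all
vertices are ordinary (`Tiles.exists_good`).

**Finite combinatorics.** Inside such a disc the tiles meet side to side. A flag is a corner of the
hexagon with a side at it; recording which of the twelve flags are glued to which, near the centre
of the disc, yields a relation with the closure properties `FlagRel` (`Tiles.exists_rel`). It only
remembers side lengths and the linear conditions that the three excesses at a vertex sum to zero. An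
exhaustive search over the patterns of equal sides and over the possible gluings, with linear
algebra on the vector of excesses, is carried out by the kernel (`run_eq`, `run_words`); its
soundness (`search_sound`) shows that the hexagon falls under one of the alternatives of `Case`
(`exists_case`). The condition that the sides of the hexagon close up (`closing`) reduces these
alternatives to Reinhardt's types `T1`, `T2` (or its mirror image `T2m`) and `T3`
(`Tiles.exists_typed`).

**Periodic tilings.** For each type a lattice of translates of finitely many copies is written down
in which every side of every tile is shared with another tile (`latTile_T1`, `latTile_T2`,
`latTile_T3`). Sharing of sides forces the union to be the whole plane, as it is closed, and open
away from a countable set of corners (`Adjacent.cover`). The copies in one period have total area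
equal to that of a cell of the lattice, so there is no overlap (`latFam_tiles`), and sharing of
sides then makes the tiling edge-to-edge (`Tiles.edge_to_edge`).
-/

open EuclideanGeometry

noncomputable section

/-- The Euclidean plane. -/
abbrev Plane : Type := EuclideanSpace ℝ (Fin 2)

/-- Translate a subset of the plane by a vector. -/
def TranslateSet (v : Plane) (t : Set Plane) : Set Plane := (fun x => x + v) '' t

/-- `T` is a monohedral tiling of the plane by the prototile `P`: every tile is the
image of `P` under an isometry of the plane, the tiles cover the plane, and the
interiors of distinct tiles are disjoint. -/
def IsMonohedralTiling (P : Set Plane) (T : Set (Set Plane)) : Prop :=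
  (∀ t ∈ T, ∃ f : Plane ≃ᵢ Plane, t = f '' P) ∧
  (⋃₀ T = Set.univ) ∧
  T.Pairwise (fun s t => Disjoint (interior s) (interior t))

/-- `e` is an edge of the convex polygon `t`: a nondegenerate segment that is an
extreme subset (a face) of `t`. -/
def IsEdgeOf (e t : Set Plane) : Prop :=
  ∃ x y : Plane, x ≠ y ∧ e = segment ℝ x y ∧ IsExtreme ℝ t e

/-- A tiling is edge-to-edge if any two distinct tiles are disjoint, meet in exactly
one common vertex of both, or meet in exactly one entire common edge of both. -/
def IsEdgeToEdge (T : Set (Set Plane)) : Prop :=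
  ∀ s ∈ T, ∀ t ∈ T, s ≠ t →
    Disjoint s t ∨
    (∃ v : Plane, v ∈ Set.extremePoints ℝ s ∧ v ∈ Set.extremePoints ℝ t ∧ s ∩ t = {v}) ∨
    (∃ e : Set Plane, IsEdgeOf e s ∧ IsEdgeOf e t ∧ s ∩ t = e)

/-- A tiling is periodic if there are two linearly independent vectors such that
translation by each of them maps every tile onto a tile. -/
def IsPeriodicTiling (T : Set (Set Plane)) : Prop :=
  ∃ v w : Plane, LinearIndependent ℝ ![v, w] ∧
    (∀ t ∈ T, TranslateSet v t ∈ T) ∧ (∀ t ∈ T, TranslateSet w t ∈ T)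

/-- A convex polygon with exactly `n` vertices: a compact convex set with nonempty
interior having exactly `n` extreme points. -/
def IsConvexNGon (P : Set Plane) (n : ℕ) : Prop :=
  IsCompact P ∧ Convex ℝ P ∧ (interior P).Nonempty ∧ (Set.extremePoints ℝ P).ncard = n

namespace HexTile

/-! ### Convex hexagons in the complex plane -/

/-- The cross product (signed parallelogram area) of two plane vectors. -/
def cr (a b : ℂ) : ℝ := a.re * b.im - a.im * b.re

/-- The signed (unnormalised) distance of `x` from the line through side `i`, the side from
`p i` to `p (i + 1)`; it is positive to the left of the side. -/
def ed (p : Fin 6 → ℂ) (i : Fin 6) (x : ℂ) : ℝ := cr (p (i + 1) - p i) (x - p i)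

/-- The points `p 0, …, p 5` are the vertices, in counterclockwise order, of a strictly convex
hexagon: every vertex off side `i` lies strictly to the left of side `i`. -/
def CCW (p : Fin 6 → ℂ) : Prop := ∀ i j, j ≠ i → j ≠ i + 1 → 0 < ed p i (p j)

/-- The hexagon with vertices `p 0, …, p 5`. -/
def Hex (p : Fin 6 → ℂ) : Set ℂ := convexHull ℝ (Set.range p)

lemma ed_self (p : Fin 6 → ℂ) (i : Fin 6) : ed p i (p i) = 0 := by simp [ed, cr]

lemma ed_succ (p : Fin 6 → ℂ) (i : Fin 6) : ed p i (p (i + 1)) = 0 := by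
  simp only [ed, cr]; ring

lemma CCW.nonneg {p : Fin 6 → ℂ} (hp : CCW p) (i j : Fin 6) : 0 ≤ ed p i (p j) := by
  by_cases h1 : j = i
  · rw [h1, ed_self]
  by_cases h2 : j = i + 1
  · rw [h2, ed_succ]
  exact (hp i j h1 h2).le

lemma ed_comb (p : Fin 6 → ℂ) (i : Fin 6) (x y : ℂ) (a b : ℝ) (h : a + b = 1) :
    ed p i (a • x + b • y) = a * ed p i x + b * ed p i y := by
  simp only [ed, cr, Complex.sub_re, Complex.sub_im, Complex.add_re, Complex.add_im,
    Complex.real_smul, Complex.mul_re, Complex.mul_im, Complex.ofReal_re, Complex.ofReal_im]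
  have : b = 1 - a := by linarith
  subst this; ring

lemma ed_continuous (p : Fin 6 → ℂ) (i : Fin 6) : Continuous (ed p i) := by
  unfold ed cr; fun_prop

/-- Barycentric coordinates: the side inequalities of a positively oriented triangle imply
membership in the triangle. -/
lemma mem_triangle {a b c x : ℂ} (hD : 0 < cr (b - a) (c - a)) (h1 : 0 ≤ cr (b - a) (x - a))
    (h2 : 0 ≤ cr (c - b) (x - b)) (h3 : 0 ≤ cr (a - c) (x - c)) :
    ∃ u v w : ℝ, 0 ≤ u ∧ 0 ≤ v ∧ 0 ≤ w ∧ u + v + w = 1 ∧ x = u • a + v • b + w • c := by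
  refine ⟨cr (c - b) (x - b) / cr (b - a) (c - a), cr (a - c) (x - c) / cr (b - a) (c - a),
    cr (b - a) (x - a) / cr (b - a) (c - a), by positivity, by positivity, by positivity, ?_, ?_⟩
  · rw [← add_div, ← add_div, div_eq_one_iff_eq hD.ne']
    simp only [cr, Complex.sub_re, Complex.sub_im]; ring
  · have hD' := hD.ne'
    apply Complex.ext <;>
    simp only [Complex.add_re, Complex.add_im, Complex.real_smul, Complex.mul_re, Complex.mul_im,
      Complex.ofReal_re, Complex.ofReal_im, zero_mul, sub_zero, add_zero] <;>
    field_simp <;>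
    simp only [cr, Complex.sub_re, Complex.sub_im] <;> ring

lemma cr_anti (a b : ℂ) : cr (-a) b = - cr a b := by simp [cr]; ring

/-- The fan triangulation of the hexagon from vertex `0`. -/
lemma mem_fan {p : Fin 6 → ℂ} (hp : CCW p) {x : ℂ} (hx : ∀ i, 0 ≤ ed p i x) :
    ∃ k : Fin 6, (k = 1 ∨ k = 2 ∨ k = 3 ∨ k = 4) ∧ ∃ u v w : ℝ, 0 ≤ u ∧ 0 ≤ v ∧ 0 ≤ w ∧
      u + v + w = 1 ∧ x = u • p 0 + v • p k + w • p (k + 1) := by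
  have key : ∀ k : Fin 6, k ≠ 0 → k ≠ 5 → 0 ≤ cr (p k - p 0) (x - p 0) →
      cr (p (k + 1) - p 0) (x - p 0) ≤ 0 → ∃ u v w : ℝ, 0 ≤ u ∧ 0 ≤ v ∧ 0 ≤ w ∧
      u + v + w = 1 ∧ x = u • p 0 + v • p k + w • p (k + 1) := by
    intro k h0 h5 h1 h2
    apply mem_triangle
    · have := hp k 0 h0.symm ((by decide : ∀ k : Fin 6, k ≠ 5 → (0 : Fin 6) ≠ k + 1) k h5)
      have e : cr (p k - p 0) (p (k + 1) - p 0) = ed p k (p 0) := by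
        simp only [ed, cr, Complex.sub_re, Complex.sub_im]; ring
      rwa [e]
    · exact h1
    · exact hx k
    · have e : cr (p 0 - p (k + 1)) (x - p (k + 1)) = - cr (p (k + 1) - p 0) (x - p 0) := by
        simp only [cr, Complex.sub_re, Complex.sub_im]; ring
      rw [e]; linarith
  have c1 : 0 ≤ cr (p 1 - p 0) (x - p 0) := hx 0
  have c5 : cr (p 5 - p 0) (x - p 0) ≤ 0 := by
    have e : cr (p 5 - p 0) (x - p 0) = - ed p 5 x := by
      simp only [ed, cr, Complex.sub_re, Complex.sub_im, show (5 : Fin 6) + 1 = 0 from rfl]; ring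
    rw [e]; linarith [hx 5]
  rcases le_or_gt (cr (p 2 - p 0) (x - p 0)) 0 with c2 | c2
  · exact ⟨1, by simp, key 1 (by decide) (by decide) c1 c2⟩
  rcases le_or_gt (cr (p 3 - p 0) (x - p 0)) 0 with c3 | c3
  · exact ⟨2, by simp, key 2 (by decide) (by decide) c2.le c3⟩
  rcases le_or_gt (cr (p 4 - p 0) (x - p 0)) 0 with c4 | c4
  · exact ⟨3, by simp, key 3 (by decide) (by decide) c3.le c4⟩
  · exact ⟨4, by simp, key 4 (by decide) (by decide) c4.le c5⟩

lemma mem_Hex_iff {p : Fin 6 → ℂ} (hp : CCW p) {x : ℂ} :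
    x ∈ Hex p ↔ ∀ i, 0 ≤ ed p i x := by
  constructor
  · intro hx i
    have : Hex p ⊆ {y | 0 ≤ ed p i y} := by
      apply convexHull_min
      · rintro _ ⟨j, rfl⟩; exact hp.nonneg i j
      · intro y hy z hz a b ha hb hab
        simp only [Set.mem_ofPred_eq] at *
        rw [ed_comb _ _ _ _ _ _ hab]; positivity
    exact this hx
  · intro hx
    obtain ⟨k, -, u, v, w, hu, hv, hw, hs, rfl⟩ := mem_fan hp hx
    have hc : Convex ℝ (Hex p) := convex_convexHull _ _
    have hm : ∀ j, p j ∈ Hex p := fun j => subset_convexHull _ _ ⟨j, rfl⟩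
    have := hc.sum_mem (t := Finset.univ) (w := ![u, v, w]) (z := ![p 0, p k, p (k + 1)])
      (by intro i _; fin_cases i <;> simpa) (by simp [Fin.sum_univ_three, hs])
      (by intro i _; fin_cases i <;> simp [hm])
    simpa [Fin.sum_univ_three] using this

lemma Hex_compact (p : Fin 6 → ℂ) : IsCompact (Hex p) := (Set.finite_range p).isCompact_convexHull ℝ

lemma Hex_convex (p : Fin 6 → ℂ) : Convex ℝ (Hex p) := convex_convexHull _ _

lemma vertex_mem (p : Fin 6 → ℂ) (i : Fin 6) : p i ∈ Hex p := subset_convexHull _ _ ⟨i, rfl⟩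

lemma CCW.cr_pos {p : Fin 6 → ℂ} (hp : CCW p) (i : Fin 6) :
    0 < cr (p (i + 1) - p i) (p (i + 1 + 1) - p (i + 1)) := by
  have := hp i (i + 1 + 1) (by revert i; decide) (by revert i; decide)
  have e : cr (p (i + 1) - p i) (p (i + 1 + 1) - p (i + 1)) = ed p i (p (i + 1 + 1)) := by
    simp only [ed, cr, Complex.sub_re, Complex.sub_im]; ring
  rwa [e]

lemma CCW.ne {p : Fin 6 → ℂ} (hp : CCW p) (i : Fin 6) : p (i + 1) ≠ p i := by
  intro h
  have := hp.cr_pos i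
  simp [h, cr] at this

lemma CCW.injective {p : Fin 6 → ℂ} (hp : CCW p) : Function.Injective p := by
  intro i j h
  by_contra hij
  by_cases h1 : j = i + 1
  · subst h1; exact hp.ne i h.symm
  · have := hp i j (Ne.symm hij) h1
    rw [← h, ed_self] at this
    exact lt_irrefl _ this

/-- A point on the line through two distinct points. -/
lemma exists_of_cr_eq_zero {a b x : ℂ} (hab : b ≠ a) (h : cr (b - a) (x - a) = 0) :
    ∃ s : ℝ, x = (1 - s) • a + s • b := by
  have hne : (b - a).re ^ 2 + (b - a).im ^ 2 ≠ 0 := by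
    intro h0
    apply hab
    have h1 : (b - a).re = 0 := by nlinarith [sq_nonneg (b - a).re, sq_nonneg (b - a).im]
    have h2 : (b - a).im = 0 := by nlinarith [sq_nonneg (b - a).re, sq_nonneg (b - a).im]
    exact sub_eq_zero.1 (Complex.ext h1 h2)
  refine ⟨((b - a).re * (x - a).re + (b - a).im * (x - a).im) /
    ((b - a).re ^ 2 + (b - a).im ^ 2), ?_⟩
  simp only [cr, Complex.sub_re, Complex.sub_im] at h hne ⊢
  apply Complex.ext <;>
  simp only [Complex.add_re, Complex.add_im, Complex.real_smul, Complex.mul_re, Complex.mul_im,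
      Complex.ofReal_re, Complex.ofReal_im, zero_mul, sub_zero, add_zero] <;>
  field_simp
  · linear_combination (b.im - a.im) * (-h)
  · linear_combination (b.re - a.re) * (h)

lemma mem_edge {p : Fin 6 → ℂ} (hp : CCW p) {x : ℂ} (hx : x ∈ Hex p) {i : Fin 6}
    (h : ed p i x = 0) : ∃ s : ℝ, 0 ≤ s ∧ s ≤ 1 ∧ x = (1 - s) • p i + s • p (i + 1) := by
  obtain ⟨s, rfl⟩ := exists_of_cr_eq_zero (hp.ne i) h
  rw [mem_Hex_iff hp] at hx
  refine ⟨s, ?_, ?_, rfl⟩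
  · have h1 := hx (i - 1)
    rw [ed_comb _ _ _ _ _ _ (by ring)] at h1
    have h2 : ed p (i - 1) (p i) = 0 := by
      have := ed_succ p (i - 1); rwa [sub_add_cancel] at this
    have h3 := hp (i - 1) (i + 1) ((by decide : ∀ i : Fin 6, i + 1 ≠ i - 1) i)
      ((by decide : ∀ i : Fin 6, i + 1 ≠ i - 1 + 1) i)
    rw [h2] at h1
    by_contra hs
    nlinarith
  · have h1 := hx (i + 1)
    rw [ed_comb _ _ _ _ _ _ (by ring), ed_self] at h1
    have h3 := hp (i + 1) i ((by decide : ∀ i : Fin 6, i ≠ i + 1) i)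
      ((by decide : ∀ i : Fin 6, i ≠ i + 1 + 1) i)
    by_contra hs
    nlinarith

/-- Two sides of the hexagon meet only in a common vertex. -/
lemma eq_vertex {p : Fin 6 → ℂ} (hp : CCW p) {x : ℂ} (hx : x ∈ Hex p) {i j : Fin 6}
    (hij : i ≠ j) (hi : ed p i x = 0) (hj : ed p j x = 0) : x = p i ∨ x = p (i + 1) := by
  obtain ⟨s, h0, h1, rfl⟩ := mem_edge hp hx hi
  rw [ed_comb _ _ _ _ _ _ (by ring)] at hj
  have a1 := hp.nonneg j i
  have a2 := hp.nonneg j (i + 1)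
  have b1 : (1 - s) * ed p j (p i) = 0 := by
    nlinarith [mul_nonneg (sub_nonneg.2 h1) a1, mul_nonneg h0 a2]
  have b2 : s * ed p j (p (i + 1)) = 0 := by
    nlinarith [mul_nonneg (sub_nonneg.2 h1) a1, mul_nonneg h0 a2]
  by_cases hs : s = 0
  · left; simp [hs]
  by_cases hs1 : s = 1
  · right; simp [hs1]
  exfalso
  have c1 : ed p j (p i) = 0 := by
    rcases mul_eq_zero.1 b1 with h | h
    · exact absurd (by linarith) hs1
    · exact h
  have c2 : ed p j (p (i + 1)) = 0 := by
    rcases mul_eq_zero.1 b2 with h | h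
    · exact absurd h hs
    · exact h
  have d1 : i = j ∨ i = j + 1 := by
    by_contra hh; push Not at hh; exact (hp j i hh.1 hh.2).ne' c1
  have d2 : i + 1 = j ∨ i + 1 = j + 1 := by
    by_contra hh; push Not at hh; exact (hp j (i + 1) hh.1 hh.2).ne' c2
  exact (by decide : ∀ i j : Fin 6, i ≠ j → (i = j ∨ i = j + 1) → ¬ (i + 1 = j ∨ i + 1 = j + 1))
    i j hij d1 d2

lemma interior_Hex {p : Fin 6 → ℂ} (hp : CCW p) :
    interior (Hex p) = {x | ∀ i, 0 < ed p i x} := by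
  apply Set.Subset.antisymm
  · intro x hx i
    have hx0 := (mem_Hex_iff hp).1 (interior_subset hx) i
    rcases hx0.lt_or_eq with h | h
    · exact h
    exfalso
    -- moving slightly to the right of side `i` leaves the hexagon
    have hcont : Filter.Tendsto (fun s : ℝ => x - s • (p (i + 1 + 1) - p (i + 1))) (nhds 0)
        (nhds x) := by
      have : Continuous (fun s : ℝ => x - s • (p (i + 1 + 1) - p (i + 1))) := by fun_prop
      simpa using this.tendsto 0
    have hev := hcont.eventually (isOpen_interior.mem_nhds hx)
    obtain ⟨s, hs, hs'⟩ := ((hev.filter_mono nhdsWithin_le_nhds).and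
      (self_mem_nhdsWithin (s := Set.Ioi (0 : ℝ)))).exists
    have h1 := (mem_Hex_iff hp).1 (interior_subset hs) i
    have h2 := hp.cr_pos i
    have e : ed p i (x - s • (p (i + 1 + 1) - p (i + 1))) =
        ed p i x - s * cr (p (i + 1) - p i) (p (i + 1 + 1) - p (i + 1)) := by
      simp only [ed, cr, Complex.sub_re, Complex.sub_im, Complex.real_smul, Complex.mul_re,
        Complex.mul_im, Complex.ofReal_re, Complex.ofReal_im]; ring
    rw [e, ← h] at h1
    have : (0 : ℝ) < s := hs'
    nlinarith
  · apply interior_maximal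
    · intro x hx; exact (mem_Hex_iff hp).2 fun i => (hx i).le
    · rw [Set.ofPred_forall]
      exact isOpen_iInter_of_finite fun i => isOpen_lt continuous_const (ed_continuous p i)

lemma interior_Hex_nonempty {p : Fin 6 → ℂ} (hp : CCW p) : (interior (Hex p)).Nonempty := by
  rw [interior_Hex hp]
  refine ⟨(1 / 2 : ℝ) • p 0 + (1 / 2 : ℝ) • ((1 / 2 : ℝ) • p 2 + (1 / 2 : ℝ) • p 4), fun i => ?_⟩
  rw [ed_comb _ _ _ _ _ _ (by norm_num), ed_comb _ _ _ _ _ _ (by norm_num)]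
  have h0 := hp.nonneg i 0
  have h2 := hp.nonneg i 2
  have h4 := hp.nonneg i 4
  have : 0 < ed p i (p 0) ∨ 0 < ed p i (p 2) ∨ 0 < ed p i (p 4) := by
    have : ∀ i : Fin 6, ((0 : Fin 6) ≠ i ∧ 0 ≠ i + 1) ∨ ((2 : Fin 6) ≠ i ∧ 2 ≠ i + 1) ∨
      ((4 : Fin 6) ≠ i ∧ 4 ≠ i + 1) := by decide
    rcases this i with h | h | h
    · exact .inl (hp i _ h.1 h.2)
    · exact .inr (.inl (hp i _ h.1 h.2))
    · exact .inr (.inr (hp i _ h.1 h.2))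
  rcases this with h | h | h <;> linarith

/-- Every point of the hexagon is an interior point, a relatively interior point of a side, or a
vertex. -/
lemma trichotomy {p : Fin 6 → ℂ} (hp : CCW p) {x : ℂ} (hx : x ∈ Hex p) :
    x ∈ interior (Hex p) ∨ (∃ i, ed p i x = 0 ∧ ∀ j, j ≠ i → 0 < ed p j x) ∨ ∃ i, x = p i := by
  have hx' := (mem_Hex_iff hp).1 hx
  by_cases h : ∃ i, ed p i x = 0
  · obtain ⟨i, hi⟩ := h
    by_cases h2 : ∃ j, j ≠ i ∧ ed p j x = 0
    · obtain ⟨j, hji, hj⟩ := h2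
      rcases eq_vertex hp hx hji.symm hi hj with h | h
      · exact .inr (.inr ⟨_, h⟩)
      · exact .inr (.inr ⟨_, h⟩)
    · push Not at h2
      exact .inr (.inl ⟨i, hi, fun j hj => lt_of_le_of_ne (hx' j) (h2 j hj).symm⟩)
  · push Not at h
    left
    rw [interior_Hex hp]
    exact fun i => lt_of_le_of_ne (hx' i) (h i).symm

end HexTile

namespace HexTile

/-! ### Ordering the vertices of a hexagon -/

lemma not_extreme_of_comb {K : Set ℂ} (hv : Convex ℝ K) {x : ℂ} (hx : x ∈ K.extremePoints ℝ)
    {a b c : ℂ} (ha : a ∈ K) (hb : b ∈ K) (hc : c ∈ K) (hax : a ≠ x) (hbx : b ≠ x) (hcx : c ≠ x)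
    {u v w : ℝ} (hu : 0 ≤ u) (hv' : 0 ≤ v) (hw : 0 ≤ w) (hs : u + v + w = 1)
    (h : x = u • a + v • b + w • c) : False := by
  rw [hv.mem_extremePoints_iff_mem_sdiff_convexHull_sdiff] at hx
  apply hx.2
  have hcv : Convex ℝ (convexHull ℝ (K \ {x})) := convex_convexHull _ _
  have := hcv.sum_mem (t := Finset.univ) (w := ![u, v, w]) (z := ![a, b, c])
      (by intro i _; fin_cases i <;> simpa) (by simp [Fin.sum_univ_three, hs])
      (by
        intro i _
        fin_cases i
        · exact subset_convexHull _ _ ⟨ha, hax⟩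
        · exact subset_convexHull _ _ ⟨hb, hbx⟩
        · exact subset_convexHull _ _ ⟨hc, hcx⟩)
  simp only [Fin.sum_univ_three, Matrix.cons_val] at this
  rwa [← h] at this

/-- A compact convex set with six extreme points is a hexagon `Hex p` with `p` counterclockwise:
the other extreme points are sorted by the slope at which they are seen from one of them. -/
theorem exists_ccw {K : Set ℂ} (hc : IsCompact K) (hv : Convex ℝ K)
    (h6 : (K.extremePoints ℝ).ncard = 6) : ∃ p : Fin 6 → ℂ, CCW p ∧ K = Hex p := by
  set S := K.extremePoints ℝ with hS
  have hfin : S.Finite := Set.finite_of_ncard_pos (by omega)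
  have hSK : S ⊆ K := extremePoints_subset
  have hKS : K = convexHull ℝ S := by
    have := closure_convexHull_extremePoints hc hv
    rwa [(hfin.isClosed_convexHull ℝ).closure_eq, eq_comm] at this
  obtain ⟨p0, hp0⟩ : S.Nonempty := by
    rw [← Set.ncard_pos hfin]; omega
  have hp0' := (hv.mem_extremePoints_iff_mem_sdiff_convexHull_sdiff.1 hp0).2
  have hsub : convexHull ℝ (S \ {p0}) ⊆ convexHull ℝ (K \ {p0}) :=
    convexHull_mono (Set.sdiff_subset_sdiff_left hSK)
  obtain ⟨f, u, hf1, hf2⟩ := geometric_hahn_banach_point_closed (convex_convexHull ℝ (S \ {p0}))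
    ((hfin.subset Set.sdiff_subset).isClosed_convexHull ℝ) (fun h => hp0' (hsub h))
  -- a linear functional `φ` positive on the vectors from `p0` to the other extreme points
  set n1 : ℝ := f 1 with hn1
  set n2 : ℝ := f Complex.I with hn2
  have hf : ∀ z : ℂ, f z = n1 * z.re + n2 * z.im := by
    intro z
    conv_lhs => rw [← Complex.re_add_im z]
    have e1 : ((z.re : ℂ)) = z.re • (1 : ℂ) := by simp
    have e2 : ((z.im : ℂ)) * Complex.I = z.im • Complex.I := by simp
    rw [map_add, e1, e2, map_smul, map_smul, smul_eq_mul, smul_eq_mul]; ring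
  have hpos : ∀ q ∈ S, q ≠ p0 → 0 < n1 * (q - p0).re + n2 * (q - p0).im := by
    intro q hq hne
    have := hf2 q (subset_convexHull _ _ ⟨hq, hne⟩)
    rw [hf] at this hf1
    simp only [Complex.sub_re, Complex.sub_im]; linarith
  have hnn : 0 < n1 ^ 2 + n2 ^ 2 := by
    have : (S \ {p0}).Nonempty := by
      rw [← Set.ncard_pos (hfin.subset Set.sdiff_subset), Set.ncard_sdiff_singleton_of_mem hp0]; omega
    obtain ⟨q, hq⟩ := this
    have := hpos q hq.1 hq.2
    by_contra hcon
    have h1 : n1 = 0 := by nlinarith [sq_nonneg n1, sq_nonneg n2]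
    have h2 : n2 = 0 := by nlinarith [sq_nonneg n1, sq_nonneg n2]
    rw [h1, h2] at this; simp at this
  set φ : ℂ → ℝ := fun z => n1 * z.re + n2 * z.im with hφ
  set ψ : ℂ → ℝ := fun z => n1 * z.im - n2 * z.re with hψ
  have hcr : ∀ a b, (n1 ^ 2 + n2 ^ 2) * cr a b = φ a * ψ b - φ b * ψ a := by
    intro a b; simp only [hφ, hψ, cr]; ring
  set key : ℂ → ℝ := fun q => ψ (q - p0) / φ (q - p0) with hkey
  have keylt : ∀ a ∈ S, a ≠ p0 → ∀ b ∈ S, b ≠ p0 → key a < key b →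
      0 < cr (a - p0) (b - p0) := by
    intro a ha ha0 b hb hb0 hlt
    have pa : 0 < φ (a - p0) := hpos a ha ha0
    have pb : 0 < φ (b - p0) := hpos b hb hb0
    rw [hkey, div_lt_div_iff₀ pa pb] at hlt
    have := hcr (a - p0) (b - p0)
    by_contra hcon
    nlinarith
  have collin : ∀ a ∈ S, a ≠ p0 → ∀ b ∈ S, b ≠ p0 → a ≠ b → φ (a - p0) ≤ φ (b - p0) →
      key a ≠ key b := by
    intro a ha ha0 b hb hb0 hab hle h
    have pa : 0 < φ (a - p0) := hpos a ha ha0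
    have pb : 0 < φ (b - p0) := hpos b hb hb0
    rw [hkey] at h
    have h' := (div_eq_div_iff pa.ne' pb.ne').1 h
    refine not_extreme_of_comb hv ha (hSK hp0) (hSK hb) (hSK hb) ha0.symm hab.symm hab.symm
      (u := 1 - φ (a - p0) / φ (b - p0)) (v := φ (a - p0) / φ (b - p0)) (w := 0) ?_ (by positivity)
      le_rfl (by ring) ?_
    · rw [sub_nonneg]; exact (div_le_one pb).2 hle
    · have hx : cr (a - p0) (b - p0) = 0 := by
        have := hcr (a - p0) (b - p0)
        have h0 : (n1 ^ 2 + n2 ^ 2) * cr (a - p0) (b - p0) = 0 := by rw [this]; linarith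
        rcases mul_eq_zero.1 h0 with h | h
        · exact absurd h hnn.ne'
        · exact h
      have e1 : φ (b - p0) * (a - p0).re = φ (a - p0) * (b - p0).re := by
        simp only [hφ]; simp only [cr] at hx; linear_combination (n2) * hx
      have e2 : φ (b - p0) * (a - p0).im = φ (a - p0) * (b - p0).im := by
        simp only [hφ]; simp only [cr] at hx; linear_combination (-n1) * hx
      set A := φ (a - p0)
      set B := φ (b - p0)
      simp only [Complex.sub_re, Complex.sub_im] at e1 e2
      apply Complex.ext <;>
      simp only [Complex.add_re, Complex.add_im, Complex.real_smul, Complex.mul_re, Complex.mul_im,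
        Complex.ofReal_re, Complex.ofReal_im, zero_mul, sub_zero, add_zero] <;>
      field_simp
      · linear_combination e1
      · linear_combination e2
  have keyinj : Set.InjOn key (S \ {p0}) := by
    intro a ha b hb h
    by_contra hab
    rcases le_total (φ (a - p0)) (φ (b - p0)) with hle | hle
    · exact collin a ha.1 ha.2 b hb.1 hb.2 hab hle h
    · exact collin b hb.1 hb.2 a ha.1 ha.2 (Ne.symm hab) hle h.symm
  have hfin' : (S \ {p0}).Finite := hfin.subset Set.sdiff_subset
  set F : Finset ℝ := hfin'.toFinset.image key with hF
  have hFc : F.card = 5 := by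
    rw [hF, Finset.card_image_of_injOn (by simpa using keyinj),
      ← Set.ncard_eq_toFinset_card _ hfin', Set.ncard_sdiff_singleton_of_mem hp0, h6]
  have hq : ∀ k : Fin 5, ∃ q, (q ∈ S ∧ q ≠ p0) ∧ key q = F.orderEmbOfFin hFc k := by
    intro k
    have := Finset.orderEmbOfFin_mem F hFc k
    obtain ⟨q, h1, h2⟩ := Finset.mem_image.1 this
    exact ⟨q, by simpa using h1, h2⟩
  choose q hqS hqk using hq
  have hlt : ∀ i j : Fin 5, i < j → 0 < cr (q i - p0) (q j - p0) := by
    intro i j hij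
    apply keylt _ (hqS i).1 (hqS i).2 _ (hqS j).1 (hqS j).2
    rw [hqk, hqk]; exact (F.orderEmbOfFin hFc).strictMono hij
  have hqinj : Function.Injective q := by
    intro i j h
    apply (F.orderEmbOfFin hFc).injective
    rw [← hqk, ← hqk, h]
  have htri : ∀ i j k : Fin 5, i < j → j < k → 0 < cr (q j - q i) (q k - q i) := by
    intro i j k hij hjk
    by_contra hcon
    have h1 := hlt i j hij
    have h2 := hlt j k hjk
    have h3 := hlt i k (hij.trans hjk)
    have e : cr (q j - q i) (q k - q i) = cr (q i - p0) (q j - p0) + cr (q j - p0) (q k - p0)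
        - cr (q i - p0) (q k - p0) := by
      simp only [cr, Complex.sub_re, Complex.sub_im]; ring
    rw [e] at hcon
    refine not_extreme_of_comb hv (hqS j).1 (hSK hp0) (hSK (hqS i).1) (hSK (hqS k).1) (hqS j).2.symm
      (fun h => hij.ne (hqinj h)) (fun h => hjk.ne' (hqinj h))
      (u := 1 - cr (q j - p0) (q k - p0) / cr (q i - p0) (q k - p0)
        - cr (q i - p0) (q j - p0) / cr (q i - p0) (q k - p0))
      (v := cr (q j - p0) (q k - p0) / cr (q i - p0) (q k - p0))
      (w := cr (q i - p0) (q j - p0) / cr (q i - p0) (q k - p0))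
      ?_ (by positivity) (by positivity) (by ring) ?_
    · rw [sub_sub, ← add_div, sub_nonneg, div_le_one h3]; linarith
    · have h3' := h3.ne'
      apply Complex.ext <;>
      simp only [Complex.add_re, Complex.add_im, Complex.real_smul, Complex.mul_re, Complex.mul_im,
        Complex.ofReal_re, Complex.ofReal_im, zero_mul, sub_zero, add_zero] <;>
      field_simp <;>
      simp only [cr, Complex.sub_re, Complex.sub_im] <;> ring
  set p : Fin 6 → ℂ := Fin.cons p0 q with hp
  have det : ∀ i j k : Fin 6, i < j → j < k → 0 < cr (p j - p i) (p k - p i) := by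
    intro i j k hij hjk
    obtain ⟨j, rfl⟩ := Fin.exists_succ_eq.2 (Fin.ne_zero_of_lt hij)
    obtain ⟨k, rfl⟩ := Fin.exists_succ_eq.2 (Fin.ne_zero_of_lt hjk)
    have hjk' : j < k := by simpa using hjk
    rcases Fin.eq_zero_or_eq_succ i with rfl | ⟨i, rfl⟩
    · simpa [hp] using hlt j k hjk'
    · have hij' : i < j := by simpa using hij
      simpa [hp] using htri i j k hij' hjk'
  refine ⟨p, ?_, ?_⟩
  · intro i j h1 h2
    by_cases hi : i = 5
    · subst hi
      have h0 : (0 : Fin 6) < j := Fin.pos_iff_ne_zero.2 h2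
      have h5 : j < 5 := lt_of_le_of_ne (Fin.le_last j) h1
      have := det 0 j 5 h0 h5
      have e : ed p 5 (p j) = cr (p j - p 0) (p 5 - p 0) := by
        simp only [ed, cr, Complex.sub_re, Complex.sub_im, show (5 : Fin 6) + 1 = 0 from rfl]; ring
      rwa [e]
    · have hi' : i < i + 1 := (by decide : ∀ i : Fin 6, i ≠ 5 → i < i + 1) i hi
      rcases lt_or_gt_of_ne h1 with h | h
      · have := det j i (i + 1) h hi'
        have e : ed p i (p j) = cr (p i - p j) (p (i + 1) - p j) := by
          simp only [ed, cr, Complex.sub_re, Complex.sub_im]; ring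
        rwa [e]
      · exact det i (i + 1) j hi'
          ((by decide : ∀ i j : Fin 6, i < j → i ≠ 5 → j ≠ i + 1 → i + 1 < j) i j h hi h2)
  · rw [hKS, Hex]
    congr 1
    have hpinj : Function.Injective p := by
      rw [hp, Fin.cons_injective_iff]
      exact ⟨by rintro ⟨k, hk⟩; exact (hqS k).2 hk, hqinj⟩
    have hsub : Set.range p ⊆ S := by
      rintro _ ⟨i, rfl⟩
      rcases Fin.eq_zero_or_eq_succ i with rfl | ⟨i, rfl⟩
      · simpa [hp] using hp0
      · simpa [hp] using (hqS i).1
    symm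
    apply Set.eq_of_subset_of_ncard_le hsub _ hfin
    rw [h6, ← Set.image_univ, Set.ncard_image_of_injective _ hpinj, Set.ncard_univ]
    simp
end HexTile

namespace HexTile

/-! ### Angles of a hexagon -/

open MeasureTheory Complex in
/-- The area of a set cut out of the disc of radius `r` by a set `A` of directions. -/
lemma volume_polar {S : Set ℂ} (hS : MeasurableSet S) {A : Set ℝ} (hA : MeasurableSet A) (r : ℝ)
    (h : ∀ ρ θ : ℝ, 0 < ρ → -Real.pi < θ → θ < Real.pi →
      ((ρ * (Real.cos θ + Real.sin θ * I) : ℂ) ∈ S ↔ ρ < r ∧ θ ∈ A)) :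
    volume S = (∫⁻ ρ in Set.Ioo 0 r, ENNReal.ofReal ρ) *
      volume (A ∩ Set.Ioo (-Real.pi) Real.pi) := by
  have e1 : volume S = ∫⁻ z, S.indicator 1 z := by
    rw [lintegral_indicator_one hS]
  rw [e1, ← Complex.lintegral_comp_polarCoord_symm]
  have e2 : (∫⁻ p in polarCoord.target,
      ENNReal.ofReal p.1 • S.indicator (1 : ℂ → ENNReal) (Complex.polarCoord.symm p)) =
      ∫⁻ p in Set.Ioi (0 : ℝ) ×ˢ Set.Ioo (-Real.pi) Real.pi,
        ((Set.Iio r).indicator (fun ρ => ENNReal.ofReal ρ) p.1) *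
          (A.indicator (1 : ℝ → ENNReal) p.2) := by
    apply setLIntegral_congr_fun (measurableSet_Ioi.prod measurableSet_Ioo)
    rintro ⟨ρ, θ⟩ ⟨h1, h2, h3⟩
    have := h ρ θ h1 h2 h3
    simp only [Complex.polarCoord_symm_apply, smul_eq_mul]
    by_cases hm : (ρ * (Real.cos θ + Real.sin θ * I) : ℂ) ∈ S
    · have h' := this.1 hm
      rw [Set.indicator_of_mem hm, Set.indicator_of_mem (by exact h'.1), Set.indicator_of_mem h'.2]
      simp
    · rw [Set.indicator_of_notMem hm]
      by_cases h4 : ρ < r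
      · have h5 : θ ∉ A := fun h5 => hm (this.2 ⟨h4, h5⟩)
        rw [Set.indicator_of_notMem h5]; simp
      · rw [Set.indicator_of_notMem (s := Set.Iio r) (by exact h4)]; simp
  rw [e2, Measure.volume_eq_prod, ← Measure.prod_restrict,
    lintegral_prod_mul (by fun_prop (disch := measurability)) (by fun_prop (disch := measurability))]
  congr 1
  · rw [lintegral_indicator measurableSet_Iio, Measure.restrict_restrict measurableSet_Iio]
    congr 2
    ext x; simp [and_comm]
  · rw [lintegral_indicator_one hA, Measure.restrict_apply hA]

open MeasureTheory Complex in
/-- Half the square of the radius, as an integral; this is the area per unit of angle of a disc. -/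
def radInt (r : ℝ) : ENNReal := ∫⁻ ρ in Set.Ioo 0 r, ENNReal.ofReal ρ

open MeasureTheory Complex in
lemma volume_ball_eq (r : ℝ) : volume (Metric.ball (0 : ℂ) r) =
    radInt r * ENNReal.ofReal (2 * Real.pi) := by
  rw [volume_polar measurableSet_ball MeasurableSet.univ r]
  · simp only [Set.univ_inter, Real.volume_Ioo, radInt]; congr 2; ring
  · intro ρ θ h1 _ _
    have e : ‖(Real.cos θ + Real.sin θ * I : ℂ)‖ = 1 := by
      push_cast; exact Complex.norm_cos_add_sin_mul_I θ
    simp only [Metric.mem_ball, dist_zero_right, norm_mul, e, mul_one, Complex.norm_real,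
      Real.norm_eq_abs, abs_of_pos h1, Set.mem_univ, and_true]

open MeasureTheory Complex in
lemma radInt_pos {r : ℝ} (hr : 0 < r) : radInt r ≠ 0 := by
  intro h
  have := volume_ball_eq r
  rw [h, zero_mul] at this
  exact (Metric.measure_ball_pos volume (0 : ℂ) hr).ne' this

open MeasureTheory Complex in
lemma radInt_ne_top (r : ℝ) : radInt r ≠ ⊤ := by
  intro h
  have := volume_ball_eq r
  rw [h, ENNReal.top_mul (by simp [Real.pi_pos])] at this
  exact measure_ball_lt_top.ne this

open MeasureTheory Complex in
/-- The area of a circular sector of angle `a`. -/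
lemma volume_sector {a : ℝ} (h0 : 0 < a) (h1 : a ≤ Real.pi) (r : ℝ) :
    volume {z : ℂ | z ∈ Metric.ball (0 : ℂ) r ∧ 0 ≤ z.im ∧ 0 ≤ (exp (a * I) * (starRingEnd ℂ) z).im}
      = radInt r * ENNReal.ofReal a := by
  have hm : MeasurableSet {z : ℂ | z ∈ Metric.ball (0 : ℂ) r ∧ 0 ≤ z.im ∧
      0 ≤ (exp (a * I) * (starRingEnd ℂ) z).im} := by
    apply measurableSet_ball.inter
    apply MeasurableSet.inter
    · exact (isClosed_le continuous_const continuous_im).measurableSet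
    · exact (isClosed_le (f := fun _ : ℂ => (0 : ℝ))
        (g := fun z : ℂ => (exp (a * I) * (starRingEnd ℂ) z).im) continuous_const
        (continuous_im.comp (continuous_const.mul Complex.continuous_conj))).measurableSet
  rw [volume_polar hm (measurableSet_Icc (a := (0 : ℝ)) (b := a)) r]
  · congr 1
    have : (Set.Ico 0 a) ⊆ Set.Icc 0 a ∩ Set.Ioo (-Real.pi) Real.pi := by
      intro x hx
      exact ⟨⟨hx.1, hx.2.le⟩, by linarith [hx.1, Real.pi_pos], by linarith [hx.2]⟩
    apply le_antisymm
    · calc _ ≤ volume (Set.Icc 0 a) := measure_mono Set.inter_subset_left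
        _ = _ := by rw [Real.volume_Icc, sub_zero]
    · calc _ = volume (Set.Ico 0 a) := by rw [Real.volume_Ico, sub_zero]
        _ ≤ _ := measure_mono this
  · intro ρ θ hρ ht1 ht2
    have e : ‖(Real.cos θ + Real.sin θ * I : ℂ)‖ = 1 := by
      push_cast; exact Complex.norm_cos_add_sin_mul_I θ
    have i1 : (ρ * (Real.cos θ + Real.sin θ * I) : ℂ).im = ρ * Real.sin θ := by
      rw [Complex.im_ofReal_mul]; simp [-ofReal_sin, -ofReal_cos]
    have i2 : (exp (a * I) * (starRingEnd ℂ) (ρ * (Real.cos θ + Real.sin θ * I))).im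
        = ρ * Real.sin (a - θ) := by
      have : (starRingEnd ℂ) (ρ * (Real.cos θ + Real.sin θ * I)) = ρ * exp (-(θ : ℂ) * I) := by
        rw [show (-(θ : ℂ) * I) = ((-θ : ℝ) : ℂ) * I by push_cast; ring, Complex.exp_mul_I]
        simp only [map_mul, map_add, conj_ofReal, conj_I]
        rw [← ofReal_cos, ← ofReal_sin]; simp
      rw [this, mul_left_comm, ← Complex.exp_add, Complex.im_ofReal_mul,
        show (a * I + -(θ : ℂ) * I) = ((a - θ : ℝ) : ℂ) * I by push_cast; ring,
        Complex.exp_ofReal_mul_I_im]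
    have hn : (ρ * (Real.cos θ + Real.sin θ * I) : ℂ) ∈ Metric.ball (0 : ℂ) r ↔ ρ < r := by
      simp only [Metric.mem_ball, dist_zero_right, norm_mul, e, mul_one, Complex.norm_real,
        Real.norm_eq_abs, abs_of_pos hρ]
    have key : (0 ≤ ρ * Real.sin θ ∧ 0 ≤ ρ * Real.sin (a - θ)) ↔ θ ∈ Set.Icc 0 a := by
      rw [mul_nonneg_iff_of_pos_left hρ, mul_nonneg_iff_of_pos_left hρ]
      constructor
      · rintro ⟨h2, h3⟩
        have h4 : 0 ≤ θ := by
          by_contra hcon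
          push Not at hcon
          exact absurd h2 (not_le.2 (Real.sin_neg_of_neg_of_neg_pi_lt hcon ht1))
        refine ⟨h4, ?_⟩
        by_contra hcon
        push Not at hcon
        exact absurd h3 (not_le.2 (Real.sin_neg_of_neg_of_neg_pi_lt (by linarith) (by linarith)))
      · rintro ⟨h2, h3⟩
        exact ⟨Real.sin_nonneg_of_nonneg_of_le_pi h2 ht2.le,
          Real.sin_nonneg_of_nonneg_of_le_pi (by linarith) (by linarith)⟩
    rw [Set.mem_ofPred_eq, hn, i1, i2, key]

lemma im_div_eq (a b : ℂ) : (a / b).im = cr b a / Complex.normSq b := by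
  rw [Complex.div_im, cr]; ring

lemma im_div_pos {a b : ℂ} (h : 0 < cr b a) : 0 < (a / b).im := by
  rw [im_div_eq]
  apply div_pos h
  rw [Complex.normSq_pos]
  rintro rfl
  simp [cr] at h

lemma arg_mem {z : ℂ} (h : 0 < z.im) : 0 < z.arg ∧ z.arg < Real.pi := by
  constructor
  · rcases (Complex.arg_nonneg_iff.2 h.le).lt_or_eq with h1 | h1
    · exact h1
    · have := Complex.arg_eq_zero_iff.1 h1.symm
      exact absurd this.2 h.ne'
  · exact Complex.arg_lt_pi_iff.2 (.inr h.ne')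

lemma arg_add_of_im_pos {x y : ℂ} (hx : 0 < x.im) (hy : 0 < y.im) (hxy : 0 < (x * y).im) :
    x.arg + y.arg = (x * y).arg := by
  have x0 : x ≠ 0 := by rintro rfl; simp at hx
  have y0 : y ≠ 0 := by rintro rfl; simp at hy
  symm
  apply Complex.arg_mul x0 y0
  obtain ⟨a1, a2⟩ := arg_mem hx
  obtain ⟨b1, b2⟩ := arg_mem hy
  refine ⟨by linarith [Real.pi_pos], ?_⟩
  by_contra hcon
  push Not at hcon
  have : (x * y).im = ‖x‖ * ‖y‖ * Real.sin (x.arg + y.arg) := by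
    conv_lhs => rw [← Complex.norm_mul_exp_arg_mul_I x, ← Complex.norm_mul_exp_arg_mul_I y]
    rw [show (‖x‖ * Complex.exp (x.arg * Complex.I) * (‖y‖ * Complex.exp (y.arg * Complex.I)) : ℂ)
      = ((‖x‖ * ‖y‖ : ℝ) : ℂ) * Complex.exp (((x.arg + y.arg : ℝ) : ℂ) * Complex.I) by
        push_cast; rw [add_mul, Complex.exp_add]; ring]
    rw [Complex.im_ofReal_mul, Complex.exp_ofReal_mul_I_im]
  have h2 : Real.sin (x.arg + y.arg) < 0 := by
    have := Real.sin_neg_of_neg_of_neg_pi_lt (x := x.arg + y.arg - 2 * Real.pi) (by linarith)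
      (by linarith)
    rwa [Real.sin_sub_two_pi] at this
  have h3 : 0 < ‖x‖ * ‖y‖ := mul_pos (norm_pos_iff.2 x0) (norm_pos_iff.2 y0)
  nlinarith

lemma arg_div_add {a b c : ℂ} (h1 : 0 < cr a b) (h2 : 0 < cr b c) (h3 : 0 < cr a c) :
    (b / a).arg + (c / b).arg = (c / a).arg := by
  have b0 : b ≠ 0 := by rintro rfl; simp [cr] at h1
  have e : (b / a) * (c / b) = c / a := by field_simp
  rw [arg_add_of_im_pos (im_div_pos h1) (im_div_pos h2) (by rw [e]; exact im_div_pos h3), e]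

/-- The angle sum of a triangle. -/
lemma arg_triangle {a b c : ℂ} (h : 0 < cr (b - a) (c - a)) :
    ((c - a) / (b - a)).arg + ((a - b) / (c - b)).arg + ((b - c) / (a - c)).arg = Real.pi := by
  have hb : 0 < cr (c - b) (a - b) := by
    convert h using 1; simp only [cr, Complex.sub_re, Complex.sub_im]; ring
  have hc : 0 < cr (a - c) (b - c) := by
    convert h using 1; simp only [cr, Complex.sub_re, Complex.sub_im]; ring
  have n1 : b - a ≠ 0 := by intro h0; simp [h0, cr] at h
  have n2 : c - b ≠ 0 := by intro h0; simp [h0, cr] at hb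
  have n3 : a - c ≠ 0 := by intro h0; simp [h0, cr] at hc
  have m1 := im_div_pos h
  have m2 := im_div_pos hb
  have m3 := im_div_pos hc
  set x := (c - a) / (b - a) with hx
  set y := (a - b) / (c - b) with hy
  set z := (b - c) / (a - c) with hz
  have e : x * y * z = -1 := by
    rw [hx, hy, hz]
    have : (c - a) = -(a - c) := by ring
    rw [this, show a - b = -(b - a) by ring, show b - c = -(c - b) by ring]
    field_simp
  have x0 : x ≠ 0 := by intro h0; simp [h0] at m1
  have y0 : y ≠ 0 := by intro h0; simp [h0] at m2
  have z0 : z ≠ 0 := by intro h0; simp [h0] at m3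
  have h1 : ((x.arg + y.arg + z.arg : ℝ) : Real.Angle) = (Real.pi : ℝ) := by
    rw [Real.Angle.coe_add, Real.Angle.coe_add, ← Complex.arg_mul_coe_angle x0 y0,
      ← Complex.arg_mul_coe_angle (mul_ne_zero x0 y0) z0, e, Complex.arg_neg_one]
  rw [Real.Angle.angle_eq_iff_two_pi_dvd_sub] at h1
  obtain ⟨k, hk⟩ := h1
  obtain ⟨a1, a2⟩ := arg_mem m1
  obtain ⟨b1, b2⟩ := arg_mem m2
  obtain ⟨c1, c2⟩ := arg_mem m3
  have k0 : k = 0 := by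
    have p := Real.pi_pos
    have l1 : (-1 : ℝ) < k := by
      by_contra hcon; push Not at hcon; nlinarith
    have l2 : (k : ℝ) < 1 := by
      by_contra hcon; push Not at hcon; nlinarith
    have l1' : (-1 : ℤ) < k := by exact_mod_cast l1
    have l2' : k < (1 : ℤ) := by exact_mod_cast l2
    omega
  rw [k0] at hk
  simp at hk
  linarith

/-- The interior angle of the hexagon at vertex `i`. -/
def ang (p : Fin 6 → ℂ) (i : Fin 6) : ℝ := ((p (i - 1) - p i) / (p (i + 1) - p i)).arg

/-- The length of side `i`. -/
def len (p : Fin 6 → ℂ) (i : Fin 6) : ℝ := ‖p (i + 1) - p i‖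

lemma CCW.cr_corner {p : Fin 6 → ℂ} (hp : CCW p) (i : Fin 6) :
    0 < cr (p (i + 1) - p i) (p (i - 1) - p i) :=
  hp i (i - 1) ((by decide : ∀ i : Fin 6, i - 1 ≠ i) i) ((by decide : ∀ i : Fin 6, i - 1 ≠ i + 1) i)

lemma ang_mem {p : Fin 6 → ℂ} (hp : CCW p) (i : Fin 6) : 0 < ang p i ∧ ang p i < Real.pi :=
  arg_mem (im_div_pos (hp.cr_corner i))

lemma len_pos {p : Fin 6 → ℂ} (hp : CCW p) (i : Fin 6) : 0 < len p i :=
  norm_pos_iff.2 (sub_ne_zero.2 (hp.ne i))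

/-- The direction of side `i`, as a unit complex number. -/
def dir (p : Fin 6 → ℂ) (i : Fin 6) : ℂ := (p (i + 1) - p i) / len p i

lemma len_mul_dir {p : Fin 6 → ℂ} (hp : CCW p) (i : Fin 6) :
    (len p i : ℂ) * dir p i = p (i + 1) - p i := by
  rw [dir, mul_div_cancel₀]
  exact_mod_cast (len_pos hp i).ne'

lemma norm_dir {p : Fin 6 → ℂ} (hp : CCW p) (i : Fin 6) : ‖dir p i‖ = 1 := by
  rw [dir, norm_div, Complex.norm_real, Real.norm_eq_abs, abs_of_pos (len_pos hp i)]
  exact div_self (len_pos hp i).ne'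

lemma dir_pred {p : Fin 6 → ℂ} (hp : CCW p) (i : Fin 6) :
    dir p (i - 1) = - (Complex.exp (ang p i * Complex.I) * dir p i) := by
  have h := Complex.norm_mul_exp_arg_mul_I ((p (i - 1) - p i) / (p (i + 1) - p i))
  have l1 : (len p i : ℂ) ≠ 0 := by exact_mod_cast (len_pos hp i).ne'
  have l2 : (len p (i - 1) : ℂ) ≠ 0 := by exact_mod_cast (len_pos hp (i - 1)).ne'
  have n1 : p (i + 1) - p i ≠ 0 := sub_ne_zero.2 (hp.ne i)
  have e : ‖p (i - 1) - p i‖ = len p (i - 1) := by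
    rw [len, sub_add_cancel, norm_sub_rev]
  rw [norm_div, e, ← len, ← ang] at h
  rw [dir, dir, sub_add_cancel]
  rw [eq_div_iff n1] at h
  push_cast at h
  field_simp at h ⊢
  linear_combination h

lemma dir_succ {p : Fin 6 → ℂ} (hp : CCW p) (i : Fin 6) :
    dir p (i + 1) = - (Complex.exp (-(ang p (i + 1) * Complex.I)) * dir p i) := by
  have := dir_pred hp (i + 1)
  rw [add_sub_cancel_right] at this
  rw [this, mul_neg, neg_neg, ← mul_assoc, ← Complex.exp_add, neg_add_cancel, Complex.exp_zero,
    one_mul]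

/-- The angle sum of a convex hexagon. -/
theorem ang_sum {p : Fin 6 → ℂ} (hp : CCW p) :
    ang p 0 + ang p 1 + ang p 2 + ang p 3 + ang p 4 + ang p 5 = 4 * Real.pi := by
  have D : ∀ a b c : Fin 6, ∀ i j : Fin 6, j ≠ i → j ≠ i + 1 →
      cr (p b - p a) (p c - p a) = ed p i (p j) → 0 < cr (p b - p a) (p c - p a) := by
    intro a b c i j h1 h2 h3; rw [h3]; exact hp i j h1 h2
  have d012 : 0 < cr (p 1 - p 0) (p 2 - p 0) := hp 0 2 (by decide) (by decide)
  have d013 : 0 < cr (p 1 - p 0) (p 3 - p 0) := hp 0 3 (by decide) (by decide)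
  have d014 : 0 < cr (p 1 - p 0) (p 4 - p 0) := hp 0 4 (by decide) (by decide)
  have d015 : 0 < cr (p 1 - p 0) (p 5 - p 0) := hp 0 5 (by decide) (by decide)
  have d023 : 0 < cr (p 2 - p 0) (p 3 - p 0) := D _ _ _ 2 0 (by decide) (by decide) (by
    simp only [ed, cr, Complex.sub_re, Complex.sub_im, show (2 : Fin 6) + 1 = 3 from rfl]; ring)
  have d034 : 0 < cr (p 3 - p 0) (p 4 - p 0) := D _ _ _ 3 0 (by decide) (by decide) (by
    simp only [ed, cr, Complex.sub_re, Complex.sub_im, show (3 : Fin 6) + 1 = 4 from rfl]; ring)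
  have d045 : 0 < cr (p 4 - p 0) (p 5 - p 0) := D _ _ _ 4 0 (by decide) (by decide) (by
    simp only [ed, cr, Complex.sub_re, Complex.sub_im, show (4 : Fin 6) + 1 = 5 from rfl]; ring)
  have t1 := arg_triangle d012
  have t2 := arg_triangle d023
  have t3 := arg_triangle d034
  have t4 := arg_triangle d045
  have f1 := arg_div_add d012 d023 d013
  have f2 := arg_div_add d013 d034 d014
  have f3 := arg_div_add d014 d045 d015
  have split : ∀ k : Fin 6, k ≠ 0 → k ≠ 1 → k ≠ 5 → ang p k =
      ((p 0 - p k) / (p (k + 1) - p k)).arg + ((p (k - 1) - p k) / (p 0 - p k)).arg := by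
    intro k h0 h1 h5
    rw [arg_div_add, ang]
    · exact hp k 0 h0.symm ((by decide : ∀ k : Fin 6, k ≠ 5 → 0 ≠ k + 1) k h5)
    · have := hp (k - 1) 0 ((by decide : ∀ k : Fin 6, k ≠ 1 → 0 ≠ k - 1) k h1)
        ((by decide : ∀ k : Fin 6, k ≠ 0 → 0 ≠ k - 1 + 1) k h0)
      convert this using 1
      simp only [ed, cr, Complex.sub_re, Complex.sub_im, sub_add_cancel]; ring
    · exact hp.cr_corner k
  have s2 := split 2 (by decide) (by decide) (by decide)
  have s3 := split 3 (by decide) (by decide) (by decide)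
  have s4 := split 4 (by decide) (by decide) (by decide)
  have a0 : ang p 0 = ((p 5 - p 0) / (p 1 - p 0)).arg := rfl
  have a1 : ang p 1 = ((p 0 - p 1) / (p 2 - p 1)).arg := rfl
  have a5 : ang p 5 = ((p 4 - p 5) / (p 0 - p 5)).arg := rfl
  simp only [show (2 : Fin 6) + 1 = 3 from rfl, show (3 : Fin 6) + 1 = 4 from rfl,
    show (4 : Fin 6) + 1 = 5 from rfl, show (2 : Fin 6) - 1 = 1 from rfl,
    show (3 : Fin 6) - 1 = 2 from rfl, show (4 : Fin 6) - 1 = 3 from rfl] at s2 s3 s4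
  linarith

end HexTile

namespace HexTile

/-! ### Densities of a hexagon at its boundary points -/

open MeasureTheory

lemma aff_measurePreserving (φ : ℂ ≃ᵃⁱ[ℝ] ℂ) : MeasurePreserving φ (volume : Measure ℂ) volume := by
  have h : (φ : ℂ → ℂ) = (fun x => x + φ 0) ∘ φ.linearIsometryEquiv := by
    funext x
    have := φ.map_vadd 0 x
    simpa using this
  rw [h]
  exact (measurePreserving_add_right volume (φ 0)).comp φ.linearIsometryEquiv.measurePreserving

lemma aff_volume_preimage (φ : ℂ ≃ᵃⁱ[ℝ] ℂ) (s : Set ℂ) : volume (φ ⁻¹' s) = volume s :=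
  (aff_measurePreserving φ).measure_preimage_emb φ.toHomeomorph.measurableEmbedding s

lemma aff_comb (φ : ℂ ≃ᵃⁱ[ℝ] ℂ) (a b : ℂ) (s : ℝ) :
    φ ((1 - s) • a + s • b) = (1 - s) • φ a + s • φ b := by
  have := φ.toAffineEquiv.toAffineMap.apply_lineMap a b s
  simpa [AffineMap.lineMap_apply_module] using this

/-- The map `z ↦ x + u * z` for a unit complex number `u`. -/
def rot (x u : ℂ) (hu : ‖u‖ = 1) : ℂ ≃ᵃⁱ[ℝ] ℂ :=
  (rotation ⟨u, mem_sphere_zero_iff_norm.2 hu⟩).toAffineIsometryEquiv.trans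
    (AffineIsometryEquiv.constVAdd ℝ ℂ x)

lemma rot_apply (x u : ℂ) (hu : ‖u‖ = 1) (z : ℂ) : rot x u hu z = x + u * z := by
  simp [rot]; exact rotation_apply _ _

lemma ed_sub (p : Fin 6 → ℂ) (i : Fin 6) (x z : ℂ) :
    ed p i (x + z) = ed p i x + cr (p (i + 1) - p i) z := by
  simp only [ed, cr, Complex.sub_re, Complex.sub_im, Complex.add_re, Complex.add_im]; ring

lemma cr_mul_im (a b : ℂ) : cr a b = ((starRingEnd ℂ) a * b).im := by
  simp [cr]; ring

/-- Near a point `x` lying on the sides `i` and `j` only, at which these sides enclose the angle `a`,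
the hexagon is a sector of angle `a`. The case `i = j`, `a = π` is allowed. -/
lemma volume_wedge {p : Fin 6 → ℂ} (hp : CCW p) {x : ℂ} {i j : Fin 6} {a : ℝ} (ha : 0 < a)
    (ha' : a ≤ Real.pi) (hi : ed p i x = 0) (hj : ed p j x = 0)
    (hd : dir p j = -(Complex.exp (a * Complex.I) * dir p i))
    (hk : ∀ k, k ≠ i → k ≠ j → 0 < ed p k x) :
    ∃ r0 > 0, ∀ r, r ≤ r0 → volume (Metric.ball x r ∩ Hex p) = radInt r * ENNReal.ofReal a := by
  have hopen : IsOpen {y | ∀ k, k ≠ i → k ≠ j → 0 < ed p k y} := by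
    simp only [Set.ofPred_forall]
    exact isOpen_iInter_of_finite fun k => isOpen_iInter_of_finite fun _ =>
      isOpen_iInter_of_finite fun _ => isOpen_lt continuous_const (ed_continuous p k)
  obtain ⟨r0, hr0, hsub⟩ := Metric.isOpen_iff.1 hopen x hk
  refine ⟨r0, hr0, fun r hr => ?_⟩
  rw [← volume_sector ha ha' r, ← aff_volume_preimage (rot x (dir p i) (norm_dir hp i))]
  congr 1
  ext z
  have hli := len_mul_dir hp i
  have hlj := len_mul_dir hp j
  have pi := len_pos hp i
  have pj := len_pos hp j
  have nd : (starRingEnd ℂ) (dir p i) * dir p i = 1 := by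
    rw [mul_comm, Complex.mul_conj, Complex.normSq_eq_norm_sq, norm_dir hp i]; simp
  have e1 : ed p i (x + dir p i * z) = len p i * z.im := by
    rw [ed_sub, hi, cr_mul_im, ← hli, map_mul, zero_add]
    rw [show (starRingEnd ℂ) (len p i : ℂ) * (starRingEnd ℂ) (dir p i) * (dir p i * z)
      = (len p i : ℂ) * ((starRingEnd ℂ) (dir p i) * dir p i * z) by
      rw [Complex.conj_ofReal]; ring, nd, Complex.im_ofReal_mul, one_mul]
  have e2 : ed p j (x + dir p i * z) =
      len p j * (Complex.exp (a * Complex.I) * (starRingEnd ℂ) z).im := by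
    rw [ed_sub, hj, cr_mul_im, ← hlj, map_mul, zero_add, hd]
    rw [show (starRingEnd ℂ) (len p j : ℂ) *
        (starRingEnd ℂ) (-(Complex.exp (a * Complex.I) * dir p i)) * (dir p i * z)
      = (len p j : ℂ) * -((starRingEnd ℂ) (Complex.exp (a * Complex.I)) * z *
        ((starRingEnd ℂ) (dir p i) * dir p i)) by
      rw [Complex.conj_ofReal, map_neg, map_mul]; ring, nd, Complex.im_ofReal_mul, mul_one]
    congr 1
    simp only [Complex.neg_im, Complex.mul_im, Complex.conj_re, Complex.conj_im]
    ring
  simp only [Set.mem_preimage, rot_apply, Set.mem_inter_iff, Set.mem_ofPred_eq, mem_Hex_iff hp]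
  have eb : x + dir p i * z ∈ Metric.ball x r ↔ z ∈ Metric.ball (0 : ℂ) r := by
    simp [Metric.mem_ball, dist_eq_norm, norm_dir hp i]
  rw [eb]
  constructor
  · rintro ⟨h1, h2⟩
    have f1 := h2 i
    have f2 := h2 j
    rw [e1] at f1; rw [e2] at f2
    exact ⟨h1, nonneg_of_mul_nonneg_right f1 pi, nonneg_of_mul_nonneg_right f2 pj⟩
  · rintro ⟨h1, h2, h3⟩
    refine ⟨h1, fun k => ?_⟩
    by_cases ki : k = i
    · rw [ki, e1]; positivity
    by_cases kj : k = j
    · rw [kj, e2]; exact mul_nonneg pj.le h3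
    · exact (hsub (Metric.ball_subset_ball hr (eb.2 h1)) k ki kj).le

lemma volume_corner {p : Fin 6 → ℂ} (hp : CCW p) (i : Fin 6) :
    ∃ r0 > 0, ∀ r, r ≤ r0 →
      volume (Metric.ball (p i) r ∩ Hex p) = radInt r * ENNReal.ofReal (ang p i) := by
  refine volume_wedge hp (i := i) (j := i - 1) (ang_mem hp i).1 (ang_mem hp i).2.le (ed_self p i) ?_
    (dir_pred hp i) ?_
  · have := ed_succ p (i - 1); rwa [sub_add_cancel] at this
  · intro k h1 h2
    exact hp k i h1.symm (fun h => h2 (by rw [h, add_sub_cancel_right]))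

lemma volume_side {p : Fin 6 → ℂ} (hp : CCW p) {x : ℂ} {i : Fin 6} (hi : ed p i x = 0)
    (hk : ∀ k, k ≠ i → 0 < ed p k x) :
    ∃ r0 > 0, ∀ r, r ≤ r0 →
      volume (Metric.ball x r ∩ Hex p) = radInt r * ENNReal.ofReal Real.pi := by
  refine volume_wedge hp (i := i) (j := i) Real.pi_pos le_rfl hi hi ?_ fun k h _ => hk k h
  simp [Complex.exp_pi_mul_I]

end HexTile

namespace HexTile

open MeasureTheory

/-! ### Angle sums in a tiling -/

/-- The images of the convex hexagon `Hex p` under the isometries `F t` tile the plane. -/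
structure Tiles (p : Fin 6 → ℂ) {ι : Type*} (F : ι → ℂ ≃ᵃⁱ[ℝ] ℂ) : Prop where
  ccw : CCW p
  cover : ∀ x, ∃ t, (F t).symm x ∈ Hex p
  disj : ∀ s t x, (F s).symm x ∈ interior (Hex p) → (F t).symm x ∈ interior (Hex p) → s = t

/-- The point `P` lies in the relative interior of a side of tile `t`. -/
def OnSide (p : Fin 6 → ℂ) {ι : Type*} (F : ι → ℂ ≃ᵃⁱ[ℝ] ℂ) (t : ι) (P : ℂ) : Prop :=
  ∃ i, ed p i ((F t).symm P) = 0 ∧ ∀ j, j ≠ i → 0 < ed p j ((F t).symm P)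

/-- The diameter of the hexagon. -/
def hdiam (p : Fin 6 → ℂ) : ℝ := Metric.diam (Hex p)

lemma dist_le_hdiam {p : Fin 6 → ℂ} {x y : ℂ} (hx : x ∈ Hex p) (hy : y ∈ Hex p) :
    dist x y ≤ hdiam p := Metric.dist_le_diam_of_mem (Hex_compact p).isBounded hx hy

lemma hdiam_pos {p : Fin 6 → ℂ} (hp : CCW p) : 0 < hdiam p :=
  lt_of_lt_of_le (dist_pos.2 (hp.ne 0)) (dist_le_hdiam (vertex_mem p _) (vertex_mem p _))

/-- The area of the hexagon. -/
def area (p : Fin 6 → ℂ) : ℝ := (volume (Hex p)).toReal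

lemma volume_Hex_ne_top (p : Fin 6 → ℂ) : volume (Hex p) ≠ ⊤ := (Hex_compact p).measure_lt_top.ne

lemma area_pos {p : Fin 6 → ℂ} (hp : CCW p) : 0 < area p := by
  apply ENNReal.toReal_pos _ (volume_Hex_ne_top p)
  exact ((isOpen_interior.measure_pos _ (interior_Hex_nonempty hp)).trans_le
    (measure_mono interior_subset)).ne'

lemma volume_boundary (p : Fin 6 → ℂ) : volume (Hex p \ interior (Hex p)) = 0 := by
  have := (Hex_convex p).addHaar_frontier volume
  rwa [(Hex_compact p).isClosed.frontier_eq] at this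

variable {p : Fin 6 → ℂ} {ι : Type*} {F : ι → ℂ ≃ᵃⁱ[ℝ] ℂ}

lemma Tiles.aedisjoint (hT : Tiles p F) {s t : ι} (h : s ≠ t) :
    AEDisjoint volume ((F s).symm ⁻¹' Hex p) ((F t).symm ⁻¹' Hex p) := by
  have hs : ∀ u, volume ((F u).symm ⁻¹' (Hex p \ interior (Hex p))) = 0 := fun u => by
    rw [aff_volume_preimage, volume_boundary]
  apply measure_mono_null _ (measure_union_null (hs s) (hs t))
  rintro x ⟨h1, h2⟩
  by_contra hx
  simp only [Set.mem_union, Set.mem_preimage, Set.mem_sdiff, not_or, not_and, not_not] at hx h1 h2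
  exact h (hT.disj s t x (hx.1 h1) (hx.2 h2))

lemma Hex_measurable (u : ι) (F : ι → ℂ ≃ᵃⁱ[ℝ] ℂ) : MeasurableSet ((F u).symm ⁻¹' Hex p) :=
  ((Hex_compact p).isClosed.preimage (F u).symm.continuous).measurableSet

/-- The area bound on the number of tiles meeting a disc. -/
lemma Tiles.card_le (hT : Tiles p F) (S : Finset ι) (c : ℂ) {R : ℝ} (hR : 0 ≤ R)
    (hS : ∀ t ∈ S, ∃ x ∈ Hex p, dist (F t x) c ≤ R) :
    (S.card : ℝ) * area p ≤ Real.pi * (R + hdiam p) ^ 2 := by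
  have hD := hdiam_pos hT.ccw
  have h1 : volume (⋃ t ∈ S, (F t).symm ⁻¹' Hex p) = ∑ t ∈ S, volume ((F t).symm ⁻¹' Hex p) := by
    apply measure_biUnion_finset₀
    · intro s _ t _ h; exact hT.aedisjoint h
    · intro t _; exact (Hex_measurable t F).nullMeasurableSet
  have h2 : (⋃ t ∈ S, (F t).symm ⁻¹' Hex p) ⊆ Metric.closedBall c (R + hdiam p) := by
    intro y hy
    simp only [Set.mem_iUnion, Set.mem_preimage] at hy
    obtain ⟨t, ht, hy⟩ := hy
    obtain ⟨x, hx, hxc⟩ := hS t ht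
    have : dist y (F t x) ≤ hdiam p := by
      have := dist_le_hdiam hy hx
      rwa [← (F t).dist_map, AffineIsometryEquiv.apply_symm_apply] at this
    rw [Metric.mem_closedBall]
    linarith [dist_triangle y (F t x) c]
  have h3 := measure_mono (μ := volume) h2
  rw [h1] at h3
  simp only [aff_volume_preimage, Finset.sum_const, Complex.volume_closedBall] at h3
  have h4 := ENNReal.toReal_mono (by finiteness) h3
  rw [nsmul_eq_mul, ENNReal.toReal_mul, ENNReal.toReal_mul, ENNReal.toReal_pow,
    ENNReal.toReal_ofReal (by linarith)] at h4
  simp only [ENNReal.toReal_natCast, ENNReal.coe_toReal, NNReal.coe_real_pi] at h4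
  unfold area
  linarith

lemma Tiles.finite_near (hT : Tiles p F) (c : ℂ) (R : ℝ) :
    {t | ∃ x ∈ Hex p, dist (F t x) c ≤ R}.Finite := by
  by_contra hinf
  have hinf : {t | ∃ x ∈ Hex p, dist (F t x) c ≤ R}.Infinite := hinf
  obtain ⟨n, hn⟩ := exists_nat_gt (Real.pi * (max R 0 + hdiam p) ^ 2 / area p)
  obtain ⟨S, hS, hc⟩ := hinf.exists_subset_card_eq n
  have := hT.card_le S c (le_max_right R 0) (fun t ht => by
    obtain ⟨x, hx, h⟩ := hS ht
    exact ⟨x, hx, h.trans (le_max_left _ _)⟩)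
  rw [hc] at this
  rw [div_lt_iff₀ (area_pos hT.ccw)] at hn
  linarith

lemma Tiles.finite_at (hT : Tiles p F) (P : ℂ) : {t | (F t).symm P ∈ Hex p}.Finite :=
  (hT.finite_near P 0).subset fun t ht => ⟨_, ht, by simp⟩

/-- Near `P` only the tiles containing `P` are visible. -/
lemma Tiles.exists_radius (hT : Tiles p F) (P : ℂ) :
    ∃ r > 0, ∀ t, (F t).symm P ∉ Hex p → ∀ y ∈ Metric.ball P r, (F t).symm y ∉ Hex p := by
  have hfin := hT.finite_near P 1
  have hopen : IsOpen (⋂ t ∈ {t | ∃ x ∈ Hex p, dist (F t x) P ≤ 1},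
      {y | (F t).symm P ∉ Hex p → (F t).symm y ∉ Hex p}) := by
    apply hfin.isOpen_biInter
    intro t _
    by_cases h : (F t).symm P ∈ Hex p
    · simp [h]
    · simp only [h, not_false_eq_true, true_imp_iff]
      exact (Hex_compact p).isClosed.isOpen_compl.preimage (F t).symm.continuous
  obtain ⟨r, hr, hsub⟩ := Metric.isOpen_iff.1 hopen P (by
    simp only [Set.mem_iInter]; intro t _ h; exact h)
  refine ⟨min r 1, by positivity, fun t ht y hy hyt => ?_⟩
  have hy1 := Metric.ball_subset_ball (min_le_left _ _) hy
  have hy2 := Metric.ball_subset_ball (min_le_right _ _) hy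
  have := hsub hy1
  simp only [Set.mem_iInter] at this
  exact this t ⟨_, hyt, by rw [AffineIsometryEquiv.apply_symm_apply]; exact (Metric.mem_ball.1 hy2).le⟩ ht hyt

lemma not_onSide_vertex {t : ι} {i : Fin 6} : ¬ OnSide p F t (F t (p i)) := by
  rintro ⟨j, h1, h2⟩
  rw [AffineIsometryEquiv.symm_apply_apply] at h1 h2
  by_cases h : i = j
  · have := h2 (i - 1) (by rw [h]; exact (by decide : ∀ j : Fin 6, j - 1 ≠ j) j)
    have h3 := ed_succ p (i - 1)
    rw [sub_add_cancel] at h3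
    linarith
  · have := h2 i h
    rw [ed_self] at this
    exact this.false

open Classical in
/-- The contribution of tile `t` to the full angle at `P`, when `P` is not an interior point. -/
def dens (p : Fin 6 → ℂ) (F : ι → ℂ ≃ᵃⁱ[ℝ] ℂ) (P : ℂ) (t : ι) : ℝ :=
  (∑ i, if F t (p i) = P then ang p i else 0) + if OnSide p F t P then Real.pi else 0

lemma dens_spec (hp : CCW p) {t : ι} {P : ℂ} (h : (F t).symm P ∈ Hex p)
    (hi : (F t).symm P ∉ interior (Hex p)) :
    0 ≤ dens p F P t ∧ ∃ r0 > 0, ∀ r, r ≤ r0 →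
      volume (Metric.ball P r ∩ (F t).symm ⁻¹' Hex p) = radInt r * ENNReal.ofReal (dens p F P t) := by
  have key : ∀ r, volume (Metric.ball P r ∩ (F t).symm ⁻¹' Hex p) =
      volume (Metric.ball ((F t).symm P) r ∩ Hex p) := by
    intro r
    rw [← aff_volume_preimage (F t)]
    congr 1
    ext z
    simp only [Set.mem_inter_iff, Set.mem_preimage, AffineIsometryEquiv.symm_apply_apply,
      Metric.mem_ball]
    rw [← (F t).dist_map z, AffineIsometryEquiv.apply_symm_apply]
  simp only [key]
  rcases trichotomy hp h with h | h | ⟨i, h⟩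
  · exact absurd h hi
  · have e : dens p F P t = Real.pi := by
      have : OnSide p F t P := h
      rw [dens, if_pos this, Finset.sum_eq_zero, zero_add]
      intro i _
      rw [if_neg]
      rintro rfl
      exact not_onSide_vertex this
    rw [e]
    obtain ⟨i, h1, h2⟩ := h
    exact ⟨Real.pi_pos.le, volume_side hp h1 h2⟩
  · have hP : P = F t (p i) := by rw [← h, AffineIsometryEquiv.apply_symm_apply]
    have e : dens p F P t = ang p i := by
      rw [dens, if_neg (by rw [hP]; exact not_onSide_vertex), add_zero, hP]
      simp only [(F t).injective.eq_iff, hp.injective.eq_iff, Finset.sum_ite_eq', Finset.mem_univ,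
        if_true]
    rw [e, h]
    exact ⟨(ang_mem hp i).1.le, volume_corner hp i⟩

/-- The angles around a point that is interior to no tile add up to `2π`. -/
theorem Tiles.angle_sum (hT : Tiles p F) (P : ℂ) (hP : ∀ t, (F t).symm P ∉ interior (Hex p)) :
    ∃ (C : Finset (ι × Fin 6)) (E : Finset ι), (∀ a, a ∈ C ↔ F a.1 (p a.2) = P) ∧
      (∀ t, t ∈ E ↔ OnSide p F t P) ∧
      ∑ a ∈ C, ang p a.2 + E.card * Real.pi = 2 * Real.pi := by
  classical
  set N := (hT.finite_at P).toFinset with hN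
  have hmem : ∀ t, t ∈ N ↔ (F t).symm P ∈ Hex p := fun t => by simp [hN]
  refine ⟨(N ×ˢ Finset.univ).filter (fun a => F a.1 (p a.2) = P), N.filter (OnSide p F · P),
    ?_, ?_, ?_⟩
  · rintro ⟨t, i⟩
    simp only [Finset.mem_filter, Finset.mem_product, Finset.mem_univ, and_true, hmem,
      and_iff_right_iff_imp]
    rintro rfl
    simpa using vertex_mem p i
  · intro t
    simp only [Finset.mem_filter, hmem, and_iff_right_iff_imp]
    rintro ⟨i, h1, h2⟩
    rw [mem_Hex_iff hT.ccw]
    intro j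
    by_cases hj : j = i
    · rw [hj, h1]
    · exact (h2 j hj).le
  · have e : (∑ a ∈ (N ×ˢ Finset.univ).filter (fun a : ι × Fin 6 => F a.1 (p a.2) = P), ang p a.2) +
        (N.filter (OnSide p F · P)).card * Real.pi = ∑ t ∈ N, dens p F P t := by
      simp only [dens, Finset.sum_add_distrib]
      congr 1
      · rw [Finset.sum_filter, Finset.sum_product]
      · rw [← Finset.sum_filter, Finset.sum_const, nsmul_eq_mul]
    rw [e]
    have hspec := fun t (ht : t ∈ N) => dens_spec hT.ccw ((hmem t).1 ht) (hP t)
    obtain ⟨r1, hr1, h1⟩ := hT.exists_radius P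
    have : ∃ r > 0, r ≤ r1 ∧ ∀ t ∈ N, volume (Metric.ball P r ∩ (F t).symm ⁻¹' Hex p) =
        radInt r * ENNReal.ofReal (dens p F P t) := by
      have : ∀ S : Finset ι, S ⊆ N → ∃ r0 > 0, r0 ≤ r1 ∧ ∀ r ≤ r0, ∀ t ∈ S,
          volume (Metric.ball P r ∩ (F t).symm ⁻¹' Hex p) =
            radInt r * ENNReal.ofReal (dens p F P t) := by
        intro S
        induction S using Finset.induction_on with
        | empty => intro _; exact ⟨r1, hr1, le_rfl, by simp⟩
        | insert a S _ ih =>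
          intro hS
          obtain ⟨r2, hr2, hle, h2⟩ := ih ((Finset.subset_insert _ _).trans hS)
          obtain ⟨r3, hr3, h3⟩ := (hspec a (hS (Finset.mem_insert_self _ _))).2
          refine ⟨min r2 r3, lt_min hr2 hr3, (min_le_left _ _).trans hle, fun r hr t ht => ?_⟩
          rcases Finset.mem_insert.1 ht with rfl | ht
          · exact h3 r (hr.trans (min_le_right _ _))
          · exact h2 r (hr.trans (min_le_left _ _)) t ht
      obtain ⟨r, hr, hle, h⟩ := this N subset_rfl
      exact ⟨r, hr, hle, h r le_rfl⟩
    obtain ⟨r, hr, hle, hvol⟩ := this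
    have hball : volume (Metric.ball P r) = radInt r * ENNReal.ofReal (2 * Real.pi) := by
      rw [← volume_ball_eq, Complex.volume_ball, Complex.volume_ball]
    have hun : Metric.ball P r = ⋃ t ∈ N, Metric.ball P r ∩ (F t).symm ⁻¹' Hex p := by
      ext y
      simp only [Set.mem_iUnion, Set.mem_inter_iff, Set.mem_preimage]
      constructor
      · intro hy
        obtain ⟨t, ht⟩ := hT.cover y
        refine ⟨t, ?_, hy, ht⟩
        rw [hmem]
        by_contra h
        exact h1 t h y (Metric.ball_subset_ball hle hy) ht
      · rintro ⟨_, _, h, _⟩; exact h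
    rw [hun, measure_biUnion_finset₀] at hball
    · rw [Finset.sum_congr rfl hvol, ← Finset.mul_sum,
        ← ENNReal.ofReal_sum_of_nonneg (fun t ht => (hspec t ht).1)] at hball
      have := (ENNReal.mul_right_inj (radInt_pos hr) (radInt_ne_top r)).1 hball
      exact (ENNReal.ofReal_eq_ofReal_iff (Finset.sum_nonneg fun t ht => (hspec t ht).1)
        (by positivity)).1 this
    · intro s _ t _ h
      exact (hT.aedisjoint h).mono Set.inter_subset_right Set.inter_subset_right
    · intro t _
      exact (measurableSet_ball.inter (Hex_measurable t F)).nullMeasurableSet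

end HexTile

namespace HexTile

variable {p : Fin 6 → ℂ} {ι : Type*} {F : ι → ℂ ≃ᵃⁱ[ℝ] ℂ}

/-! ### Large regions in which all vertices are trivalent -/

lemma mem_closure_interior (hp : CCW p) {x : ℂ} (hx : x ∈ Hex p) : x ∈ closure (interior (Hex p)) := by
  rw [(Hex_convex p).closure_interior_eq_closure_of_nonempty_interior (interior_Hex_nonempty hp)]
  exact subset_closure hx

lemma Tiles.eq_of_interior (hT : Tiles p F) {s t : ι} {P : ℂ} (ht : (F t).symm P ∈ Hex p)
    (hs : (F s).symm P ∈ interior (Hex p)) : s = t := by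
  have hopen : IsOpen {x | (F s).symm (F t x) ∈ interior (Hex p)} :=
    isOpen_interior.preimage ((F s).symm.continuous.comp (F t).continuous)
  obtain ⟨x, h1, h2⟩ := mem_closure_iff.1 (mem_closure_interior hT.ccw ht) _ hopen (by simpa using hs)
  exact hT.disj s t (F t x) h1 (by simpa using h2)

lemma vertex_not_interior (hp : CCW p) (i : Fin 6) : p i ∉ interior (Hex p) := by
  rw [interior_Hex hp]
  intro h
  have := h i
  rw [ed_self] at this
  exact this.false

lemma Tiles.vertex_not_interior (hT : Tiles p F) (t : ι) (i : Fin 6) (s : ι) :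
    (F s).symm (F t (p i)) ∉ interior (Hex p) := by
  intro h
  have : s = t := hT.eq_of_interior (by simpa using vertex_mem p i) h
  subst this
  simp only [AffineIsometryEquiv.symm_apply_apply] at h
  exact HexTile.vertex_not_interior hT.ccw i h

/-- `P` is an ordinary vertex of the tiling: it is a corner of exactly three tiles, and no other
tile contains it in a side. -/
def Good (p : Fin 6 → ℂ) (F : ι → ℂ ≃ᵃⁱ[ℝ] ℂ) (P : ℂ) : Prop :=
  (∀ t, ¬ OnSide p F t P) ∧ ∃ C : Finset (ι × Fin 6), C.card = 3 ∧
    (∀ a, a ∈ C ↔ F a.1 (p a.2) = P) ∧ ∑ a ∈ C, ang p a.2 = 2 * Real.pi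

/-- The excess over `2π/3` of the angles meeting at a corner point vanishes at ordinary vertices
and is bounded above by `-π/3` at all others. -/
lemma Tiles.defect (hT : Tiles p F) {P : ℂ} (hP : ∃ t i, F t (p i) = P) :
    ∃ C : Finset (ι × Fin 6), (∀ a, a ∈ C ↔ F a.1 (p a.2) = P) ∧
      ∑ a ∈ C, (ang p a.2 - 2 * Real.pi / 3) ≤ 0 ∧
      (¬ Good p F P → ∑ a ∈ C, (ang p a.2 - 2 * Real.pi / 3) ≤ - (Real.pi / 3)) := by
  obtain ⟨t, i, rfl⟩ := hP
  obtain ⟨C, E, hC, hE, hsum⟩ := hT.angle_sum _ (hT.vertex_not_interior t i)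
  have hpi := Real.pi_pos
  have hlt : ∑ a ∈ C, ang p a.2 < C.card * Real.pi := by
    have : ∑ a ∈ C, ang p a.2 < ∑ a ∈ C, Real.pi :=
      Finset.sum_lt_sum_of_nonempty ⟨(t, i), (hC _).2 rfl⟩ fun a _ => (ang_mem hT.ccw a.2).2
    simpa using this
  have hpos : 0 < ∑ a ∈ C, ang p a.2 :=
    Finset.sum_pos (fun a _ => (ang_mem hT.ccw a.2).1) ⟨(t, i), (hC _).2 rfl⟩
  have hs : ∑ a ∈ C, (ang p a.2 - 2 * Real.pi / 3) = ∑ a ∈ C, ang p a.2 - C.card * (2 * Real.pi / 3) := by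
    rw [Finset.sum_sub_distrib]; simp
  have hE2 : (E.card : ℝ) < 2 := by
    by_contra h; push Not at h; nlinarith
  have hE2' : E.card < 2 := by exact_mod_cast hE2
  rcases (by omega : E.card = 0 ∨ E.card = 1) with h0 | h1
  · rw [h0] at hsum
    have h3 : (2 : ℝ) < C.card := by
      by_contra h; push Not at h; push_cast at hsum; nlinarith
    have h3' : 2 < C.card := by exact_mod_cast h3
    have hno : ∀ t, ¬ OnSide p F t _ := fun t ht => by
      have := (hE t).2 ht
      rw [Finset.card_eq_zero.1 h0] at this
      simp at this
    rcases (by omega : C.card = 3 ∨ 4 ≤ C.card) with h | h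
    · have e : ∑ a ∈ C, ang p a.2 = 2 * Real.pi := by push_cast at hsum; linarith
      refine ⟨C, hC, ?_, fun hg => absurd ⟨hno, C, h, hC, e⟩ hg⟩
      rw [hs, h, e]; push_cast; linarith
    · have h' : (4 : ℝ) ≤ C.card := by exact_mod_cast h
      push_cast at hsum
      have : ∑ a ∈ C, (ang p a.2 - 2 * Real.pi / 3) ≤ - (Real.pi / 3) := by
        rw [hs]; nlinarith
      exact ⟨C, hC, by linarith, fun _ => this⟩
  · rw [h1] at hsum
    have h3 : (1 : ℝ) < C.card := by
      by_contra h; push Not at h; push_cast at hsum; nlinarith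
    have h3' : 1 < C.card := by exact_mod_cast h3
    have h' : (2 : ℝ) ≤ C.card := by exact_mod_cast h3'
    push_cast at hsum
    have : ∑ a ∈ C, (ang p a.2 - 2 * Real.pi / 3) ≤ - (Real.pi / 3) := by
      rw [hs]; nlinarith
    exact ⟨C, hC, by linarith, fun _ => this⟩

lemma sum_defect (hp : CCW p) : ∑ i, (ang p i - 2 * Real.pi / 3) = 0 := by
  have := ang_sum hp
  simp only [Fin.sum_univ_succ, Fin.sum_univ_zero]
  simp only [Fin.succ_zero_eq_one, show Fin.succ (1 : Fin 5) = 2 from rfl,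
    show Fin.succ (Fin.succ (1 : Fin 4)) = 3 from rfl,
    show Fin.succ (Fin.succ (Fin.succ (1 : Fin 3))) = 4 from rfl,
    show Fin.succ (Fin.succ (Fin.succ (Fin.succ (1 : Fin 2)))) = 5 from rfl]
  simp
  linarith

/-- The tiles whose corner `0` is within distance `R` of the origin. -/
def Tiles.near (hT : Tiles p F) (R : ℝ) : Finset ι :=
  ((hT.finite_near 0 R).subset (t := {t | ‖F t (p 0)‖ ≤ R})
    (fun t ht => ⟨p 0, vertex_mem p 0, by simpa using ht⟩)).toFinset

lemma Tiles.mem_near (hT : Tiles p F) {R : ℝ} {t : ι} : t ∈ hT.near R ↔ ‖F t (p 0)‖ ≤ R := by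
  simp [Tiles.near]

lemma Tiles.norm_vertex (t : ι) (F : ι → ℂ ≃ᵃⁱ[ℝ] ℂ) (i j : Fin 6) :
    ‖F t (p i)‖ ≤ ‖F t (p j)‖ + hdiam p := by
  have h1 := dist_le_hdiam (vertex_mem p i) (vertex_mem p j)
  rw [← (F t).dist_map, dist_eq_norm] at h1
  linarith [norm_sub_norm_le (F t (p i)) (F t (p j))]

/-- If every tile has a bad corner point within distance `ρ`, the number of tiles in discs grows
geometrically. -/
lemma Tiles.growth_step (hT : Tiles p F) {ρ : ℝ} (hρ : hdiam p ≤ ρ)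
    (hbad : ∀ t, ∃ s i, dist (F s (p i)) (F t (p 0)) ≤ ρ ∧ ¬ Good p F (F s (p i))) :
    ∃ K > 0, ∀ s : ℝ, ((hT.near s).card : ℝ) ≤
      K * ((hT.near (s + (ρ + hdiam p))).card - (hT.near s).card) := by
  classical
  have hD := hdiam_pos hT.ccw
  have hpi := Real.pi_pos
  obtain ⟨K, hK⟩ : ∃ K : ℕ, Real.pi * (ρ + hdiam p) ^ 2 / area p ≤ K := exists_nat_ge _
  have hK' : Real.pi * (ρ + hdiam p) ^ 2 ≤ K * area p := by
    rwa [div_le_iff₀ (area_pos hT.ccw)] at hK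
  refine ⟨12 * (K + 1), by positivity, fun s => ?_⟩
  choose σ κ hσ hgood using hbad
  set R := s + ρ with hR
  set T := hT.near (R + hdiam p) with hTdef
  set A := (T ×ˢ (Finset.univ : Finset (Fin 6))).filter (fun a => ‖F a.1 (p a.2)‖ ≤ R) with hA
  have memA : ∀ a, a ∈ A ↔ ‖F a.1 (p a.2)‖ ≤ R := by
    intro a
    simp only [hA, Finset.mem_filter, Finset.mem_product, Finset.mem_univ, and_true,
      and_iff_right_iff_imp, hTdef, hT.mem_near]
    intro h
    linarith [Tiles.norm_vertex (p := p) a.1 F 0 a.2]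
  set V := A.image (fun a => F a.1 (p a.2)) with hV
  have memV : ∀ P ∈ V, ‖P‖ ≤ R ∧ ∃ t i, F t (p i) = P := by
    intro P hP
    obtain ⟨a, ha, rfl⟩ := Finset.mem_image.1 hP
    exact ⟨(memA a).1 ha, _, _, rfl⟩
  set B := V.filter (fun P => ¬ Good p F P) with hB
  -- the total excess, summed over vertices
  have up : ∑ a ∈ A, (ang p a.2 - 2 * Real.pi / 3) ≤ - (Real.pi / 3) * B.card := by
    rw [← Finset.sum_fiberwise_of_maps_to (t := V) (g := fun a => F a.1 (p a.2))
      (fun a ha => Finset.mem_image_of_mem _ ha)]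
    have h1 : ∀ P ∈ V, ∑ a ∈ A with F a.1 (p a.2) = P, (ang p a.2 - 2 * Real.pi / 3) ≤
        if Good p F P then 0 else - (Real.pi / 3) := by
      intro P hP
      obtain ⟨hPR, hex⟩ := memV P hP
      obtain ⟨C, hC, h0, hb⟩ := hT.defect hex
      have : A.filter (fun a => F a.1 (p a.2) = P) = C := by
        ext a
        simp only [Finset.mem_filter, hC, memA, and_iff_right_iff_imp]
        rintro rfl; exact hPR
      rw [this]
      split_ifs with hg
      · exact h0
      · exact hb hg
    refine (Finset.sum_le_sum h1).trans (le_of_eq ?_)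
    rw [Finset.sum_ite, Finset.sum_const_zero, zero_add, Finset.sum_const, nsmul_eq_mul]
    ring
  -- the total excess, summed over tiles
  have low : -(4 * Real.pi) * (T.card - (hT.near s).card) ≤
      ∑ a ∈ A, (ang p a.2 - 2 * Real.pi / 3) := by
    rw [hA, Finset.sum_filter, Finset.sum_product]
    have hsub : hT.near s ⊆ T := by
      intro t ht
      rw [hT.mem_near] at *
      linarith
    have h1 : ∀ t ∈ T, (if t ∈ hT.near s then 0 else -(4 * Real.pi)) ≤
        ∑ i, if ‖F t (p i)‖ ≤ R then ang p i - 2 * Real.pi / 3 else 0 := by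
      intro t _
      split_ifs with ht
      · rw [hT.mem_near] at ht
        rw [← sum_defect hT.ccw]
        apply le_of_eq
        apply Finset.sum_congr rfl
        intro i _
        rw [if_pos]
        linarith [Tiles.norm_vertex (p := p) t F i 0]
      · have : ∀ i ∈ (Finset.univ : Finset (Fin 6)), - (2 * Real.pi / 3) ≤
            if ‖F t (p i)‖ ≤ R then ang p i - 2 * Real.pi / 3 else 0 := by
          intro i _
          split_ifs
          · linarith [(ang_mem hT.ccw i).1]
          · linarith
        refine le_trans (le_of_eq ?_) (Finset.sum_le_sum this)
        simp; ring
    refine le_trans (le_of_eq ?_) (Finset.sum_le_sum h1)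
    rw [Finset.sum_ite, Finset.sum_const_zero, zero_add, Finset.sum_const, nsmul_eq_mul]
    have : (T.filter (fun t => t ∉ hT.near s)).card + (hT.near s).card = T.card := by
      rw [← Finset.sdiff_eq_filter, Finset.card_sdiff_add_card_eq_card hsub]
    rw [← this]; push_cast; ring
  have maps : ∀ t ∈ hT.near s, F (σ t) (p (κ t)) ∈ B := by
    intro t ht
    rw [hT.mem_near] at ht
    rw [hB, Finset.mem_filter]
    refine ⟨Finset.mem_image_of_mem (fun a : ι × Fin 6 => F a.1 (p a.2)) (a := (σ t, κ t))
      ((memA _).2 ?_), hgood t⟩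
    have := hσ t
    rw [dist_eq_norm] at this
    linarith [norm_sub_norm_le (F (σ t) (p (κ t))) (F t (p 0))]
  have fib : (hT.near s).card ≤ K * B.card := by
    apply Finset.card_le_mul_card_image_of_maps_to maps
    intro P _
    have := hT.card_le ((hT.near s).filter fun t => F (σ t) (p (κ t)) = P) P
      (R := ρ) (by linarith) (by
        intro t ht
        refine ⟨p 0, vertex_mem p 0, ?_⟩
        rw [← (Finset.mem_filter.1 ht).2, dist_comm]
        exact hσ t)
    have h2 := this.trans hK'
    exact_mod_cast le_of_mul_le_mul_right h2 (area_pos hT.ccw)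
  have fib' : ((hT.near s).card : ℝ) ≤ K * B.card := by exact_mod_cast fib
  have e : s + (ρ + hdiam p) = R + hdiam p := by rw [hR]; ring
  rw [e, ← hTdef]
  have hb : (B.card : ℝ) ≤ 12 * (T.card - (hT.near s).card) := by nlinarith
  have hT0 : (0 : ℝ) ≤ T.card - (hT.near s).card := by
    have : (0 : ℝ) ≤ B.card := by positivity
    linarith
  have : (K : ℝ) * B.card ≤ K * (12 * (T.card - (hT.near s).card)) := by gcongr
  nlinarith

/-- There are arbitrarily large discs in which all vertices are ordinary. -/
theorem Tiles.exists_good (hT : Tiles p F) (ρ : ℝ) :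
    ∃ t, ∀ s i, dist (F s (p i)) (F t (p 0)) ≤ ρ → Good p F (F s (p i)) := by
  by_contra hcon
  push Not at hcon
  have hD := hdiam_pos hT.ccw
  have hpi := Real.pi_pos
  have hA := area_pos hT.ccw
  set e := max ρ (hdiam p) + hdiam p with he
  have hm : hdiam p ≤ max ρ (hdiam p) := le_max_right _ _
  obtain ⟨K, hK, hstep⟩ := hT.growth_step (ρ := max ρ (hdiam p)) hm (fun t => by
    obtain ⟨s, i, h1, h2⟩ := hcon t
    exact ⟨s, i, h1.trans (le_max_left _ _), h2⟩)
  obtain ⟨t0, -⟩ := hT.cover 0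
  set s0 := ‖F t0 (p 0)‖ with hs0
  have hs0' : 0 ≤ s0 := norm_nonneg _
  have grow : ∀ n : ℕ, (1 + 1 / K) ^ n ≤ ((hT.near (s0 + n * e)).card : ℝ) := by
    intro n
    induction n with
    | zero =>
      have : 0 < (hT.near (s0 + (0 : ℕ) * e)).card := Finset.card_pos.2 ⟨t0, hT.mem_near.2 (by simp [hs0])⟩
      rw [pow_zero]
      exact_mod_cast this
    | succ n ih =>
      have h1 := hstep (s0 + n * e)
      rw [← he] at h1
      have e2 : s0 + ((n + 1 : ℕ) : ℝ) * e = s0 + n * e + e := by push_cast; ring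
      rw [e2, pow_succ]
      calc _ ≤ ((hT.near (s0 + n * e)).card : ℝ) * (1 + 1 / K) := by gcongr
        _ = (hT.near (s0 + n * e)).card + (hT.near (s0 + n * e)).card / K := by ring
        _ ≤ _ := by
          have : ((hT.near (s0 + n * e)).card : ℝ) / K ≤
            (hT.near (s0 + n * e + e)).card - (hT.near (s0 + n * e)).card := by
            rw [div_le_iff₀ hK]; linarith
          linarith
  have bound : ∀ n : ℕ, 1 ≤ n → ((hT.near (s0 + n * e)).card : ℝ) ≤
      Real.pi * (s0 + e + hdiam p) ^ 2 / area p * (n : ℝ) ^ 2 := by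
    intro n hn
    have hn' : (1 : ℝ) ≤ n := by exact_mod_cast hn
    have he0 : 0 ≤ e := by rw [he]; linarith
    have := hT.card_le (hT.near (s0 + n * e)) 0 (R := s0 + n * e) (by positivity) (fun t ht =>
      ⟨p 0, vertex_mem p 0, by simpa using hT.mem_near.1 ht⟩)
    rw [div_mul_eq_mul_div, le_div_iff₀ hA]
    refine this.trans ?_
    rw [mul_assoc, ← mul_pow]
    gcongr
    nlinarith
  have lim := tendsto_pow_const_div_const_pow_of_one_lt 2 (r := 1 + 1 / K)
    (by have : 0 < 1 / K := by positivity
        linarith)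
  set c := Real.pi * (s0 + e + hdiam p) ^ 2 / area p with hc
  have hc0 : 0 < c := by
    have : 0 < s0 + e + hdiam p := by rw [he]; linarith
    positivity
  have h1 := (lim.eventually (gt_mem_nhds (show (0 : ℝ) < 1 / c by positivity))).and
    (Filter.eventually_ge_atTop 1)
  obtain ⟨n, hn, hn1⟩ := h1.exists
  have h2 := (grow n).trans (bound n hn1)
  have hp : 0 < (1 + 1 / K) ^ n := by positivity
  rw [div_lt_div_iff₀ hp hc0] at hn
  linarith

end HexTile

namespace HexTile

variable {p : Fin 6 → ℂ} {ι : Type*} {F : ι → ℂ ≃ᵃⁱ[ℝ] ℂ}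

/-! ### Matching of sides near ordinary vertices -/

lemma side_interior (hp : CCW p) (i : Fin 6) {s : ℝ} (h0 : 0 < s) (h1 : s < 1) :
    ed p i ((1 - s) • p i + s • p (i + 1)) = 0 ∧
      ∀ k, k ≠ i → 0 < ed p k ((1 - s) • p i + s • p (i + 1)) := by
  constructor
  · rw [ed_comb _ _ _ _ _ _ (by ring), ed_self, ed_succ]; ring
  · intro k hk
    rw [ed_comb _ _ _ _ _ _ (by ring)]
    have a1 := hp.nonneg k i
    have a2 := hp.nonneg k (i + 1)
    by_cases h : i = k + 1
    · have := hp k (i + 1) (by rw [h]; exact (by decide : ∀ k : Fin 6, k + 1 + 1 ≠ k) k)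
        (by rw [h]; exact (by decide : ∀ k : Fin 6, k + 1 + 1 ≠ k + 1) k)
      have h3 : 0 ≤ (1 - s) * ed p k (p i) := mul_nonneg (by linarith) a1
      have h4 : 0 < s * ed p k (p (i + 1)) := mul_pos h0 this
      linarith
    · have := hp k i hk.symm h
      have h3 : 0 ≤ s * ed p k (p (i + 1)) := mul_nonneg h0.le a2
      have h4 : 0 < (1 - s) * ed p k (p i) := mul_pos (by linarith) this
      linarith

lemma comb_mem_Hex (i j : Fin 6) {s : ℝ} (h0 : 0 ≤ s) (h1 : s ≤ 1) :
    (1 - s) • p i + s • p j ∈ Hex p :=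
  (Hex_convex p) (vertex_mem p i) (vertex_mem p j) (by linarith) h0 (by ring)

lemma eventually_interior (hp : CCW p) {x v : ℂ} {i : Fin 6} (hi : ed p i x = 0)
    (hk : ∀ k, k ≠ i → 0 < ed p k x) (hv : 0 < cr (p (i + 1) - p i) v) :
    ∀ᶠ ε : ℝ in nhdsWithin 0 (Set.Ioi 0), x + ε • v ∈ interior (Hex p) := by
  rw [interior_Hex hp]
  have h1 : ∀ᶠ ε : ℝ in nhds 0, ∀ k, k ≠ i → 0 < ed p k (x + ε • v) := by
    rw [Filter.eventually_all]
    intro k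
    by_cases hki : k = i
    · simp [hki]
    · have hc : Continuous fun ε : ℝ => ed p k (x + ε • v) :=
        (ed_continuous p k).comp (by fun_prop)
      have := hc.continuousAt.eventually (lt_mem_nhds (a := 0) (b := ed p k (x + (0 : ℝ) • v))
        (by simpa using hk k hki))
      filter_upwards [this] with ε hε _ using hε
  filter_upwards [h1.filter_mono nhdsWithin_le_nhds, self_mem_nhdsWithin] with ε h2 h3 k
  by_cases hki : k = i
  · rw [hki, ed_sub, hi, zero_add]
    have : cr (p (i + 1) - p i) (ε • v) = ε * cr (p (i + 1) - p i) v := by simp [cr]; ring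
    rw [this]
    exact mul_pos h3 hv
  · exact h2 k hki

/-- If no corner point near tile `t` lies inside a side of a tile, then every side of `t` is
also a side of another tile. -/
lemma Tiles.edge (hT : Tiles p F) (t : ι) (i : Fin 6)
    (hnc : ∀ s j s', dist (F s (p j)) (F t (p i)) ≤ hdiam p → ¬ OnSide p F s' (F s (p j))) :
    ∃ t', t ≠ t' ∧ ∃ j, (F t' (p j) = F t (p i) ∧ F t' (p (j + 1)) = F t (p (i + 1))) ∨
      (F t' (p j) = F t (p (i + 1)) ∧ F t' (p (j + 1)) = F t (p i)) := by
  have hp := hT.ccw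
  set m : ℂ := (1 - (1 / 2 : ℝ)) • p i + (1 / 2 : ℝ) • p (i + 1) with hm
  obtain ⟨m1, m2⟩ := side_interior hp i (s := 1 / 2) (by norm_num) (by norm_num)
  rw [← hm] at m1 m2
  have hmH : m ∈ Hex p := comb_mem_Hex _ _ (by norm_num) (by norm_num)
  -- a second tile through the midpoint
  obtain ⟨t', htt, hY⟩ : ∃ t', t ≠ t' ∧ (F t').symm (F t m) ∈ Hex p := by
    by_contra hcon
    push Not at hcon
    obtain ⟨r, hr, hrad⟩ := hT.exists_radius (F t m)
    have : m ∈ interior (Hex p) := by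
      rw [mem_interior_iff_mem_nhds, Metric.mem_nhds_iff]
      refine ⟨r, hr, fun y hy => ?_⟩
      obtain ⟨s, hs⟩ := hT.cover (F t y)
      by_cases hst : t = s
      · subst hst; simpa using hs
      · exact absurd hs (hrad s (hcon s hst) _ (by
          rw [Metric.mem_ball, (F t).dist_map]; exact hy))
    rw [interior_Hex hp] at this
    exact (this i).ne' m1
  refine ⟨t', htt, ?_⟩
  set φ := (F t).trans (F t').symm with hφ
  have φa : ∀ x, φ x = (F t').symm (F t x) := fun x => rfl
  have φF : ∀ x, F t' (φ x) = F t x := fun x => by rw [φa]; simp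
  rw [← φa] at hY
  have hdist : ∀ s : ℝ, 0 ≤ s → s ≤ 1 →
      dist (F t ((1 - s) • p i + s • p (i + 1))) (F t (p i)) ≤ hdiam p := fun s h0 h1 => by
    rw [(F t).dist_map]
    exact dist_le_hdiam (comb_mem_Hex _ _ h0 h1) (vertex_mem p i)
  have noT : ∀ (s : ℝ) (k : Fin 6), 0 < s → s < 1 → F t ((1 - s) • p i + s • p (i + 1)) ≠ F t' (p k) := by
    intro s k h0 h1 h
    refine hnc t' k t (by rw [← h]; exact hdist s h0.le h1.le) ⟨i, ?_⟩
    rw [← h, AffineIsometryEquiv.symm_apply_apply]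
    exact side_interior hp i h0 h1
  obtain ⟨j, y1, y2⟩ : ∃ j, ed p j (φ m) = 0 ∧ ∀ k, k ≠ j → 0 < ed p k (φ m) := by
    rcases trichotomy hp hY with h | h | ⟨k, h⟩
    · exact absurd (hT.eq_of_interior (t := t) (P := F t m) (by simpa using hmH) h).symm htt
    · exact h
    · exact absurd (by rw [← h, φF]) (noT (1 / 2) k (by norm_num) (by norm_num))
  refine ⟨j, ?_⟩
  -- the two sides lie on a common line
  set L := φ.linearIsometryEquiv with hL
  have φadd : ∀ v, φ (m + v) = φ m + L v := by
    intro v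
    have := φ.map_vadd m v
    simp only [vadd_eq_add] at this
    rw [add_comm, this, add_comm]
  have nopos : ∀ v, 0 < cr (p (i + 1) - p i) v → ¬ 0 < cr (p (j + 1) - p j) (L v) := by
    intro v hv1 hv2
    obtain ⟨ε, h1, h2⟩ :=
      ((eventually_interior hp m1 m2 hv1).and (eventually_interior hp y1 y2 hv2)).exists
    refine htt (hT.disj t t' (F t (m + ε • v)) (by simpa using h1) ?_)
    rw [← φa, φadd, map_smul]; exact h2
  have crl : ∀ a u v : ℂ, ∀ c : ℝ, cr a (u + c • v) = cr a u + c * cr a v := by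
    intro a u v c; simp [cr]; ring
  have line : ∀ v, cr (p (i + 1) - p i) v = 0 → cr (p (j + 1) - p j) (L v) = 0 := by
    intro v hv
    by_contra hne
    have hu : 0 < cr (p (i + 1) - p i) (p (i - 1) - p i) := hp.cr_corner i
    set w := p (i - 1) - p i with hw
    obtain ⟨c, hc⟩ : ∃ c : ℝ, 0 < cr (p (j + 1) - p j) (L w) + c * cr (p (j + 1) - p j) (L v) :=
      ⟨(1 - cr (p (j + 1) - p j) (L w)) / cr (p (j + 1) - p j) (L v), by field_simp; linarith⟩
    apply nopos (w + c • v)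
    · rw [crl, hv]; linarith
    · rw [map_add, map_smul, crl]; exact hc
  have onl : ∀ x, cr (p (i + 1) - p i) (x - m) = 0 → ed p j (φ x) = 0 := by
    intro x hx
    have := φadd (x - m)
    rw [add_sub_cancel] at this
    rw [this, ed_sub, y1, line _ hx, zero_add]
  have s0 : cr (p (i + 1) - p i) (p i - m) = 0 := by
    rw [hm]; simp [cr]; ring
  have s1 : cr (p (i + 1) - p i) (p (i + 1) - m) = 0 := by
    rw [hm]; simp [cr]; ring
  obtain ⟨a, ha⟩ := exists_of_cr_eq_zero (hp.ne j) (onl _ s0)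
  obtain ⟨b, hb⟩ := exists_of_cr_eq_zero (hp.ne j) (onl _ s1)
  have hc : φ m = (1 - (a + b) / 2) • p j + ((a + b) / 2) • p (j + 1) := by
    rw [hm, aff_comb, ha, hb]; module
  have c0 : 0 < (a + b) / 2 := by
    have h1 := y2 (j - 1) ((by decide : ∀ j : Fin 6, j - 1 ≠ j) j)
    have h2 := ed_succ p (j - 1)
    rw [sub_add_cancel] at h2
    rw [hc, ed_comb _ _ _ _ _ _ (by ring), h2, mul_zero, zero_add] at h1
    exact pos_of_mul_pos_left h1 (hp.nonneg _ _)
  have c1 : (a + b) / 2 < 1 := by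
    have h1 := y2 (j + 1) ((by decide : ∀ j : Fin 6, j + 1 ≠ j) j)
    rw [hc, ed_comb _ _ _ _ _ _ (by ring), ed_self, mul_zero, add_zero] at h1
    have := pos_of_mul_pos_left h1 (hp.nonneg _ _)
    linarith
  have na : ¬ (0 < a ∧ a < 1) := by
    rintro ⟨h0, h1⟩
    refine hnc t i t' (by simpa using (hdiam_pos hp).le) ⟨j, ?_⟩
    rw [← φa, ha]; exact side_interior hp j h0 h1
  have nb : ¬ (0 < b ∧ b < 1) := by
    rintro ⟨h0, h1⟩
    refine hnc t (i + 1) t' (by simpa using hdist 1 (by norm_num) le_rfl) ⟨j, ?_⟩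
    rw [← φa, hb]; exact side_interior hp j h0 h1
  have hab : b - a ≠ 0 := by
    intro h
    have : φ (p i) = φ (p (i + 1)) := by rw [ha, hb, show b = a by linarith]
    exact hp.ne i (φ.injective this).symm
  have nz : ∀ (c : ℝ) (k : Fin 6), p k = (1 - c) • p j + c • p (j + 1) →
      ¬ (0 < (c - a) / (b - a) ∧ (c - a) / (b - a) < 1) := by
    rintro c k hk ⟨h0, h1⟩
    apply noT _ k h0 h1
    rw [← φF, aff_comb, ha, hb, hk]
    congr 1
    have e : c = (1 - (c - a) / (b - a)) * a + (c - a) / (b - a) * b := by field_simp; ring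
    generalize (c - a) / (b - a) = s at e
    rw [e]; module
  have n0 := nz 0 j (by simp)
  have n1 := nz 1 (j + 1) (by simp)
  have fin : (a = 0 ∧ b = 1) ∨ (a = 1 ∧ b = 0) := by
    rcases lt_or_gt_of_ne hab with h | h
    · right
      rw [lt_div_iff_of_neg h, div_lt_one_of_neg h, zero_mul] at n0 n1
      grind
    · left
      rw [div_pos_iff_of_pos_right h, div_lt_one h] at n0 n1
      grind
  rcases fin with ⟨rfl, rfl⟩ | ⟨rfl, rfl⟩
  · left
    simp only [sub_zero, one_smul, zero_smul, add_zero, sub_self, zero_add] at ha hb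
    rw [← ha, ← hb, φF, φF]; exact ⟨rfl, rfl⟩
  · right
    simp only [sub_zero, one_smul, zero_smul, add_zero, sub_self, zero_add] at ha hb
    rw [← ha, ← hb, φF, φF]; exact ⟨rfl, rfl⟩

end HexTile

namespace HexTile

variable {p : Fin 6 → ℂ} {ι : Type*} {F : ι → ℂ ≃ᵃⁱ[ℝ] ℂ}

/-! ### The gluing relation on flags -/

/-- A flag of the hexagon is a corner `i` together with one of the two sides at it: side `i` for
`true` and side `i - 1` for `false`. -/
abbrev Flag := Fin 6 × Bool

/-- The far end of the side of a flag. -/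
def nb (f : Flag) : Fin 6 := if f.2 then f.1 + 1 else f.1 - 1

/-- The flag at the other end of the same side. -/
def other (f : Flag) : Flag := (nb f, !f.2)

/-- The flag at the same corner with the other side. -/
def swap (f : Flag) : Flag := (f.1, !f.2)

/-- The side of a flag. -/
def sd (f : Flag) : Fin 6 := if f.2 then f.1 else f.1 - 1

lemma nb_other (f : Flag) : nb (other f) = f.1 := by revert f; decide

lemma swap_swap (f : Flag) : swap (swap f) = f := by revert f; decide

lemma nb_swap_ne (f : Flag) : nb (swap f) ≠ nb f := by revert f; decide

lemma flag_cases (f g : Flag) (h : f.1 = g.1) : f = g ∨ f = swap g := by revert f g; decide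

lemma len_sd (p : Fin 6 → ℂ) (f : Flag) : len p (sd f) = dist (p f.1) (p (nb f)) := by
  obtain ⟨i, b⟩ := f
  cases b
  · simp only [len, sd, nb, dist_eq_norm]; simp
  · simp only [len, sd, nb, dist_eq_norm]; simp [norm_sub_rev]

/-- Flag `f` of tile `t` coincides with flag `g` of the different tile `t'`. -/
def Glue (p : Fin 6 → ℂ) (F : ι → ℂ ≃ᵃⁱ[ℝ] ℂ) (t : ι) (f : Flag) (t' : ι) (g : Flag) : Prop :=
  t ≠ t' ∧ F t (p f.1) = F t' (p g.1) ∧ F t (p (nb f)) = F t' (p (nb g))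

lemma Glue.symm {t t' : ι} {f g : Flag} (h : Glue p F t f t' g) : Glue p F t' g t f :=
  ⟨h.1.symm, h.2.1.symm, h.2.2.symm⟩

lemma Glue.other {t t' : ι} {f g : Flag} (h : Glue p F t f t' g) :
    Glue p F t (other f) t' (other g) :=
  ⟨h.1, h.2.2, by rw [nb_other, nb_other]; exact h.2.1⟩

/-- Two tiles cannot share both sides at a corner, because they would overlap. -/
lemma Tiles.not_both (hT : Tiles p F) {t t' : ι} {f g : Flag} (h1 : Glue p F t f t' g)
    (h2 : F t (p (nb (swap f))) = F t' (p (nb (swap g)))) : False := by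
  have hp := hT.ccw
  set c : Flag → ℂ := fun f => (1 - (1 / 2 : ℝ)) • p f.1 + (1 / 2 : ℝ) •
    ((1 - (1 / 2 : ℝ)) • p (nb f) + (1 / 2 : ℝ) • p (nb (swap f))) with hc
  have hin : ∀ f, c f ∈ interior (Hex p) := by
    intro f
    rw [interior_Hex hp]
    intro k
    simp only [hc]
    rw [ed_comb _ _ _ _ _ _ (by ring), ed_comb _ _ _ _ _ _ (by ring)]
    have a1 := hp.nonneg k f.1
    have a2 := hp.nonneg k (nb f)
    have a3 := hp.nonneg k (nb (swap f))
    rcases (by decide : ∀ (f : Flag) (k : Fin 6), (f.1 ≠ k ∧ f.1 ≠ k + 1) ∨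
      (nb f ≠ k ∧ nb f ≠ k + 1) ∨ (nb (swap f) ≠ k ∧ nb (swap f) ≠ k + 1)) f k with h | h | h
    · have := hp k _ h.1 h.2; linarith
    · have := hp k _ h.1 h.2; linarith
    · have := hp k _ h.1 h.2; linarith
  have e : F t (c f) = F t' (c g) := by
    simp only [hc]
    rw [aff_comb, aff_comb, aff_comb, aff_comb, h1.2.1, h1.2.2, h2]
  exact h1.1 (hT.disj t t' (F t (c f)) (by simpa using hin f) (by rw [e]; simpa using hin g))

lemma Tiles.exists_glue (hT : Tiles p F) (t : ι) (f : Flag)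
    (hnc : ∀ s j s', dist (F s (p j)) (F t (p f.1)) ≤ 2 * hdiam p → ¬ OnSide p F s' (F s (p j))) :
    ∃ t' g, Glue p F t f t' g := by
  have hdd : dist (F t (p (sd f))) (F t (p f.1)) ≤ hdiam p := by
    rw [(F t).dist_map]; exact dist_le_hdiam (vertex_mem p _) (vertex_mem p _)
  obtain ⟨t', htt, j, h⟩ := hT.edge t (sd f) (fun s j s' h => hnc s j s' (by
    linarith [dist_triangle (F s (p j)) (F t (p (sd f))) (F t (p f.1))]))
  obtain ⟨i, b⟩ := f
  cases b
  · simp only [sd, Bool.false_eq_true, if_false, sub_add_cancel] at h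
    rcases h with ⟨h1, h2⟩ | ⟨h1, h2⟩
    · refine ⟨t', (j + 1, false), htt, h2.symm, ?_⟩
      simp only [nb, Bool.false_eq_true, if_false, add_sub_cancel_right]; exact h1.symm
    · refine ⟨t', (j, true), htt, h1.symm, ?_⟩
      simp only [nb, Bool.false_eq_true, if_false, if_true]; exact h2.symm
  · simp only [sd, if_true] at h
    rcases h with ⟨h1, h2⟩ | ⟨h1, h2⟩
    · refine ⟨t', (j, true), htt, h1.symm, ?_⟩
      simp only [nb, if_true]; exact h2.symm
    · refine ⟨t', (j + 1, false), htt, h2.symm, ?_⟩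
      simp only [nb, Bool.false_eq_true, if_false, if_true, add_sub_cancel_right]; exact h1.symm

/-- At an ordinary vertex two glued tiles have a common third neighbour. -/
lemma Tiles.third (hT : Tiles p F) {t t' : ι} {f g : Flag} (h : Glue p F t f t' g)
    (hg : Good p F (F t (p f.1)))
    (hnc : ∀ s j s', dist (F s (p j)) (F t (p f.1)) ≤ 2 * hdiam p → ¬ OnSide p F s' (F s (p j))) :
    ∃ t'' k, Glue p F t' (swap g) t'' k ∧ Glue p F t'' (swap k) t (swap f) ∧
      ang p f.1 + ang p g.1 + ang p k.1 = 2 * Real.pi := by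
  classical
  have hp := hT.ccw
  have inj : ∀ s i j, F s (p i) = F s (p j) → i = j := fun s i j h => hp.injective ((F s).injective h)
  obtain ⟨-, C, hC3, hC, hsum⟩ := hg
  have m1 : (t, f.1) ∈ C := (hC _).2 rfl
  have m2 : (t', g.1) ∈ C := (hC _).2 h.2.1.symm
  have n12 : (t, f.1) ≠ (t', g.1) := fun e => h.1 (Prod.ext_iff.1 e).1
  obtain ⟨⟨s, k⟩, hCe⟩ : ∃ a, (C.erase (t, f.1)).erase (t', g.1) = {a} := by
    rw [← Finset.card_eq_one, Finset.card_erase_of_mem, Finset.card_erase_of_mem m1, hC3]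
    exact Finset.mem_erase.2 ⟨n12.symm, m2⟩
  have hsk : (s, k) ∈ (C.erase (t, f.1)).erase (t', g.1) := by rw [hCe]; simp
  have only : ∀ a, a ∈ C → a = (t, f.1) ∨ a = (t', g.1) ∨ a = (s, k) := by
    intro a ha
    by_contra hcon
    push Not at hcon
    have : a ∈ (C.erase (t, f.1)).erase (t', g.1) :=
      Finset.mem_erase.2 ⟨hcon.2.1, Finset.mem_erase.2 ⟨hcon.1, ha⟩⟩
    rw [hCe] at this
    exact hcon.2.2 (Finset.mem_singleton.1 this)
  have ang3 : ang p f.1 + ang p g.1 + ang p k = 2 * Real.pi := by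
    rw [← hsum, ← Finset.add_sum_erase _ _ m1,
      ← Finset.add_sum_erase _ _ (Finset.mem_erase.2 ⟨n12.symm, m2⟩), hCe]
    simp; ring
  -- the tile across the other side of `t'`
  obtain ⟨u, x, hx⟩ := hT.exists_glue t' (swap g) (by
    have : (swap g).1 = g.1 := rfl
    rw [this, ← h.2.1]; exact hnc)
  obtain ⟨v, y, hy⟩ := hT.exists_glue t (swap f) hnc
  have hxC : (u, x.1) ∈ C := (hC _).2 (hx.2.1.symm.trans h.2.1.symm)
  have hyC : (v, y.1) ∈ C := (hC _).2 hy.2.1.symm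
  have xt : u ≠ t := by
    rintro rfl
    have e1 : x.1 = f.1 := inj u _ _ (hx.2.1.symm.trans h.2.1.symm)
    rcases flag_cases x f e1 with rfl | rfl
    · exact nb_swap_ne g (inj t' _ _ (hx.2.2.trans h.2.2))
    · exact hT.not_both h hx.2.2.symm
  have yt : v ≠ t' := by
    rintro rfl
    have e1 : y.1 = g.1 := inj v _ _ (hy.2.1.symm.trans h.2.1)
    rcases flag_cases y g e1 with rfl | rfl
    · exact nb_swap_ne f (inj t _ _ (hy.2.2.trans h.2.2.symm))
    · exact hT.not_both h hy.2.2
  have xs : (u, x.1) = (s, k) := by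
    rcases only _ hxC with e | e | e
    · exact absurd (Prod.ext_iff.1 e).1 xt
    · exact absurd (Prod.ext_iff.1 e).1.symm hx.1
    · exact e
  have ys : (v, y.1) = (s, k) := by
    rcases only _ hyC with e | e | e
    · exact absurd (Prod.ext_iff.1 e).1.symm hy.1
    · exact absurd (Prod.ext_iff.1 e).1 yt
    · exact e
  obtain ⟨rfl, rfl⟩ := Prod.ext_iff.1 xs
  obtain ⟨hv, hyx⟩ := Prod.ext_iff.1 ys
  dsimp only at hv hyx
  subst hv
  refine ⟨v, x, hx, ?_, ang3⟩
  rcases flag_cases y x hyx with rfl | rfl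
  · exact (hT.not_both h (hy.2.2.trans hx.2.2.symm)).elim
  · exact hy.symm

/-- The properties of the gluing relation used in the combinatorial analysis. -/
structure FlagRel (p : Fin 6 → ℂ) (G : Flag → Flag → Prop) : Prop where
  symm : ∀ f g, G f g → G g f
  len : ∀ f g, G f g → len p (sd f) = len p (sd g)
  other : ∀ f g, G f g → G (other f) (other g)
  third : ∀ f g, G f g → ∃ h, G (swap g) h ∧ G (swap h) (swap f) ∧
    ang p f.1 + ang p g.1 + ang p h.1 = 2 * Real.pi
  total : ∀ f, ∃ g, G f g

lemma exists_stable {α : Type*} [Fintype α] (S : ℕ → Set α) (hS : ∀ n, S n ⊆ S (n + 1)) :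
    ∃ n, n ≤ Fintype.card α ∧ S n = S (n + 1) := by
  by_contra hcon
  push Not at hcon
  have : ∀ n, n ≤ Fintype.card α + 1 → n ≤ (S n).ncard := by
    intro n
    induction n with
    | zero => intro _; exact Nat.zero_le _
    | succ n ih =>
      intro h
      have h1 := ih (by omega)
      have h2 : (S n).ncard < (S (n + 1)).ncard :=
        Set.ncard_lt_ncard ((hS n).ssubset_of_ne (hcon n (by omega))) (Set.toFinite _)
      omega
  have h1 := this _ le_rfl
  have h2 : (S (Fintype.card α + 1)).ncard ≤ Fintype.card α := by
    rw [← Nat.card_eq_fintype_card, ← Set.ncard_univ]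
    exact Set.ncard_le_ncard (Set.subset_univ _) (Set.toFinite _)
  omega

/-- A tiling by the hexagon yields a relation as in `FlagRel`: glue flags within a suitable radius
inside a large disc all of whose vertices are ordinary. -/
theorem Tiles.exists_rel (hT : Tiles p F) : ∃ G, FlagRel p G := by
  have hD := hdiam_pos hT.ccw
  obtain ⟨t0, ht0⟩ := hT.exists_good (200 * hdiam p)
  set x := F t0 (p 0) with hx
  set S : ℕ → Set (Flag × Flag) := fun n => {a | ∃ t t', Glue p F t a.1 t' a.2 ∧
    dist (F t (p a.1.1)) x ≤ (n + 1) * hdiam p} with hS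
  have mono : ∀ n, S n ⊆ S (n + 1) := by
    rintro n a ⟨t, t', h1, h2⟩
    exact ⟨t, t', h1, h2.trans (by push_cast; nlinarith)⟩
  obtain ⟨n, hn, hst⟩ := exists_stable S mono
  have hn' : n ≤ 144 := hn.trans (by simp [Fintype.card_prod])
  clear hn
  have hn'' : (n : ℝ) ≤ 144 := by exact_mod_cast hn'
  have nc : ∀ t i, dist (F t (p i)) x ≤ (n + 1) * hdiam p → ∀ s j s',
      dist (F s (p j)) (F t (p i)) ≤ 2 * hdiam p → ¬ OnSide p F s' (F s (p j)) := by
    intro t i h s j s' h2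
    apply (ht0 s j _).1
    have := dist_triangle (F s (p j)) (F t (p i)) x
    nlinarith
  refine ⟨fun f g => (f, g) ∈ S n, ?_, ?_, ?_, ?_, ?_⟩
  · rintro f g ⟨t, t', h1, h2⟩
    refine ⟨t', t, h1.symm, ?_⟩
    rw [← h1.2.1]; exact h2
  · rintro f g ⟨t, t', h1, h2⟩
    have := h1.2
    dsimp only at this
    rw [len_sd, len_sd, ← (F t).dist_map, this.1, this.2, (F t').dist_map]
  · rintro f g ⟨t, t', h1, h2⟩
    rw [hst]
    refine ⟨t, t', h1.other, ?_⟩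
    have h3 : dist (F t (p (HexTile.other f).1)) (F t (p f.1)) ≤ hdiam p := by
      rw [(F t).dist_map]; exact dist_le_hdiam (vertex_mem p _) (vertex_mem p _)
    have := dist_triangle (F t (p (HexTile.other f).1)) (F t (p f.1)) x
    dsimp only at h2
    push_cast; linarith
  · rintro f g ⟨t, t', h1, h2⟩
    dsimp only at h1 h2
    obtain ⟨t'', k, e1, e2, e3⟩ := hT.third h1 (ht0 t f.1 (by nlinarith)) (nc t f.1 h2)
    refine ⟨k, ⟨t', t'', e1, ?_⟩, ⟨t'', t, e2, ?_⟩, e3⟩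
    · have : F t' (p (swap g).1) = F t (p f.1) := h1.2.1.symm
      dsimp only; rw [this]; exact h2
    · have : F t'' (p (swap k).1) = F t (p f.1) := e2.2.1
      dsimp only; rw [this]; exact h2
  · intro f
    have h2 : dist (F t0 (p f.1)) x ≤ (n + 1) * hdiam p := by
      rw [hx, (F t0).dist_map]
      have := dist_le_hdiam (vertex_mem p f.1) (vertex_mem p 0)
      nlinarith [(Nat.cast_nonneg n : (0 : ℝ) ≤ n)]
    obtain ⟨t', g, h⟩ := hT.exists_glue t0 f (nc t0 f.1 h2)
    exact ⟨g, t0, t', h, h2⟩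

end HexTile

namespace HexTile

/-! ### A terminating search over gluing patterns

The search is written with recursors, primitive operations on numbers and continuations, so that
the kernel evaluates it efficiently. The flag `(i, b)` is numbered `2 i` or `2 i + 1`; a set of pairs
of flags is a number whose bit `12 f + g` stands for the pair `(f, g)`. -/

/-- An integer vector with one coordinate for each corner of the hexagon. -/
structure Vec6 where
  (x0 x1 x2 x3 x4 x5 : Int)

/-- `k n`, arranged so that the kernel evaluates `n` to a literal before it enters `k`. -/
def fN (n : Nat) (k : Nat → Bool) : Bool := Nat.rec (k 0) (fun m _ => k (Nat.succ m)) n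

/-- `k x`, with `x` evaluated first, as in `fN`. -/
def fI (x : Int) (k : Int → Bool) : Bool :=
  Int.rec (fun n => fN n fun n => k (Int.ofNat n)) (fun n => fN n fun n => k (Int.negSucc n)) x

/-- Whether an integer is zero. -/
def isZ (x : Int) : Bool := Int.rec (fun n => Nat.beq n 0) (fun _ => false) x

/-- Coordinates of a vector; indices beyond `5` give the last one. -/
def Vec6.get (v : Vec6) : Nat → Int
  | 0 => v.x0 | 1 => v.x1 | 2 => v.x2 | 3 => v.x3 | 4 => v.x4 | _ => v.x5

/-- The linear form `x_i + x_j + x_k`. -/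
def dot (i j k : Nat) (v : Vec6) : Int := Int.add (Int.add (v.get i) (v.get j)) (v.get k)

/-- The integer `a x - b y`. -/
def lc1 (a x b y : Int) : Int := Int.add (Int.mul a x) (Int.neg (Int.mul b y))

/-- Passes the vector `a v - b w` to `K`. -/
def lcK (a : Int) (v : Vec6) (b : Int) (w : Vec6) (K : Vec6 → Bool) : Bool :=
  fI (lc1 a v.x0 b w.x0) fun y0 => fI (lc1 a v.x1 b w.x1) fun y1 =>
  fI (lc1 a v.x2 b w.x2) fun y2 => fI (lc1 a v.x3 b w.x3) fun y3 =>
  fI (lc1 a v.x4 b w.x4) fun y4 => fI (lc1 a v.x5 b w.x5) fun y5 =>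
  K ⟨y0, y1, y2, y3, y4, y5⟩

/-- Modifies the vectors in `l` by multiples of the pivot `x`, on which `dot i j k` takes the value
`a ≠ 0`, so that `dot i j k` vanishes on them. -/
def elimRest (i j k : Nat) (a : Int) (x : Vec6) (l : List Vec6) : (List Vec6 → Bool) → Bool :=
  List.rec (fun K => K []) (fun y _ ih K => fI (dot i j k y) fun b =>
    cond (isZ b) (ih fun l => K (y :: l))
    (lcK a y b x fun y' => ih fun l => K (y' :: l))) l

/-- Passes to `K` a list spanning the part of the span of `l` on which `dot i j k` vanishes, together
with a Boolean telling whether this part is smaller than the whole span. -/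
def elimK (i j k : Nat) (l : List Vec6) : (Bool → List Vec6 → Bool) → Bool :=
  List.rec (fun K => K false []) (fun x xs ih K => fI (dot i j k x) fun a =>
    cond (isZ a) (ih fun c l => K c (x :: l)) (elimRest i j k a x xs (K true))) l

/-- A linear condition on a vector: `sum i j k` stands for `x_i + x_j + x_k = 0` and `eq i j` for
`x_i = x_j`. -/
inductive Form where
  | sum (i j k : Nat)
  | eq (i j : Nat)

/-- Whether an integer vector satisfies the condition. -/
def Form.van (φ : Form) (v : Vec6) : Bool :=
  Form.rec (fun i j k => isZ (dot i j k v)) (fun i j => isZ (Int.add (v.get i) (Int.neg (v.get j)))) φ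

/-- Whether all members of the list satisfy `P`. -/
def allB {α : Type} (P : α → Bool) (l : List α) : Bool :=
  List.rec true (fun x _ ih => cond (P x) ih false) l

/-- Whether some member of the list satisfies `P`. -/
def anyB {α : Type} (P : α → Bool) (l : List α) : Bool :=
  List.rec false (fun x _ ih => cond (P x) true ih) l

/-- A basis of the vectors with coordinate sum zero. -/
def initB : List Vec6 :=
  [⟨1,0,0,0,0,-1⟩, ⟨0,1,0,0,0,-1⟩, ⟨0,0,1,0,0,-1⟩, ⟨0,0,0,1,0,-1⟩, ⟨0,0,0,0,1,-1⟩]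

/-- The hexadecimal digit of `T` with index `k`. -/
def tb (T k : Nat) : Nat := Nat.land (Nat.shiftRight T (Nat.mul 4 k)) 15

/-- The corner of a flag. -/
def co (f : Nat) : Nat := Nat.shiftRight f 1

/-- The other flag at the same corner, compare `swap`. -/
def sw (f : Nat) : Nat := Nat.xor f 1

/-- The other flag on the same side, compare `other`. -/
def ot (f : Nat) : Nat := tb 0x09a78563412b f

/-- The bit of `T` with index `k`. -/
def bt (T k : Nat) : Bool := Nat.beq (Nat.land (Nat.shiftRight T k) 1) 1

/-- The numbers of all flags. -/
def range12 : List Nat := [0,1,2,3,4,5,6,7,8,9,10,11]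

/-- Whether the sides of the flags `a` and `b` are in the same length class; digit `f` of `W` is
the class of flag `f`. -/
def mt (W a b : Nat) : Bool := Nat.beq (tb W a) (tb W b)

/-- The index of the triple of corners of three flags. -/
def tri (f g h : Nat) : Nat := Nat.add (Nat.mul 36 (co f)) (Nat.add (Nat.mul 6 (co g)) (co h))

/-- Whether `h` cannot be the third flag at a vertex where `f` and `g` are glued: some side lengths do
not match, or the mask `gm` says that the three excesses do not sum to zero. -/
def bad (W gm f g h : Nat) : Bool :=
  cond (mt W (sw g) h) (cond (mt W (sw h) (sw f)) (bt gm (tri f g h)) true) true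

/-- The number of possible third flags. -/
def cnt (W gm f g : Nat) : Nat :=
  List.rec 0 (fun h _ ih => cond (bad W gm f g h) ih (Nat.succ ih)) range12

/-- Adds the pairs `(f, g)` and `(g, f)` to the set `res`. -/
def setb (res f g : Nat) : Nat :=
  Nat.lor res (Nat.lor (Nat.pow 2 (Nat.add (Nat.mul 12 f) g)) (Nat.pow 2 (Nat.add (Nat.mul 12 g) f)))

/-- Drops from `todo` the pairs in `res`, and finds among the others a pair `(f, g)` with the smallest
number `n` of possible third flags. The search starts with `n = 100`, which thus remains if no pair
is left. -/
def pick (W gm res : Nat) (todo : List (Nat × Nat)) :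
    List (Nat × Nat) → Nat → Nat → Nat → (List (Nat × Nat) → Nat → Nat → Nat → Bool) → Bool :=
  List.rec (fun acc n f g K => K acc n f g) (fun x _ ih acc n f g K =>
    cond (bt res (Nat.add (Nat.mul 12 x.1) x.2)) (ih acc n f g K)
      (fN (cnt W gm x.1 x.2) fun c =>
        cond (Nat.ble n c) (ih (x :: acc) n f g K) (ih (x :: acc) c x.1 x.2 K))) todo

/-- A flag which belongs to no pair in `res`. -/
def unglued (res : Nat) (l : List Nat) : Nat :=
  List.rec 0 (fun f _ ih => cond (Nat.beq (Nat.land (Nat.shiftRight res (Nat.mul 12 f)) 4095) 0) f ih) l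

/-- Branches over the third flag `h` at a vertex where `f` and `g` are glued. A branch succeeds when the
new linear condition makes a goal in `gs` hold on the whole span; otherwise the gluings at the other
ends of the three sides are added to the list of tasks. -/
def expand (W gm : Nat) (gs : List (List Form)) (ih : List Vec6 → Nat → List (Nat × Nat) → Bool)
    (B : List Vec6) (res : Nat) (todo : List (Nat × Nat)) (f g : Nat) : Bool :=
  allB (fun h => cond (bad W gm f g h) true (elimK (co f) (co g) (co h) B fun c B' =>
    cond (cond c (anyB (fun l => allB (fun φ => allB φ.van B') l) gs) false) true
      (fN (setb (setb (setb res f g) (sw g) h) (sw h) (sw f)) fun res' =>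
        fN (ot f) fun f1 => fN (ot g) fun g1 => fN (ot (sw g)) fun g2 => fN (ot h) fun h1 =>
        fN (ot (sw h)) fun h2 => fN (ot (sw f)) fun f2 =>
        ih B' res' ((f1, g1) :: (g2, h1) :: (h2, f2) :: todo)))) range12

/-- The search, with fuel `n`: `B` spans the possible vectors of excesses, `res` is the set of pairs
whose vertex has been treated, and `todo` lists pairs known to be glued. When no task is left, it
branches over the partner of a flag not yet glued. The result `true` means that every branch reaches
a goal. -/
def search (W gm : Nat) (gs : List (List Form)) (n : Nat) :
    List Vec6 → Nat → List (Nat × Nat) → Bool :=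
  Nat.rec (fun _ _ _ => false) (fun _ ih B res todo =>
    pick W gm res todo [] 100 0 0 fun todo' n f g =>
      cond (Nat.beq n 100)
        (fN (unglued res range12) fun f =>
          allB (fun g => cond (mt W f g) (expand W gm gs ih B res todo' f g) true) range12)
        (expand W gm gs ih B res todo' f g)) n

lemma fN_eq (n : Nat) (k : Nat → Bool) : fN n k = k n := by cases n <;> rfl

lemma fI_eq (x : Int) (k : Int → Bool) : fI x k = k x := by
  cases x
  · exact fN_eq _ fun n => k (Int.ofNat n)
  · exact fN_eq _ fun n => k (Int.negSucc n)

lemma isZ_iff (x : Int) : isZ x = true ↔ x = 0 := by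
  cases x with
  | ofNat n =>
    change Nat.beq n 0 = true ↔ _
    rw [Nat.beq_eq]; simp
  | negSucc n => simp [isZ]

lemma allB_iff {α : Type} (P : α → Bool) (l : List α) : allB P l = true ↔ ∀ x ∈ l, P x = true := by
  induction l with
  | nil => simp [allB]
  | cons x l ih =>
    have : allB P (x :: l) = cond (P x) (allB P l) false := rfl
    rw [this]
    cases h : P x <;> simp [h, ih]

lemma anyB_iff {α : Type} (P : α → Bool) (l : List α) : anyB P l = true ↔ ∃ x ∈ l, P x = true := by
  induction l with
  | nil => simp [anyB]
  | cons x l ih =>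
    have : anyB P (x :: l) = cond (P x) true (anyB P l) := rfl
    rw [this]
    cases h : P x <;> simp [h, ih]

/-- The real vector `d` lies in the span of the list of integer vectors. -/
def InSpan : List Vec6 → (Nat → ℝ) → Prop
  | [], d => ∀ i, d i = 0
  | x :: xs, d => ∃ t : ℝ, InSpan xs (fun i => d i - t * (x.get i : ℝ))

lemma dot_cast (i j k : Nat) (v : Vec6) :
    ((dot i j k v : ℤ) : ℝ) = v.get i + v.get j + v.get k := by
  change (((v.get i + v.get j) + v.get k : ℤ) : ℝ) = _
  push_cast; ring

lemma lcK_sound {a : Int} {v : Vec6} {b : Int} {w : Vec6} {K : Vec6 → Bool}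
    (h : lcK a v b w K = true) :
    ∃ y, K y = true ∧ ∀ i, (y.get i : ℝ) = a * v.get i - b * w.get i := by
  simp only [lcK, fI_eq] at h
  refine ⟨_, h, fun i => ?_⟩
  have key : ∀ x y : Int, ((lc1 a x b y : ℤ) : ℝ) = a * x - b * y := by
    intro x y
    change ((a * x + -(b * y) : ℤ) : ℝ) = _
    push_cast; ring
  rcases i with _ | _ | _ | _ | _ | i <;> exact key _ _

lemma elimRest_sound (i j k : Nat) (a : Int) (x : Vec6) (ha : a ≠ 0) (l : List Vec6) :
    ∀ K : List Vec6 → Bool, elimRest i j k a x l K = true → ∃ l', K l' = true ∧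
      ∀ d : Nat → ℝ, InSpan l d →
        InSpan l' (fun n => d n - (d i + d j + d k) / a * x.get n) := by
  have ha' : (a : ℝ) ≠ 0 := by exact_mod_cast ha
  induction l with
  | nil =>
    intro K h
    refine ⟨[], h, fun d hd n => ?_⟩
    have hd' : ∀ n, d n = 0 := hd
    simp [hd']
  | cons y ys ih =>
    intro K h
    have h' : fI (dot i j k y) (fun b => cond (isZ b) (elimRest i j k a x ys fun l => K (y :: l))
      (lcK a y b x fun y' => elimRest i j k a x ys fun l => K (y' :: l))) = true := h
    rw [fI_eq] at h'
    have hb := dot_cast i j k y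
    cases hz : isZ (dot i j k y) with
    | true =>
      rw [hz] at h'
      obtain ⟨l', h1, h2⟩ := ih _ h'
      refine ⟨_, h1, fun d hd => ?_⟩
      obtain ⟨s, hs⟩ := hd
      refine ⟨s, ?_⟩
      have h0 : (y.get i + y.get j + y.get k : ℝ) = 0 := by
        rw [← hb, (isZ_iff _).1 hz]; simp
      convert h2 _ hs using 2
      have : d i - s * y.get i + (d j - s * y.get j) + (d k - s * y.get k)
        = d i + d j + d k - s * (y.get i + y.get j + y.get k) := by ring
      rw [this, h0]; ring
    | false =>
      rw [hz, cond_false] at h'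
      obtain ⟨y', h3, hy'⟩ := lcK_sound h'
      obtain ⟨l', h1, h2⟩ := ih _ h3
      refine ⟨_, h1, fun d hd => ?_⟩
      obtain ⟨s, hs⟩ := hd
      refine ⟨s / a, ?_⟩
      convert h2 _ hs using 2
      rw [hy', hb]
      field_simp
      ring

lemma elimK_sound (i j k : Nat) (l : List Vec6) :
    ∀ K : Bool → List Vec6 → Bool, elimK i j k l K = true → ∃ c l', K c l' = true ∧
      ∀ d : Nat → ℝ, InSpan l d → d i + d j + d k = 0 → InSpan l' d := by
  induction l with
  | nil => exact fun K h => ⟨false, [], h, fun d hd _ => hd⟩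
  | cons x xs ih =>
    intro K h
    have h' : fI (dot i j k x) (fun a => cond (isZ a) (elimK i j k xs fun c l => K c (x :: l))
      (elimRest i j k a x xs (K true))) = true := h
    rw [fI_eq] at h'
    have hb := dot_cast i j k x
    cases hz : isZ (dot i j k x) with
    | true =>
      rw [hz] at h'
      obtain ⟨c, l', h1, h2⟩ := ih _ h'
      refine ⟨c, _, h1, fun d hd hd0 => ?_⟩
      obtain ⟨s, hs⟩ := hd
      refine ⟨s, h2 _ hs ?_⟩
      have h0 : (x.get i + x.get j + x.get k : ℝ) = 0 := by
        rw [← hb, (isZ_iff _).1 hz]; simp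
      linear_combination hd0 - s * h0
    | false =>
      rw [hz] at h'
      have ha : dot i j k x ≠ 0 := fun h => by rw [(isZ_iff _).2 h] at hz; cases hz
      obtain ⟨l', h1, h2⟩ := elimRest_sound i j k _ x ha xs _ h'
      refine ⟨true, l', h1, fun d hd hd0 => ?_⟩
      obtain ⟨s, hs⟩ := hd
      convert h2 _ hs using 2 with n
      have ha' : ((dot i j k x : ℤ) : ℝ) ≠ 0 := by exact_mod_cast ha
      have : d i - s * x.get i + (d j - s * x.get j) + (d k - s * x.get k)
        = - s * (dot i j k x : ℤ) := by rw [hb]; linear_combination hd0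
      rw [this]
      field_simp
      ring

/-- The linear condition expressed by a form holds for the real vector `d`. -/
def Form.holds (d : Nat → ℝ) : Form → Prop
  | .sum i j k => d i + d j + d k = 0
  | .eq i j => d i = d j

lemma van_sound (φ : Form) (l : List Vec6) : ∀ d : Nat → ℝ, InSpan l d →
    allB φ.van l = true → φ.holds d := by
  induction l with
  | nil =>
    intro d hd _
    have hd' : ∀ n, d n = 0 := hd
    cases φ <;> simp [Form.holds, hd']
  | cons x l ih =>
    rintro d ⟨s, hs⟩ h
    rw [allB_iff] at h
    have h1 := ih _ hs ((allB_iff _ _).2 fun y hy => h y (List.mem_cons_of_mem _ hy))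
    have h2 := h x (by simp)
    cases φ with
    | sum i j k =>
      have h3 : dot i j k x = 0 := (isZ_iff _).1 h2
      have h4 := dot_cast i j k x
      rw [h3] at h4
      simp only [Form.holds] at h1 ⊢
      push_cast at h4
      linear_combination h1 - s * h4
    | eq i j =>
      have h3 : x.get i + -x.get j = 0 := (isZ_iff _).1 h2
      have h4 : ((x.get i : ℤ) : ℝ) = x.get j := by
        have : x.get i = x.get j := by omega
        rw [this]
      simp only [Form.holds] at h1 ⊢
      linear_combination h1 + s * h4

/-- What the search needs to know: a relation `G` on the flags `0, …, 11` satisfying the closure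
properties of a gluing relation, and a vector `d` of excesses for which none of the goals holds. -/
structure Sys (W gm : Nat) (gs : List (List Form)) (d : Nat → ℝ) (G : Nat → Nat → Prop) : Prop where
  lt : ∀ f g, G f g → f < 12 ∧ g < 12
  other : ∀ f g, G f g → G (ot f) (ot g)
  third : ∀ f g, G f g → ∃ h, G (sw g) h ∧ G (sw h) (sw f) ∧ d (co f) + d (co g) + d (co h) = 0
  total : ∀ f < 12, ∃ g, G f g
  mt : ∀ f g, G f g → mt W f g = true
  gm : ∀ f g h, f < 12 → g < 12 → h < 12 → bt gm (tri f g h) = true →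
    d (co f) + d (co g) + d (co h) ≠ 0
  gs : ∀ l ∈ gs, ¬ ∀ φ ∈ l, φ.holds d

lemma pick_sound (W gm res : Nat) (G : Nat → Nat → Prop) (todo : List (Nat × Nat)) :
    ∀ acc n f g K, pick W gm res todo acc n f g K = true → (∀ x ∈ todo, G x.1 x.2) →
      (∀ x ∈ acc, G x.1 x.2) → (n = 100 ∨ G f g) →
      ∃ acc' n' f' g', K acc' n' f' g' = true ∧ (∀ x ∈ acc', G x.1 x.2) ∧ (n' = 100 ∨ G f' g') := by
  induction todo with
  | nil => exact fun acc n f g K h _ h2 h3 => ⟨acc, n, f, g, h, h2, h3⟩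
  | cons x todo ih =>
    intro acc n f g K h h1 h2 h3
    have h' : cond (bt res (Nat.add (Nat.mul 12 x.1) x.2)) (pick W gm res todo acc n f g K)
      (fN (cnt W gm x.1 x.2) fun c =>
        cond (Nat.ble n c) (pick W gm res todo (x :: acc) n f g K)
          (pick W gm res todo (x :: acc) c x.1 x.2 K)) = true := h
    have h1' : ∀ y ∈ todo, G y.1 y.2 := fun y hy => h1 y (List.mem_cons_of_mem _ hy)
    have h2' : ∀ y ∈ x :: acc, G y.1 y.2 := by
      intro y hy
      rcases List.mem_cons.1 hy with rfl | hy
      · exact h1 y (by simp)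
      · exact h2 y hy
    rw [fN_eq] at h'
    cases h4 : bt res (Nat.add (Nat.mul 12 x.1) x.2) <;>
      cases h5 : Nat.ble n (cnt W gm x.1 x.2) <;>
      simp only [h4, h5, cond_true, cond_false] at h' <;> first
      | exact ih _ _ _ _ _ h' h1' h2 h3
      | exact ih _ _ _ _ _ h' h1' h2' h3
      | exact ih _ _ _ _ _ h' h1' h2' (Or.inr (h1 x (by simp)))

lemma mem_range12 {n : Nat} (h : n < 12) : n ∈ range12 := by
  revert n; decide

lemma search_sound {W gm : Nat} {gs : List (List Form)} {d : Nat → ℝ} {G : Nat → Nat → Prop}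
    (S : Sys W gm gs d G) (n : Nat) : ∀ B res todo, InSpan B d → (∀ x ∈ todo, G x.1 x.2) →
      search W gm gs n B res todo ≠ true := by
  induction n with
  | zero => intro B res todo _ _ h; exact absurd h (by simp [search])
  | succ n ih =>
    intro B res todo hB ht h
    obtain ⟨todo', n', f', g', hK, htd, hfg⟩ := pick_sound W gm res G todo _ _ _ _ _ h ht
      (by simp) (Or.inl rfl)
    have hgo : ∀ f g, G f g → expand W gm gs (search W gm gs n) B res todo' f g = true → False := by
      intro f g hG hall
      obtain ⟨h, hh1, hh2, hsum⟩ := S.third f g hG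
      have hlt := (S.lt _ _ hh1).2
      have hs := (allB_iff _ _).1 hall h (mem_range12 hlt)
      have hbad : bad W gm f g h = false := by
        simp only [bad, S.mt _ _ hh1, S.mt _ _ hh2, cond_true]
        by_contra hc
        rw [Bool.not_eq_false] at hc
        exact S.gm f g h (S.lt _ _ hG).1 (S.lt _ _ hG).2 hlt hc hsum
      simp only [hbad, cond_false] at hs
      obtain ⟨c, B', hK', hB'⟩ := elimK_sound _ _ _ _ _ hs
      have hB'' := hB' d hB hsum
      have hno : (cond c (anyB (fun l => allB (fun φ => allB φ.van B') l) gs) false) = false := by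
        by_contra hc
        rw [Bool.not_eq_false] at hc
        cases c with
        | false => simp at hc
        | true =>
          simp only [cond_true] at hc
          obtain ⟨l, hl, hl2⟩ := (anyB_iff _ _).1 hc
          exact S.gs l hl fun φ hφ => van_sound φ B' d hB'' ((allB_iff _ _).1 hl2 φ hφ)
      simp only [hno, cond_false, fN_eq] at hK'
      refine ih _ _ _ hB'' ?_ hK'
      intro x hx
      simp only [List.mem_cons] at hx
      rcases hx with rfl | rfl | rfl | hx
      · exact S.other _ _ hG
      · exact S.other _ _ hh1
      · exact S.other _ _ hh2
      · exact htd x hx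
    replace hK : cond (Nat.beq n' 100)
        (fN (unglued res range12) fun f => allB (fun g => cond (mt W f g)
          (expand W gm gs (search W gm gs n) B res todo' f g) true) range12)
        (expand W gm gs (search W gm gs n) B res todo' f' g') = true := hK
    cases hb : Nat.beq n' 100 with
    | false =>
      rw [hb, cond_false] at hK
      refine hgo f' g' (hfg.resolve_left ?_) hK
      rintro rfl
      exact absurd hb (by decide)
    | true =>
      rw [hb, cond_true, fN_eq] at hK
      have hu : unglued res range12 < 12 := by
        have : ∀ l : List Nat, (∀ x ∈ l, x < 12) → unglued res l < 12 := by
          intro l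
          induction l with
          | nil => intro _; simp [unglued]
          | cons x l ihl =>
            intro hl
            change cond _ x (unglued res l) < 12
            cases (Nat.beq (Nat.land (Nat.shiftRight res (Nat.mul 12 x)) 4095) 0)
            · exact ihl fun y hy => hl y (List.mem_cons_of_mem _ hy)
            · exact hl x (by simp)
        exact this _ (by decide)
      obtain ⟨g, hG⟩ := S.total _ hu
      have := (allB_iff _ _).1 hK g (mem_range12 (S.lt _ _ hG).2)
      rw [S.mt _ _ hG, cond_true] at this
      exact hgo _ g hG this

end HexTile

namespace HexTile

/-! ### Running the search -/

/-- A pattern of equalities among the sides is encoded by the six hexadecimal digits of `w`: sides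
`i` and `j` are equal when the digits `i` and `j` are. This is the digit with index `i` modulo `6`. -/
def wl (w i : Nat) : Nat := tb w (Nat.mod i 6)

/-- The condition `Form.sum` with indices modulo `6`. -/
def s3 (i j k : Nat) : Form := .sum (i % 6) (j % 6) (k % 6)

/-- The condition `Form.eq` with indices modulo `6`. -/
def e2 (i j : Nat) : Form := .eq (i % 6) (j % 6)

/-- The lists of linear conditions on the angle excesses which settle a hexagon whose side lengths
are equal as prescribed by `l`; compare `Case`. -/
def goalsAt (l : Nat → Nat) (i : Nat) : List (List Form) :=
  (if l (i+5) = l (i+2) then [[s3 i (i+1) (i+2)]] else []) ++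
  (if l (i+5) = l (i+2) ∧ l (i+1) = l (i+3) then [[s3 i (i+1) (i+3)]] else []) ++
  (if l i = l (i+3) ∧ l (i+4) = l (i+2) then [[s3 i (i+5) (i+3)]] else []) ++
  (if l i = l (i+2) ∧ l (i+3) = l (i+5) ∧ l (i+1) = l (i+4) then [[s3 i (i+2) (i+4)]] else []) ++
  (if l i = l (i+3) ∧ l (i+1) = l (i+4) ∧ l (i+2) = l (i+5) then [[s3 i (i+2) (i+4)]] else []) ++
  (if l i = l (i+1) ∧ l (i+3) = l (i+4) ∧ l (i+2) ≠ l (i+5) then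
    [[e2 i (i+2), e2 (i+3) (i+5)]] else []) ++
  (if l i = l (i+1) ∧ l (i+1) = l (i+2) ∧ l (i+3) = l (i+4) ∧ l (i+4) = l (i+5) ∧ l i ≠ l (i+3)
    then [[e2 (i+1) (i+4), e2 (i+2) (i+5)], [e2 (i+1) (i+5), e2 (i+2) (i+4)]] else []) ++
  (if l i = l (i+1) ∧ l i = l (i+2) ∧ l i = l (i+3) ∧ l i = l (i+4)
    then [[e2 i (i+4), e2 (i+1) (i+5), s3 i i (i+2), s3 (i+1) (i+1) (i+3)]] else []) ++
  (if l i = l (i+5) ∧ l (i+1) = l (i+2) ∧ l (i+3) = l (i+4)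
    then [[s3 i i i, s3 (i+2) (i+2) (i+2), s3 (i+4) (i+4) (i+4)]] else [])

/-- The goals of the search for the side pattern `w`: those of `goalsAt` at all corners. -/
def goals (w : Nat) : List (List Form) :=
  [0,1,2,3,4,5].flatMap (goalsAt (wl w))

/-- The bit standing for a triple of corners, compare `tri`. -/
def tmask (i j k : Nat) : Nat := cond (Nat.blt i 6) (cond (Nat.blt j 6) (cond (Nat.blt k 6)
  (2 ^ (36 * i + 6 * j + k)) 0) 0) 0

/-- The set of triples of corners, in any order, occurring as a goal consisting of one condition. -/
def gmask : List (List Form) → Nat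
  | [] => 0
  | [.sum i j k] :: gs => tmask i j k ||| (tmask i k j ||| (tmask j i k ||| (tmask j k i |||
      (tmask k i j ||| (tmask k j i ||| gmask gs)))))
  | _ :: gs => gmask gs

/-- The classes of the sides of the twelve flags, packed into hexadecimal digits. -/
def W12 (w : Nat) : Nat := range12.foldr (fun f s => 16 * s + wl w ((f + 11) / 2)) 0

/-- The whole search for the side pattern `w` and the goals `gs`. -/
def run (w : Nat) (gs : List (List Form)) : Bool :=
  fN (W12 w) fun W => fN (gmask gs) fun gm => search W gm gs 60 initB 0 []

/-- Representatives, up to rotation, of the patterns of equality among six numbers which are not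
all equal: each side is labelled by the first side of the same length. -/
def words : List Nat := [0x500000, 0x440000, 0x540000, 0x303000, 0x503000, 0x333000, 0x533000, 0x343000,
  0x443000, 0x543000, 0x200200, 0x500200, 0x220200, 0x520200, 0x240200, 0x440200,
  0x540200, 0x502200, 0x442200, 0x542200, 0x203200, 0x303200, 0x503200, 0x323200,
  0x523200, 0x233200, 0x533200, 0x243200, 0x343200, 0x543200, 0x101010, 0x501010,
  0x541010, 0x503010, 0x313010, 0x513010, 0x343010, 0x543010, 0x210210, 0x510210,
  0x540210, 0x543210]

/-- `w` names each class of sides by its first member. -/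
def canon (w : Nat) : Bool :=
  allB (fun i => Nat.beq (wl w (wl w i)) (wl w i)) [0,1,2,3,4,5]

/-- The pattern `w` rotated by `k` is the pattern `v`. -/
def sameRot (w v k : Nat) : Bool :=
  allB (fun x => cond (Nat.beq (wl w (Nat.add x.1 k)) (wl w (Nat.add x.2 k)))
    (Nat.beq (wl v x.1) (wl v x.2)) (cond (Nat.beq (wl v x.1) (wl v x.2)) false true))
    [(0,1),(1,2),(0,2),(2,3),(1,3),(0,3),(3,4),(2,4),(1,4),(0,4),(4,5),(3,5),(2,5),(1,5),(0,5)]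

/-- The side pattern with first digit `0` and the given further digits. -/
def mkWord (b c d e f : Nat) : Nat := 16 * (b + 16 * (c + 16 * (d + 16 * (e + 16 * f))))

/-- Every canonical pattern starting with the digits `0` and `b`, except the one with all sides equal,
is a rotation of a member of `words`. -/
def coverTail (b : Nat) : Bool :=
  allB (fun c => allB (fun d => allB (fun e => allB (fun f => fN (mkWord b c d e f) fun w =>
    cond (canon w) (cond (Nat.beq w 0) true
      (anyB (fun k => anyB (fun v => sameRot w v k) words) [0,1,2,3,4,5])) true)
    [0,1,2,3,4,5]) [0,1,2,3,4]) [0,1,2,3]) [0,1,2]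

/-- The goals for an equilateral hexagon, numbered so that the angle excess at corner `0` has the
largest absolute value: unless all excesses vanish, none of the added conditions `2 x_0 + x_i = 0`
can hold. -/
def eqGoals : List (List Form) :=
  goals 0 ++ [[s3 0 0 0], [s3 0 0 1], [s3 0 0 2], [s3 0 0 3], [s3 0 0 4], [s3 0 0 5]]

set_option maxRecDepth 100000
theorem run_eq : run 0 eqGoals = true := by decide +kernel
theorem run_words : ∀ w ∈ words, run w (goals w) = true := by decide +kernel
theorem cover0 : coverTail 0 = true := by decide +kernel
theorem cover1 : coverTail 1 = true := by decide +kernel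

end HexTile

namespace HexTile

/-! ### Soundness of the search -/

/-- The alternatives delivered by the search, for side lengths `L` and angle excesses `δ` (over
`2π/3`), both indexed modulo `6`. -/
def Case (L δ : ℕ → ℝ) (i : ℕ) : Prop :=
  (L (i+5) = L (i+2) ∧ δ i + δ (i+1) + δ (i+2) = 0) ∨
  (L (i+5) = L (i+2) ∧ L (i+1) = L (i+3) ∧ δ i + δ (i+1) + δ (i+3) = 0) ∨
  (L i = L (i+3) ∧ L (i+4) = L (i+2) ∧ δ i + δ (i+5) + δ (i+3) = 0) ∨
  (L i = L (i+2) ∧ L (i+3) = L (i+5) ∧ L (i+1) = L (i+4) ∧ δ i + δ (i+2) + δ (i+4) = 0) ∨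
  (L i = L (i+3) ∧ L (i+1) = L (i+4) ∧ L (i+2) = L (i+5) ∧ δ i + δ (i+2) + δ (i+4) = 0) ∨
  (L i = L (i+1) ∧ L (i+3) = L (i+4) ∧ L (i+2) ≠ L (i+5) ∧ δ i = δ (i+2) ∧ δ (i+3) = δ (i+5)) ∨
  ((L i = L (i+1) ∧ L (i+1) = L (i+2) ∧ L (i+3) = L (i+4) ∧ L (i+4) = L (i+5) ∧ L i ≠ L (i+3)) ∧
    ((δ (i+1) = δ (i+4) ∧ δ (i+2) = δ (i+5)) ∨ (δ (i+1) = δ (i+5) ∧ δ (i+2) = δ (i+4)))) ∨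
  ((L i = L (i+1) ∧ L i = L (i+2) ∧ L i = L (i+3) ∧ L i = L (i+4)) ∧
    δ i = δ (i+4) ∧ δ (i+1) = δ (i+5) ∧ δ i + δ i + δ (i+2) = 0 ∧
      δ (i+1) + δ (i+1) + δ (i+3) = 0) ∨
  ((L i = L (i+5) ∧ L (i+1) = L (i+2) ∧ L (i+3) = L (i+4)) ∧
    δ i = 0 ∧ δ (i+2) = 0 ∧ δ (i+4) = 0)

lemma goalsAt_sound {l : Nat → Nat} {L δ d : ℕ → ℝ} (hl : ∀ i j, l i = l j ↔ L i = L j)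
    (hδ : ∀ i, d (i % 6) = δ i) {i : Nat} {g : List Form} (hg : g ∈ goalsAt l i)
    (h : ∀ φ ∈ g, φ.holds d) : Case L δ i := by
  simp only [goalsAt, List.mem_append, List.mem_ite_nil_right, List.mem_cons, List.not_mem_nil,
    or_false, hl, ne_eq] at hg
  unfold Case
  rcases hg with (((((((hg | hg) | hg) | hg) | hg) | hg) | hg) | hg) | hg <;>
    obtain ⟨hc, hg⟩ := hg
  case inl.inl.inr =>
    rcases hg with rfl | rfl
    · simp only [List.mem_cons, List.not_mem_nil, or_false, forall_eq_or_imp, forall_eq, e2,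
        Form.holds, hδ] at h
      exact .inr <| .inr <| .inr <| .inr <| .inr <| .inr <| .inl ⟨hc, .inl h⟩
    · simp only [List.mem_cons, List.not_mem_nil, or_false, forall_eq_or_imp, forall_eq, e2,
        Form.holds, hδ] at h
      exact .inr <| .inr <| .inr <| .inr <| .inr <| .inr <| .inl ⟨hc, .inr h⟩
  all_goals
    subst hg
    simp only [List.mem_cons, List.not_mem_nil, or_false, forall_eq_or_imp, forall_eq, s3, e2,
      Form.holds, hδ] at h
  · exact .inl ⟨hc, h⟩
  · exact .inr <| .inl ⟨hc.1, hc.2, h⟩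
  · exact .inr <| .inr <| .inl ⟨hc.1, hc.2, h⟩
  · exact .inr <| .inr <| .inr <| .inl ⟨hc.1, hc.2.1, hc.2.2, h⟩
  · exact .inr <| .inr <| .inr <| .inr <| .inl ⟨hc.1, hc.2.1, hc.2.2, h⟩
  · exact .inr <| .inr <| .inr <| .inr <| .inr <| .inl ⟨hc.1, hc.2.1, hc.2.2, h⟩
  · exact .inr <| .inr <| .inr <| .inr <| .inr <| .inr <| .inr <| .inl ⟨hc, h⟩
  · exact .inr <| .inr <| .inr <| .inr <| .inr <| .inr <| .inr <| .inr
      ⟨hc, by linarith [h.1], by linarith [h.2.1], by linarith [h.2.2]⟩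

lemma bt_eq (T k : Nat) : bt T k = T.testBit k := by
  have : bt T k = Nat.beq ((T >>> k) &&& 1) 1 := rfl
  rw [this, Nat.testBit_eq_decide_div_mod_eq, Nat.and_one_is_mod, Nat.shiftRight_eq_div_pow]
  rw [Bool.eq_iff_iff, Nat.beq_eq]
  simp

lemma tmask_sound {i j k a b c : Nat} (_ : a < 6) (hb : b < 6) (hc : c < 6)
    (h : (tmask i j k).testBit (36 * a + 6 * b + c) = true) : i = a ∧ j = b ∧ k = c := by
  unfold tmask at h
  cases h1 : Nat.blt i 6 <;> cases h2 : Nat.blt j 6 <;> cases h3 : Nat.blt k 6 <;>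
    simp only [h1, h2, h3, cond_true, cond_false, Nat.zero_testBit, Bool.false_eq_true] at h
  rw [Nat.testBit_two_pow, decide_eq_true_eq] at h
  simp only [Nat.blt_eq] at h1 h2 h3
  omega

lemma gmask_sound {d : Nat → ℝ} {a b c : Nat} (ha : a < 6) (hb : b < 6) (hc : c < 6)
    (gs : List (List Form)) (h : (gmask gs).testBit (36 * a + 6 * b + c) = true)
    (hd : d a + d b + d c = 0) : ∃ l ∈ gs, ∀ φ ∈ l, φ.holds d := by
  induction gs using gmask.induct with
  | case1 => simp [gmask] at h
  | case2 i j k gs ih =>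
    simp only [gmask, Nat.testBit_or, Bool.or_eq_true] at h
    have key : (d i + d j + d k = 0) → ∃ l ∈ [Form.sum i j k] :: gs, ∀ φ ∈ l, φ.holds d :=
      fun h => ⟨_, List.mem_cons_self, by simpa [Form.holds] using h⟩
    rcases h with h | h | h | h | h | h | h
    · obtain ⟨rfl, rfl, rfl⟩ := tmask_sound ha hb hc h; exact key (by linarith)
    · obtain ⟨rfl, rfl, rfl⟩ := tmask_sound ha hb hc h; exact key (by linarith)
    · obtain ⟨rfl, rfl, rfl⟩ := tmask_sound ha hb hc h; exact key (by linarith)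
    · obtain ⟨rfl, rfl, rfl⟩ := tmask_sound ha hb hc h; exact key (by linarith)
    · obtain ⟨rfl, rfl, rfl⟩ := tmask_sound ha hb hc h; exact key (by linarith)
    · obtain ⟨rfl, rfl, rfl⟩ := tmask_sound ha hb hc h; exact key (by linarith)
    · obtain ⟨l, hl, h⟩ := ih h
      exact ⟨l, List.mem_cons_of_mem _ hl, h⟩
  | case3 g gs hg ih =>
    have : gmask (g :: gs) = gmask gs := by
      rw [gmask]; exact hg
    rw [this] at h
    obtain ⟨l, hl, h⟩ := ih h
    exact ⟨l, List.mem_cons_of_mem _ hl, h⟩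

lemma tb_eq (T k : Nat) : tb T k = T / 16 ^ k % 16 := by
  have : tb T k = (T >>> (4 * k)) &&& (2 ^ 4 - 1) := rfl
  rw [this, Nat.and_two_pow_sub_one_eq_mod, Nat.shiftRight_eq_div_pow, pow_mul]
  norm_num

lemma tb_lt (T k : Nat) : tb T k < 16 := by rw [tb_eq]; exact Nat.mod_lt _ (by norm_num)

lemma wl_mod (w i : Nat) : wl w (i % 6) = wl w i := by
  unfold wl; congr 1; exact Nat.mod_mod _ _

lemma tb_W12 (w f : Nat) (hf : f < 12) : tb (W12 w) f = wl w ((f + 11) / 2) := by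
  have h : ∀ i, wl w i < 16 := fun i => tb_lt _ _
  simp only [W12, range12, List.foldr]
  rw [tb_eq]
  have h0 := h ((0 + 11) / 2); have h1 := h ((1 + 11) / 2); have h2 := h ((2 + 11) / 2)
  have h3 := h ((3 + 11) / 2); have h4 := h ((4 + 11) / 2); have h5 := h ((5 + 11) / 2)
  have h6 := h ((6 + 11) / 2); have h7 := h ((7 + 11) / 2); have h8 := h ((8 + 11) / 2)
  have h9 := h ((9 + 11) / 2); have h10 := h ((10 + 11) / 2); have h11 := h ((11 + 11) / 2)
  interval_cases f <;> omega

/-- The flag with number `2 i + b`. -/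
def fl (n : Nat) : Flag := (Fin.ofNat 6 (n / 2), n % 2 == 1)

/-- The number of a flag. -/
def num (f : Flag) : Nat := 2 * f.1.val + (if f.2 then 1 else 0)

lemma fl_num (f : Flag) : fl (num f) = f := by revert f; decide

lemma num_lt (f : Flag) : num f < 12 := by revert f; decide

lemma num_fl {n : Nat} (h : n < 12) : num (fl n) = n := by
  revert n; decide

lemma fl_sw {n : Nat} (h : n < 12) : sw n < 12 ∧ fl (sw n) = swap (fl n) := by
  revert n; decide

lemma fl_ot {n : Nat} (h : n < 12) : ot n < 12 ∧ fl (ot n) = other (fl n) := by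
  revert n; decide

lemma fl_co {n : Nat} (h : n < 12) : co n < 6 ∧ Fin.ofNat 6 (co n) = (fl n).1 := by
  revert n; decide

lemma fl_sd {n : Nat} (h : n < 12) : Fin.ofNat 6 ((n + 11) / 2) = sd (fl n) := by
  revert n; decide

lemma ofNat_mod (i : ℕ) : Fin.ofNat 6 (i % 6) = Fin.ofNat 6 i := by
  ext; simp [Fin.ofNat]

lemma inSpan_initB (d : ℕ → ℝ) (hd : ∀ i, 6 ≤ i → d i = d 5) (h : d 0 + d 1 + d 2 + d 3 + d 4 + d 5 = 0) :
    InSpan initB d := by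
  refine ⟨d 0, d 1, d 2, d 3, d 4, fun i => ?_⟩
  rcases i with _ | _ | _ | _ | _ | _ | i
  case succ.succ.succ.succ.succ.succ => 
    simp only [Vec6.get]; rw [hd _ (by omega)]; push_cast; linarith
  all_goals simp only [Vec6.get]; push_cast; norm_num
  linarith
end HexTile

namespace HexTile

variable {p : Fin 6 → ℂ}

/-- The same hexagon with the vertices numbered from the vertex `k`. -/
def rotp (p : Fin 6 → ℂ) (k : Fin 6) : Fin 6 → ℂ := fun i => p (i + k)

lemma beq_iff (a b : ℕ) : Nat.beq a b = true ↔ a = b := by rw [Nat.beq_eq]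

lemma add_right6 (i k : Fin 6) : i + 1 + k = i + k + 1 := add_right_comm _ _ _

lemma sub_right6 (i k : Fin 6) : i - 1 + k = i + k - 1 := by revert i k; decide

lemma len_rotp (k i : Fin 6) : len (rotp p k) i = len p (i + k) := by
  simp only [len, rotp, add_right6]

lemma ang_rotp (k i : Fin 6) : ang (rotp p k) i = ang p (i + k) := by
  simp only [ang, rotp, add_right6, sub_right6]

lemma CCW.rotp (hp : CCW p) (k : Fin 6) : CCW (rotp p k) := by
  intro i j h1 h2
  have := hp (i + k) (j + k) (fun h => h1 (add_right_cancel h))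
    (fun h => h2 (add_right_cancel (b := k) (by rw [h, add_right6])))
  simpa only [ed, HexTile.rotp, add_right6] using this

lemma Hex_rotp (k : Fin 6) : Hex (rotp p k) = Hex p := by
  have : Set.range (rotp p k) = Set.range p :=
    (Equiv.addRight k).surjective.range_comp p
  rw [Hex, Hex, this]

lemma FlagRel.rotp {G : Flag → Flag → Prop} (h : FlagRel p G) (k : Fin 6) :
    FlagRel (rotp p k) (fun f g => G (f.1 + k, f.2) (g.1 + k, g.2)) := by
  have hsd : ∀ f : Flag, sd f + k = sd (f.1 + k, f.2) := by
    intro f; revert f k; decide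
  have hot : ∀ f : Flag, ((HexTile.other f).1 + k, (HexTile.other f).2) = HexTile.other (f.1 + k, f.2) := by
    intro f; revert f k; decide
  refine ⟨fun f g hfg => h.symm _ _ hfg, fun f g hfg => ?_, fun f g hfg => ?_, fun f g hfg => ?_,
    fun f => ?_⟩
  · rw [len_rotp, len_rotp, hsd, hsd]; exact h.len _ _ hfg
  · rw [hot, hot]; exact h.other _ _ hfg
  · obtain ⟨c, h1, h2, h3⟩ := h.third _ _ hfg
    refine ⟨(c.1 - k, c.2), ?_, ?_, ?_⟩
    · simpa [swap] using h1
    · simpa [swap] using h2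
    · simpa [ang_rotp] using h3
  · obtain ⟨g, hg⟩ := h.total (f.1 + k, f.2)
    exact ⟨(g.1 - k, g.2), by simpa using hg⟩

/-- Side lengths, with indices modulo `6`. -/
def Ln (p : Fin 6 → ℂ) (n : ℕ) : ℝ := len p (Fin.ofNat 6 n)

/-- The excesses of the angles over `2π/3`, with indices modulo `6`. -/
def dn (p : Fin 6 → ℂ) (n : ℕ) : ℝ := ang p (Fin.ofNat 6 n) - 2 * Real.pi / 3

/-- If the search succeeds, then one of its goals holds for every hexagon with this pattern of equal
sides that carries a gluing relation. Excesses are extended to indices beyond `5` as in `Vec6.get`. -/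
lemma run_false (hp : CCW p) {G : Flag → Flag → Prop} (hG : FlagRel p G) {w : ℕ}
    (hw : ∀ i j, wl w i = wl w j ↔ Ln p i = Ln p j) {gs : List (List Form)}
    (hgs : ∀ l ∈ gs, ¬ ∀ φ ∈ l, φ.holds (fun n => dn p (min n 5))) : run w gs ≠ true := by
  intro hrun
  simp only [run, fN_eq] at hrun
  have hmin : ∀ n < 6, min n 5 = n := fun n h => by omega
  refine search_sound (d := fun n => dn p (min n 5))
    (G := fun f g => f < 12 ∧ g < 12 ∧ G (fl f) (fl g)) ?_ _ _ _ _ ?_ (by simp) hrun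
  · refine ⟨fun f g h => ⟨h.1, h.2.1⟩, ?_, ?_, ?_, ?_, ?_, hgs⟩
    · rintro f g ⟨hf, hg, h⟩
      refine ⟨(fl_ot hf).1, (fl_ot hg).1, ?_⟩
      rw [(fl_ot hf).2, (fl_ot hg).2]
      exact hG.other _ _ h
    · rintro f g ⟨hf, hg, h⟩
      obtain ⟨c, h1, h2, h3⟩ := hG.third _ _ h
      have hc := num_lt c
      refine ⟨num c, ⟨(fl_sw hg).1, hc, ?_⟩, ⟨(fl_sw hc).1, (fl_sw hf).1, ?_⟩, ?_⟩
      · rw [(fl_sw hg).2, fl_num]; exact h1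
      · rw [(fl_sw hc).2, (fl_sw hf).2, fl_num]; exact h2
      · simp only [hmin _ (fl_co hf).1, hmin _ (fl_co hg).1, hmin _ (fl_co hc).1, dn, (fl_co hf).2,
          (fl_co hg).2, (fl_co hc).2, fl_num]
        linarith
    · intro f hf
      obtain ⟨g, hg⟩ := hG.total (fl f)
      exact ⟨num g, hf, num_lt g, by rwa [fl_num]⟩
    · rintro f g ⟨hf, hg, h⟩
      have : tb (W12 w) f = tb (W12 w) g := by
        rw [tb_W12 w f hf, tb_W12 w g hg, hw, Ln, Ln, fl_sd hf, fl_sd hg]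
        exact hG.len _ _ h
      exact (beq_iff _ _).2 this
    · intro f g h hf hg hh hbt hs
      rw [bt_eq] at hbt
      have htri : tri f g h = 36 * co f + 6 * co g + co h := by
        change 36 * co f + (6 * co g + co h) = _; ring
      rw [htri] at hbt
      obtain ⟨l, hl, h4⟩ := gmask_sound (d := fun n => dn p (min n 5)) (fl_co hf).1 (fl_co hg).1
        (fl_co hh).1 gs hbt hs
      exact hgs l hl h4
  · refine inSpan_initB _ (fun i hi => ?_) ?_
    · simp [show min i 5 = 5 by omega]
    · have h := ang_sum hp
      have e : ∀ n, n < 6 → min n 5 = n := hmin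
      simp only [e 0 (by norm_num), e 1 (by norm_num), e 2 (by norm_num), e 3 (by norm_num),
        e 4 (by norm_num), e 5 (by norm_num), dn]
      have a0 : Fin.ofNat 6 0 = (0 : Fin 6) := rfl
      have a1 : Fin.ofNat 6 1 = (1 : Fin 6) := rfl
      have a2 : Fin.ofNat 6 2 = (2 : Fin 6) := rfl
      have a3 : Fin.ofNat 6 3 = (3 : Fin 6) := rfl
      have a4 : Fin.ofNat 6 4 = (4 : Fin 6) := rfl
      have a5 : Fin.ofNat 6 5 = (5 : Fin 6) := rfl
      rw [a0, a1, a2, a3, a4, a5]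
      linarith

lemma goals_sound {w : ℕ} (hw : ∀ i j, wl w i = wl w j ↔ Ln p i = Ln p j)
    (hno : ∀ i, ¬ Case (Ln p) (dn p) i) :
    ∀ l ∈ goals w, ¬ ∀ φ ∈ l, φ.holds (fun n => dn p (min n 5)) := by
  intro l hl h
  simp only [goals, List.mem_flatMap] at hl
  obtain ⟨i, -, hl⟩ := hl
  refine hno i (goalsAt_sound hw (fun i => ?_) hl h)
  have : min (i % 6) 5 = i % 6 := by omega
  simp only [this, dn, ofNat_mod]

lemma wl_iff_of_sameRot {w v k : ℕ} (h : sameRot w v k = true) (i j : ℕ) :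
    wl v i = wl v j ↔ wl w (i + k) = wl w (j + k) := by
  have key : ∀ i j : ℕ, i < j → j < 6 → (wl v i = wl v j ↔ wl w (i + k) = wl w (j + k)) := by
    intro i j hij hj
    have hm := (allB_iff _ _).1 h (i, j) (by
      interval_cases j <;> interval_cases i <;> simp)
    dsimp only at hm
    cases h1 : Nat.beq (wl w (Nat.add i k)) (wl w (Nat.add j k)) <;>
      cases h2 : Nat.beq (wl v i) (wl v j) <;> simp only [h1, h2, cond_true, cond_false] at hm
    · have h1' : wl w (i + k) ≠ wl w (j + k) := fun e => by
        have := (beq_iff _ _).2 e; exact absurd (h1.symm.trans this) (by decide)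
      have h2' : wl v i ≠ wl v j := fun e => by
        rw [(beq_iff _ _).2 e] at h2; cases h2
      tauto
    · cases hm
    · cases hm
    · have h1' : wl w (i + k) = wl w (j + k) := (beq_iff _ _).1 h1
      have h2' : wl v i = wl v j := (beq_iff _ _).1 h2
      tauto
  have red : ∀ i, wl w (i % 6 + k) = wl w (i + k) := by
    intro i; rw [← wl_mod w (i % 6 + k), ← wl_mod w (i + k)]; congr 1; omega
  rw [← wl_mod v i, ← wl_mod v j, ← red i, ← red j]
  have hi := Nat.mod_lt i (by norm_num : 6 > 0)
  have hj := Nat.mod_lt j (by norm_num : 6 > 0)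
  rcases lt_trichotomy (i % 6) (j % 6) with h1 | h1 | h1
  · exact key _ _ h1 hj
  · rw [h1]; tauto
  · have := key _ _ h1 hi
    tauto

/-- Every sequence of six numbers has one of the listed equality patterns, up to rotation. -/
lemma exists_word (L : Fin 6 → ℝ) :
    (∀ i j, L i = L j) ∨ ∃ k : ℕ, ∃ w ∈ words, ∀ i j : ℕ, wl w i = wl w j ↔
      L (Fin.ofNat 6 (i + k)) = L (Fin.ofNat 6 (j + k)) := by
  classical
  have hne : ∀ i, (Finset.univ.filter fun j => L j = L i).Nonempty := fun i => ⟨i, by simp⟩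
  set c : Fin 6 → Fin 6 := fun i => (Finset.univ.filter fun j => L j = L i).min' (hne i) with hc
  have hcL : ∀ i, L (c i) = L i := fun i => by
    have := Finset.min'_mem _ (hne i)
    simpa using this
  have hcle : ∀ i, c i ≤ i := fun i => Finset.min'_le _ _ (by simp)
  have hciff : ∀ i j, c i = c j ↔ L i = L j := by
    intro i j
    refine ⟨fun h => by rw [← hcL i, h, hcL], fun h => ?_⟩
    simp only [hc, h]
  set w := mkWord (c 1) (c 2) (c 3) (c 4) (c 5) with hw
  have hb : ∀ i, (c i).val < 6 := fun i => (c i).isLt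
  have hwl : ∀ i : Fin 6, wl w i = c i := by
    have h0 : (c 0).val = 0 := by have := hcle 0; simpa using this
    have b1 := hb 1; have b2 := hb 2; have b3 := hb 3; have b4 := hb 4; have b5 := hb 5
    have hd : ∀ i : ℕ, i < 6 → wl w i = w / 16 ^ i % 16 := fun i hi => by
      rw [← tb_eq]; unfold wl; congr 1; exact Nat.mod_eq_of_lt hi
    have hw' : w = 16 * (c 1 + 16 * (c 2 + 16 * (c 3 + 16 * (c 4 + 16 * c 5)))) := hw
    have g0 : wl w 0 = c 0 := by rw [hd 0 (by norm_num)]; omega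
    have g1 : wl w 1 = c 1 := by rw [hd 1 (by norm_num)]; omega
    have g2 : wl w 2 = c 2 := by rw [hd 2 (by norm_num)]; omega
    have g3 : wl w 3 = c 3 := by rw [hd 3 (by norm_num)]; omega
    have g4 : wl w 4 = c 4 := by rw [hd 4 (by norm_num)]; omega
    have g5 : wl w 5 = c 5 := by rw [hd 5 (by norm_num)]; omega
    intro i
    fin_cases i
    exacts [g0, g1, g2, g3, g4, g5]
  have hwl' : ∀ i : ℕ, wl w i = c (Fin.ofNat 6 i) := by
    intro i
    rw [← hwl, ← wl_mod]; rfl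
  have hiff : ∀ i j : ℕ, wl w i = wl w j ↔ L (Fin.ofNat 6 i) = L (Fin.ofNat 6 j) := by
    intro i j
    rw [hwl', hwl', ← hciff, Fin.val_inj]
  have hcanon : canon w = true := by
    refine (allB_iff _ _).2 fun i _ => (beq_iff _ _).2 ?_
    rw [hwl' i, hwl, Fin.val_inj, hciff, hcL]
  have hcov : coverTail (c 1) = true := by
    have := hcle 1
    have h1 : (c 1).val = 0 ∨ (c 1).val = 1 := by
      have : (c 1).val ≤ 1 := this
      omega
    rcases h1 with h1 | h1 <;> rw [h1]
    · exact cover0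
    · exact cover1
  have m2 : (c 2).val ∈ [0, 1, 2] := by
    have : (c 2).val ≤ 2 := hcle 2
    simp only [List.mem_cons, List.not_mem_nil, or_false]; omega
  have m3 : (c 3).val ∈ [0, 1, 2, 3] := by
    have : (c 3).val ≤ 3 := hcle 3
    simp only [List.mem_cons, List.not_mem_nil, or_false]; omega
  have m4 : (c 4).val ∈ [0, 1, 2, 3, 4] := by
    have : (c 4).val ≤ 4 := hcle 4
    simp only [List.mem_cons, List.not_mem_nil, or_false]; omega
  have m5 : (c 5).val ∈ [0, 1, 2, 3, 4, 5] := by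
    have : (c 5).val ≤ 5 := hcle 5
    simp only [List.mem_cons, List.not_mem_nil, or_false]; omega
  have h := (allB_iff _ _).1 ((allB_iff _ _).1 ((allB_iff _ _).1 ((allB_iff _ _).1 hcov _ m2) _ m3)
    _ m4) _ m5
  rw [fN_eq, ← hw, hcanon, cond_true] at h
  cases h0 : Nat.beq w 0 with
  | true =>
    left
    have hw0 : w = 0 := (beq_iff _ _).1 h0
    intro i j
    rw [← hciff, ← Fin.val_inj, ← hwl, ← hwl, hw0]
    revert i j; decide
  | false =>
    right
    rw [h0, cond_false] at h
    obtain ⟨k, -, hk⟩ := (anyB_iff _ _).1 h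
    obtain ⟨v, hv, hk⟩ := (anyB_iff _ _).1 hk
    refine ⟨k, v, hv, fun i j => ?_⟩
    rw [wl_iff_of_sameRot hk, hiff]

/-- A hexagon carrying a gluing relation falls, after renumbering, under one of the cases. -/
theorem exists_case (hp : CCW p) {G : Flag → Flag → Prop} (hG : FlagRel p G) :
    ∃ k i, Case (Ln (rotp p k)) (dn (rotp p k)) i := by
  by_contra hno
  push Not at hno
  rcases exists_word (len p) with heq | ⟨k, w, hw, hiff⟩
  · obtain ⟨k, -, hk⟩ := Finset.exists_max_image Finset.univ
      (fun i => |ang p i - 2 * Real.pi / 3|) ⟨0, by simp⟩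
    have hw : ∀ i j, wl 0 i = wl 0 j ↔ Ln (rotp p k) i = Ln (rotp p k) j := by
      intro i j
      simp only [Ln, len_rotp]
      refine iff_of_true ?_ (heq _ _)
      rw [wl, wl, tb_eq, tb_eq]; simp
    have hmax : ∀ i, |dn (rotp p k) i| ≤ |dn (rotp p k) 0| := by
      intro i
      simp only [dn, ang_rotp]
      have : Fin.ofNat 6 0 + k = k := (by decide : ∀ k : Fin 6, Fin.ofNat 6 0 + k = k) k
      rw [this]
      exact hk _ (by simp)
    have hzero : dn (rotp p k) 0 = 0 → False := by
      intro h
      have hz : ∀ i, dn (rotp p k) i = 0 := fun i => by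
        have := hmax i
        rw [h, abs_zero] at this
        exact abs_nonpos_iff.1 this
      refine hno k 0 (Or.inl ⟨?_, by simp [hz]⟩)
      simp only [Ln, len_rotp]
      exact heq _ _
    have hthird : ∀ i, dn (rotp p k) 0 + dn (rotp p k) 0 + dn (rotp p k) i = 0 → False := by
      intro i h
      have h1 := hmax i
      have h2 : dn (rotp p k) i = -(2 * dn (rotp p k) 0) := by linarith
      rw [h2, abs_neg, abs_mul, abs_two] at h1
      exact hzero (abs_nonpos_iff.1 (by linarith [abs_nonneg (dn (rotp p k) 0)]))
    refine run_false (hp.rotp k) (hG.rotp k) hw ?_ run_eq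
    intro l hl h
    rcases List.mem_append.1 hl with hl | hl
    · exact goals_sound hw (hno k) l hl h
    · simp only [List.mem_cons, List.not_mem_nil, or_false] at hl
      rcases hl with rfl | rfl | rfl | rfl | rfl | rfl <;>
        exact hthird _ (h _ List.mem_cons_self)
  · have hw' : ∀ i j, wl w i = wl w j ↔
        Ln (rotp p (Fin.ofNat 6 k)) i = Ln (rotp p (Fin.ofNat 6 k)) j := by
      intro i j
      have e : ∀ i, Fin.ofNat 6 i + Fin.ofNat 6 k = Fin.ofNat 6 (i + k) := by
        intro i; ext; simp [Fin.ofNat, Fin.val_add]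
      rw [hiff, Ln, Ln, len_rotp, len_rotp, e, e]
    exact run_false (hp.rotp _) (hG.rotp _) hw' (goals_sound hw' (hno _)) (run_words w hw)

end HexTile

namespace HexTile

variable {p : Fin 6 → ℂ}

/-! ### The three types of tiling hexagons -/

/-- The exterior (turning) angle at the vertex `i`. -/
def turn (p : Fin 6 → ℂ) (i : Fin 6) : ℝ := Real.pi - ang p i

lemma turn_mem (hp : CCW p) (i : Fin 6) : 0 < turn p i ∧ turn p i < Real.pi := by
  have := ang_mem hp i
  exact ⟨by unfold turn; linarith [this.2], by unfold turn; linarith [this.1]⟩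

lemma turn_sum (hp : CCW p) :
    turn p 0 + turn p 1 + turn p 2 + turn p 3 + turn p 4 + turn p 5 = 2 * Real.pi := by
  have := ang_sum hp
  unfold turn; linarith

lemma dir_turn (hp : CCW p) (i : Fin 6) :
    dir p (i + 1) = Complex.exp ((turn p (i + 1) : ℝ) * Complex.I) * dir p i := by
  rw [dir_succ hp, turn, Complex.ofReal_sub, sub_mul, sub_eq_add_neg, Complex.exp_add,
    Complex.exp_pi_mul_I]
  ring

/-- The sides of the hexagon sum to zero, in every direction. -/
lemma closing (hp : CCW p) (φ : ℝ) :
    len p 0 * Real.cos φ + len p 1 * Real.cos (turn p 1 + φ)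
      + len p 2 * Real.cos (turn p 1 + turn p 2 + φ)
      + len p 3 * Real.cos (turn p 1 + turn p 2 + turn p 3 + φ)
      + len p 4 * Real.cos (turn p 1 + turn p 2 + turn p 3 + turn p 4 + φ)
      + len p 5 * Real.cos (turn p 1 + turn p 2 + turn p 3 + turn p 4 + turn p 5 + φ) = 0 := by
  have hs : (len p 0 : ℂ) * dir p 0 + len p 1 * dir p 1 + len p 2 * dir p 2 + len p 3 * dir p 3
      + len p 4 * dir p 4 + len p 5 * dir p 5 = 0 := by
    simp only [len_mul_dir hp]
    have : (5 : Fin 6) + 1 = 0 := rfl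
    rw [this]
    have a1 : (0 : Fin 6) + 1 = 1 := rfl
    have a2 : (1 : Fin 6) + 1 = 2 := rfl
    have a3 : (2 : Fin 6) + 1 = 3 := rfl
    have a4 : (3 : Fin 6) + 1 = 4 := rfl
    have a5 : (4 : Fin 6) + 1 = 5 := rfl
    rw [a1, a2, a3, a4, a5]
    ring
  have h1 := dir_turn hp 0
  have h2 := dir_turn hp 1
  have h3 := dir_turn hp 2
  have h4 := dir_turn hp 3
  have h5 := dir_turn hp 4
  have a1 : (0 : Fin 6) + 1 = 1 := rfl
  have a2 : (1 : Fin 6) + 1 = 2 := rfl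
  have a3 : (2 : Fin 6) + 1 = 3 := rfl
  have a4 : (3 : Fin 6) + 1 = 4 := rfl
  have a5 : (4 : Fin 6) + 1 = 5 := rfl
  rw [a1] at h1; rw [a2] at h2; rw [a3] at h3; rw [a4] at h4; rw [a5] at h5
  rw [h5, h4, h3, h2, h1] at hs
  have hd : dir p 0 ≠ 0 := by
    have := norm_dir hp 0
    intro h; rw [h, norm_zero] at this; exact zero_ne_one this
  have hs' : (len p 0 : ℂ) * Complex.exp (φ * Complex.I)
      + len p 1 * Complex.exp ((turn p 1 + φ : ℝ) * Complex.I)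
      + len p 2 * Complex.exp ((turn p 1 + turn p 2 + φ : ℝ) * Complex.I)
      + len p 3 * Complex.exp ((turn p 1 + turn p 2 + turn p 3 + φ : ℝ) * Complex.I)
      + len p 4 * Complex.exp ((turn p 1 + turn p 2 + turn p 3 + turn p 4 + φ : ℝ) * Complex.I)
      + len p 5 * Complex.exp
        ((turn p 1 + turn p 2 + turn p 3 + turn p 4 + turn p 5 + φ : ℝ) * Complex.I) = 0 := by
    refine mul_right_cancel₀ hd ?_
    simp only [Complex.ofReal_add, add_mul, Complex.exp_add]
    linear_combination Complex.exp (φ * Complex.I) * hs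
  have := congrArg Complex.re hs'
  simpa only [Complex.add_re, Complex.re_ofReal_mul, Complex.exp_ofReal_mul_I_re,
    Complex.zero_re] using this

/-- Reinhardt's first type: two opposite sides are equal and parallel. -/
def T1 (p : Fin 6 → ℂ) : Prop := len p 5 = len p 2 ∧ ang p 0 + ang p 1 + ang p 2 = 2 * Real.pi

/-- Reinhardt's second type. -/
def T2 (p : Fin 6 → ℂ) : Prop := len p 5 = len p 2 ∧ len p 1 = len p 3 ∧
  ang p 0 + ang p 1 + ang p 3 = 2 * Real.pi

/-- The mirror image of the type `T2`. -/
def T2m (p : Fin 6 → ℂ) : Prop := len p 0 = len p 3 ∧ len p 4 = len p 2 ∧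
  ang p 0 + ang p 5 + ang p 3 = 2 * Real.pi

/-- Reinhardt's third type: three alternate angles are `2π/3`, each between equal sides. -/
def T3 (p : Fin 6 → ℂ) : Prop := len p 0 = len p 5 ∧ len p 1 = len p 2 ∧ len p 3 = len p 4 ∧
  ang p 0 = 2 * Real.pi / 3 ∧ ang p 2 = 2 * Real.pi / 3 ∧ ang p 4 = 2 * Real.pi / 3

lemma cos_sub_cos_add (x r : ℝ) :
    Real.cos x + Real.cos (x + r + Real.pi) = 2 * Real.sin (r / 2) * Real.sin (x + r / 2) := by
  rw [Real.cos_add_pi, ← sub_eq_add_neg, Real.cos_sub_cos]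
  rw [show (x + (x + r)) / 2 = x + r / 2 by ring, show (x - (x + r)) / 2 = -(r / 2) by ring,
    Real.sin_neg]
  ring

lemma sin_pos_of {x : ℝ} (h0 : 0 < x) (h1 : x < Real.pi) : 0 < Real.sin x :=
  Real.sin_pos_of_pos_of_lt_pi h0 h1

/-- If opposite sides are equal and alternate angles sum to `2π`, then closing up makes opposite sides
parallel; this puts the fifth alternative of `Case` under `T1`. -/
lemma caseG1 (hp : CCW p) (h03 : len p 0 = len p 3) (h14 : len p 1 = len p 4)
    (h25 : len p 2 = len p 5) (hz : turn p 0 + turn p 2 + turn p 4 = Real.pi) :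
    turn p 1 + turn p 2 + turn p 3 = Real.pi := by
  have b0 := turn_mem hp 0
  have b1 := turn_mem hp 1
  have b2 := turn_mem hp 2
  have b3 := turn_mem hp 3
  have b4 := turn_mem hp 4
  have b5 := turn_mem hp 5
  have hs := turn_sum hp
  have L0 := len_pos hp 0
  have L1 := len_pos hp 1
  have L2 := len_pos hp 2
  have hc := closing hp
  rw [← h03, ← h14, ← h25] at hc
  generalize turn p 0 = t0 at *
  generalize turn p 1 = t1 at *
  generalize turn p 2 = t2 at *
  generalize turn p 3 = t3 at *
  generalize turn p 4 = t4 at *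
  generalize turn p 5 = t5 at *
  set r0 := t2 - t5 with hr0
  set r2 := t4 - t1 with hr2
  have key : ∀ φ, len p 0 * Real.sin (r0 / 2) * Real.sin (r0 / 2 + φ)
      + len p 1 * Real.sin ((r0 + r2) / 2) * Real.sin (t1 + (r0 + r2) / 2 + φ)
      + len p 2 * Real.sin (r2 / 2) * Real.sin (t1 + t2 + r2 / 2 + φ) = 0 := by
    intro φ
    have h := hc φ
    have e0 := cos_sub_cos_add φ r0
    have e1 := cos_sub_cos_add (t1 + φ) (r0 + r2)
    have e2 := cos_sub_cos_add (t1 + t2 + φ) r2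
    rw [show φ + r0 + Real.pi = t1 + t2 + t3 + φ by rw [hr0]; linarith,
      show φ + r0 / 2 = r0 / 2 + φ by ring] at e0
    rw [show t1 + φ + (r0 + r2) + Real.pi = t1 + t2 + t3 + t4 + φ by rw [hr0, hr2]; linarith,
      show t1 + φ + (r0 + r2) / 2 = t1 + (r0 + r2) / 2 + φ by ring] at e1
    rw [show t1 + t2 + φ + r2 + Real.pi = t1 + t2 + t3 + t4 + t5 + φ by rw [hr2]; linarith,
      show t1 + t2 + φ + r2 / 2 = t1 + t2 + r2 / 2 + φ by ring] at e2
    linear_combination h / 2 - len p 0 / 2 * e0 - len p 1 / 2 * e1 - len p 2 / 2 * e2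
  have k1 := key (-(t1 + (r0 + r2) / 2))
  have k0 := key (-(r0 / 2))
  rw [add_neg_cancel, Real.sin_zero, mul_zero, add_zero,
    show r0 / 2 + -(t1 + (r0 + r2) / 2) = -((t1 + t4) / 2) by rw [hr0, hr2]; ring,
    show t1 + t2 + r2 / 2 + -(t1 + (r0 + r2) / 2) = (t2 + t5) / 2 by rw [hr0, hr2]; ring,
    Real.sin_neg] at k1
  rw [add_neg_cancel, Real.sin_zero, mul_zero, zero_add,
    show t1 + (r0 + r2) / 2 + -(r0 / 2) = (t1 + t4) / 2 by rw [hr0, hr2]; ring,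
    show t1 + t2 + r2 / 2 + -(r0 / 2) = Real.pi - (t0 + t3) / 2 by
      rw [hr0, hr2]; linarith, Real.sin_pi_sub] at k0
  have s1 := sin_pos_of (x := (t1 + t4) / 2) (by linarith) (by linarith)
  have s2 := sin_pos_of (x := (t2 + t5) / 2) (by linarith) (by linarith)
  have s3 := sin_pos_of (x := (t0 + t3) / 2) (by linarith) (by linarith)
  rcases lt_trichotomy r0 0 with h | h | h
  · exfalso
    have g0 : Real.sin (r0 / 2) < 0 :=
      Real.sin_neg_of_neg_of_neg_pi_lt (by linarith) (by linarith)
    have g2 : Real.sin (r2 / 2) < 0 := by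
      by_contra hcon
      push Not at hcon
      have := mul_nonneg (mul_nonneg L2.le hcon) s2.le
      have := mul_pos (mul_pos L0 (neg_pos.2 g0)) s1
      linarith
    have hr : r2 < 0 := by
      by_contra hcon
      push Not at hcon
      have := Real.sin_nonneg_of_nonneg_of_le_pi (x := r2 / 2) (by linarith) (by linarith)
      linarith
    have g1 : Real.sin ((r0 + r2) / 2) < 0 :=
      Real.sin_neg_of_neg_of_neg_pi_lt (by linarith) (by linarith)
    have := mul_pos (mul_pos L1 (neg_pos.2 g1)) s1
    have := mul_pos (mul_pos L2 (neg_pos.2 g2)) s3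
    linarith
  · linarith
  · exfalso
    have g0 : 0 < Real.sin (r0 / 2) := sin_pos_of (by linarith) (by linarith)
    have g2 : 0 < Real.sin (r2 / 2) := by
      by_contra hcon
      push Not at hcon
      have := mul_nonneg (mul_nonneg L2.le (neg_nonneg.2 hcon)) s2.le
      have := mul_pos (mul_pos L0 g0) s1
      linarith
    have hr : 0 < r2 := by
      by_contra hcon
      push Not at hcon
      have := Real.sin_nonpos_of_nonpos_of_neg_pi_le (x := r2 / 2) (by linarith) (by linarith)
      linarith
    have g1 : 0 < Real.sin ((r0 + r2) / 2) := sin_pos_of (by linarith) (by linarith)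
    have := mul_pos (mul_pos L1 g1) s1
    have := mul_pos (mul_pos L2 g2) s3
    linarith

/-- Closing up puts the fourth alternative of `Case` under `T1`. -/
lemma caseG3 (hp : CCW p) (h02 : len p 0 = len p 2) (h35 : len p 3 = len p 5)
    (h14 : len p 1 = len p 4) (hz : turn p 0 + turn p 2 + turn p 4 = Real.pi) :
    turn p 2 + turn p 3 + turn p 4 = Real.pi := by
  have b0 := turn_mem hp 0
  have b1 := turn_mem hp 1
  have b2 := turn_mem hp 2
  have b3 := turn_mem hp 3
  have b4 := turn_mem hp 4
  have b5 := turn_mem hp 5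
  have hs := turn_sum hp
  have L0 := len_pos hp 0
  have L1 := len_pos hp 1
  have L3 := len_pos hp 3
  have hc := closing hp
  rw [← h02, ← h14, ← h35] at hc
  generalize turn p 0 = t0 at *
  generalize turn p 1 = t1 at *
  generalize turn p 2 = t2 at *
  generalize turn p 3 = t3 at *
  generalize turn p 4 = t4 at *
  generalize turn p 5 = t5 at *
  set r := t3 - t0 with hr
  have key : ∀ φ, len p 0 * Real.cos ((t1 + t2) / 2) * Real.cos ((t1 + t2) / 2 + φ)
      + len p 3 * Real.cos ((t4 + t5) / 2) * Real.cos ((t1 + t2) / 2 + Real.pi + r / 2 + φ)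
      - len p 1 * Real.sin (r / 2) * Real.cos (t1 + Real.pi / 2 + r / 2 + φ) = 0 := by
    intro φ
    have h := hc φ
    have e0 := Real.cos_add_cos φ (t1 + t2 + φ)
    have e1 := Real.cos_add_cos (t1 + φ) (t1 + t2 + t3 + t4 + φ)
    have e2 := Real.cos_add_cos (t1 + t2 + t3 + φ) (t1 + t2 + t3 + t4 + t5 + φ)
    rw [show (φ + (t1 + t2 + φ)) / 2 = (t1 + t2) / 2 + φ by ring,
      show (φ - (t1 + t2 + φ)) / 2 = -((t1 + t2) / 2) by ring, Real.cos_neg] at e0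
    rw [show (t1 + φ + (t1 + t2 + t3 + t4 + φ)) / 2 = t1 + Real.pi / 2 + r / 2 + φ by
        rw [hr]; linarith,
      show (t1 + φ - (t1 + t2 + t3 + t4 + φ)) / 2 = -(r / 2 + Real.pi / 2) by
        rw [hr]; linarith, Real.cos_neg, Real.cos_add_pi_div_two] at e1
    rw [show (t1 + t2 + t3 + φ + (t1 + t2 + t3 + t4 + t5 + φ)) / 2
        = (t1 + t2) / 2 + Real.pi + r / 2 + φ by rw [hr]; linarith,
      show (t1 + t2 + t3 + φ - (t1 + t2 + t3 + t4 + t5 + φ)) / 2 = -((t4 + t5) / 2) by ring,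
      Real.cos_neg] at e2
    linear_combination h / 2 - len p 0 / 2 * e0 - len p 1 / 2 * e1 - len p 3 / 2 * e2
  by_contra hne
  have hr0 : r ≠ 0 := fun h => hne (by linarith)
  have hsr : Real.sin (r / 2) ≠ 0 := by
    intro h
    rw [Real.sin_eq_zero_iff_of_lt_of_lt (by linarith) (by linarith)] at h
    exact hr0 (by linarith)
  have k1 := key (-((t1 + t2) / 2) - Real.pi / 2)
  have k2 := key (-((t1 + t2) / 2 + Real.pi + r / 2) - Real.pi / 2)
  have c0 : ∀ x : ℝ, Real.cos (x + (-x - Real.pi / 2)) = 0 := fun x => by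
    rw [show x + (-x - Real.pi / 2) = -(Real.pi / 2) by ring, Real.cos_neg, Real.cos_pi_div_two]
  rw [c0, show (t1 + t2) / 2 + Real.pi + r / 2 + (-((t1 + t2) / 2) - Real.pi / 2)
      = r / 2 + Real.pi / 2 by ring, Real.cos_add_pi_div_two,
    show t1 + Real.pi / 2 + r / 2 + (-((t1 + t2) / 2) - Real.pi / 2)
      = (t1 + t3 + t4) / 2 - Real.pi / 2 by rw [hr]; linarith, Real.cos_sub_pi_div_two] at k1
  rw [c0, show (t1 + t2) / 2 + (-((t1 + t2) / 2 + Real.pi + r / 2) - Real.pi / 2)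
      = (Real.pi / 2 - r / 2) - 2 * Real.pi by ring, Real.cos_sub_two_pi, Real.cos_pi_div_two_sub,
    show t1 + Real.pi / 2 + r / 2 + (-((t1 + t2) / 2 + Real.pi + r / 2) - Real.pi / 2)
      = -((t2 + t3 + t5) / 2 + Real.pi / 2) by rw [hr]; linarith, Real.cos_neg,
    Real.cos_add_pi_div_two] at k2
  have s1 := sin_pos_of (x := (t1 + t3 + t4) / 2) (by linarith) (by linarith)
  have s2 := sin_pos_of (x := (t2 + t3 + t5) / 2) (by linarith) (by linarith)
  have m1 : len p 3 * Real.cos ((t4 + t5) / 2) + len p 1 * Real.sin ((t1 + t3 + t4) / 2) = 0 :=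
    mul_right_cancel₀ hsr (by linear_combination -k1)
  have m2 : len p 0 * Real.cos ((t1 + t2) / 2) + len p 1 * Real.sin ((t2 + t3 + t5) / 2) = 0 :=
    mul_right_cancel₀ hsr (by linear_combination k2)
  have n1 : Real.pi < t4 + t5 := by
    by_contra hcon
    push Not at hcon
    have := Real.cos_nonneg_of_neg_pi_div_two_le_of_le (x := (t4 + t5) / 2) (by linarith)
      (by linarith)
    have := mul_nonneg L3.le this
    have := mul_pos L1 s1
    linarith
  have n2 : Real.pi < t1 + t2 := by
    by_contra hcon
    push Not at hcon
    have := Real.cos_nonneg_of_neg_pi_div_two_le_of_le (x := (t1 + t2) / 2) (by linarith)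
      (by linarith)
    have := mul_nonneg L0.le this
    have := mul_pos L1 s2
    linarith
  linarith

/-- Closing up excludes the sixth alternative of `Case`, in which `len p 2 ≠ len p 5`. -/
lemma caseG2 (hp : CCW p) (h01 : len p 0 = len p 1) (h34 : len p 3 = len p 4)
    (e02 : turn p 0 = turn p 2) (e35 : turn p 3 = turn p 5) : len p 2 = len p 5 := by
  have b0 := turn_mem hp 0
  have b1 := turn_mem hp 1
  have b3 := turn_mem hp 3
  have b4 := turn_mem hp 4
  have hs := turn_sum hp
  have hc := closing hp
  rw [← h01, ← h34, ← e02, ← e35] at hc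
  rw [← e02, ← e35] at hs
  generalize turn p 0 = t0 at *
  generalize turn p 1 = t1 at *
  generalize turn p 3 = t3 at *
  generalize turn p 4 = t4 at *
  have h := hc (-(t1 / 2) - Real.pi / 2)
  rw [show -(t1 / 2) - Real.pi / 2 = -(t1 / 2 + Real.pi / 2) by ring, Real.cos_neg,
    Real.cos_add_pi_div_two, show t1 + -(t1 / 2 + Real.pi / 2) = t1 / 2 - Real.pi / 2 by ring,
    Real.cos_sub_pi_div_two,
    show t1 + t0 + -(t1 / 2 + Real.pi / 2) = (t1 / 2 + t0) - Real.pi / 2 by ring,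
    Real.cos_sub_pi_div_two,
    show t1 + t0 + t3 + -(t1 / 2 + Real.pi / 2) = Real.pi / 2 - t4 / 2 by linarith,
    Real.cos_pi_div_two_sub,
    show t1 + t0 + t3 + t4 + -(t1 / 2 + Real.pi / 2) = t4 / 2 + Real.pi / 2 by linarith,
    Real.cos_add_pi_div_two,
    show t1 + t0 + t3 + t4 + t3 + -(t1 / 2 + Real.pi / 2)
      = -(t1 / 2 + t0 + Real.pi / 2) + 2 * Real.pi by linarith, Real.cos_add_two_pi, Real.cos_neg,
    Real.cos_add_pi_div_two] at h
  have s := sin_pos_of (x := t1 / 2 + t0) (by linarith) (by linarith)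
  exact mul_right_cancel₀ s.ne' (by linear_combination h)

set_option maxHeartbeats 800000 in
/-- Closing up excludes the seventh alternative of `Case`, in which `len p 0 ≠ len p 3`. -/
lemma caseG5 (hp : CCW p) (h01 : len p 0 = len p 1) (h12 : len p 1 = len p 2)
    (h34 : len p 3 = len p 4) (h45 : len p 4 = len p 5)
    (h : (turn p 1 = turn p 4 ∧ turn p 2 = turn p 5) ∨
      (turn p 1 = turn p 5 ∧ turn p 2 = turn p 4)) : len p 0 = len p 3 := by
  have b0 := turn_mem hp 0
  have b1 := turn_mem hp 1
  have b2 := turn_mem hp 2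
  have b3 := turn_mem hp 3
  have hs := turn_sum hp
  have L0 := len_pos hp 0
  have L3 := len_pos hp 3
  have hc := closing hp
  rw [← h12, ← h01, ← h45, ← h34] at hc
  generalize turn p 0 = t0 at *
  generalize turn p 1 = t1 at *
  generalize turn p 2 = t2 at *
  generalize turn p 3 = t3 at *
  generalize turn p 4 = t4 at *
  generalize turn p 5 = t5 at *
  have hsum : t4 + t5 = t1 + t2 := by rcases h with h | h <;> linarith
  have hlt : t1 + t2 < Real.pi := by linarith
  set P := 2 * Real.cos ((t1 + t2) / 2) + Real.cos ((t1 - t2) / 2) with hP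
  set R := Real.sin ((t1 - t2) / 2) with hR
  set R' := Real.sin ((t4 - t5) / 2) with hR'
  have hPpos : 0 < P := by
    have g1 := Real.cos_pos_of_mem_Ioo (x := (t1 + t2) / 2) ⟨by linarith, by linarith⟩
    have g2 := Real.cos_pos_of_mem_Ioo (x := (t1 - t2) / 2) ⟨by linarith, by linarith⟩
    linarith
  have hRR : R' ^ 2 = R ^ 2 := by
    rcases h with ⟨h1, h2⟩ | ⟨h1, h2⟩
    · rw [hR, hR', h1, h2]
    · rw [hR, hR', h1, h2, show (t4 - t5) / 2 = -((t5 - t4) / 2) by ring, Real.sin_neg, neg_sq]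
  have hP' : Real.cos ((t4 - t5) / 2) = Real.cos ((t1 - t2) / 2) := by
    rcases h with ⟨h1, h2⟩ | ⟨h1, h2⟩
    · rw [h1, h2]
    · rw [h1, h2, show (t4 - t5) / 2 = -((t5 - t4) / 2) by ring, Real.cos_neg]
  set D := t1 + t2 + t3 with hD
  have key : ∀ φ, len p 0 * (P * Real.cos φ - R * Real.sin φ)
      + len p 3 * (P * Real.cos (D + φ) - R' * Real.sin (D + φ)) = 0 := by
    intro φ
    have h := hc (φ - (t1 + t2) / 2)
    have e0 := Real.cos_add_cos (φ - (t1 + t2) / 2) (t1 + t2 + (φ - (t1 + t2) / 2))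
    have e1 := Real.cos_add φ ((t1 - t2) / 2)
    have e2 := Real.cos_add_cos (D + (φ - (t1 + t2) / 2)) (D + t4 + t5 + (φ - (t1 + t2) / 2))
    have e3 := Real.cos_add (D + φ) ((t4 - t5) / 2)
    rw [show (φ - (t1 + t2) / 2 + (t1 + t2 + (φ - (t1 + t2) / 2))) / 2 = φ by ring,
      show (φ - (t1 + t2) / 2 - (t1 + t2 + (φ - (t1 + t2) / 2))) / 2 = -((t1 + t2) / 2) by ring,
      Real.cos_neg] at e0
    rw [show φ + (t1 - t2) / 2 = t1 + (φ - (t1 + t2) / 2) by ring] at e1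
    rw [show (D + (φ - (t1 + t2) / 2) + (D + t4 + t5 + (φ - (t1 + t2) / 2))) / 2 = D + φ by
        linarith,
      show (D + (φ - (t1 + t2) / 2) - (D + t4 + t5 + (φ - (t1 + t2) / 2))) / 2
        = -((t1 + t2) / 2) by linarith, Real.cos_neg] at e2
    rw [show D + φ + (t4 - t5) / 2 = D + t4 + (φ - (t1 + t2) / 2) by linarith, hP'] at e3
    rw [hP]
    linear_combination h - len p 0 * e0 - len p 0 * e1 - len p 3 * e2 - len p 3 * e3
  have k0 := key 0
  have k1 := key (Real.pi / 2)
  simp only [Real.cos_zero, Real.sin_zero, add_zero, Real.cos_add_pi_div_two, Real.cos_pi_div_two,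
    Real.sin_pi_div_two, Real.sin_add_pi_div_two] at k0 k1
  have k2 := Real.sin_sq_add_cos_sq D
  have fin : (len p 0 ^ 2 - len p 3 ^ 2) * (P ^ 2 + R ^ 2) = 0 := by
    have a0 : (len p 0 * P) ^ 2 = (len p 3 * (P * Real.cos D - R' * Real.sin D)) ^ 2 := by
      rw [show len p 0 * P = -(len p 3 * (P * Real.cos D - R' * Real.sin D)) by linarith, neg_sq]
    have a1 : (len p 0 * R) ^ 2 = (len p 3 * (P * Real.sin D + R' * Real.cos D)) ^ 2 := by
      rw [show len p 0 * R = -(len p 3 * (P * Real.sin D + R' * Real.cos D)) by linarith, neg_sq]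
    linear_combination a0 + a1 + len p 3 ^ 2 * (P ^ 2 + R' ^ 2) * k2 + len p 3 ^ 2 * hRR
  have : len p 0 ^ 2 - len p 3 ^ 2 = 0 := by
    rcases mul_eq_zero.1 fin with h | h
    · exact h
    · exact absurd h (by positivity)
  exact (sq_eq_sq₀ L0.le L3.le).1 (by linarith)

/-- Closing up adds a condition to the eighth alternative of `Case` which puts it under `T2`. -/
lemma caseG6 (hp : CCW p) (h1 : len p 0 = len p 1) (h2 : len p 0 = len p 2)
    (h3 : len p 0 = len p 3) (h4 : len p 0 = len p 4) (e04 : turn p 0 = turn p 4)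
    (e15 : turn p 1 = turn p 5) (e2 : 2 * turn p 0 + turn p 2 = Real.pi)
    (e3 : 2 * turn p 1 + turn p 3 = Real.pi) : turn p 0 = turn p 1 := by
  have b0 := turn_mem hp 0
  have b1 := turn_mem hp 1
  have L0 := len_pos hp 0
  have hs := turn_sum hp
  have hc := closing hp (turn p 0 - Real.pi / 2)
  rw [← h1, ← h2, ← h3, ← h4, ← e04, ← e15] at hc
  generalize turn p 0 = A at *
  generalize turn p 1 = B at *
  generalize turn p 2 = t2 at *
  generalize turn p 3 = t3 at *
  rw [Real.cos_sub_pi_div_two, show B + (A - Real.pi / 2) = (A + B) - Real.pi / 2 by ring,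
    Real.cos_sub_pi_div_two,
    show B + t2 + (A - Real.pi / 2) = Real.pi / 2 - (A - B) by linarith,
    Real.cos_pi_div_two_sub,
    show B + t2 + t3 + (A - Real.pi / 2) = -(A + B + Real.pi / 2) + 2 * Real.pi by linarith,
    Real.cos_add_two_pi, Real.cos_neg, Real.cos_add_pi_div_two,
    show B + t2 + t3 + A + (A - Real.pi / 2) = -(B + Real.pi / 2) + 2 * Real.pi by linarith,
    Real.cos_add_two_pi, Real.cos_neg, Real.cos_add_pi_div_two,
    show B + t2 + t3 + A + B + (A - Real.pi / 2) = -(Real.pi / 2) + 2 * Real.pi by linarith,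
    Real.cos_add_two_pi, Real.cos_neg, Real.cos_pi_div_two] at hc
  have hk : Real.sin A - Real.sin B + Real.sin (A - B) = 0 :=
    mul_left_cancel₀ L0.ne' (by linear_combination hc)
  have e := Real.sin_sub_sin A B
  have e' := Real.sin_two_mul ((A - B) / 2)
  rw [show 2 * ((A - B) / 2) = A - B by ring] at e'
  have e'' := Real.cos_add_cos ((A + B) / 2) ((A - B) / 2)
  rw [show ((A + B) / 2 + (A - B) / 2) / 2 = A / 2 by ring,
    show ((A + B) / 2 - (A - B) / 2) / 2 = B / 2 by ring] at e''
  have g1 := Real.cos_pos_of_mem_Ioo (x := A / 2) ⟨by linarith, by linarith⟩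
  have g2 := Real.cos_pos_of_mem_Ioo (x := B / 2) ⟨by linarith, by linarith⟩
  have hz : Real.sin ((A - B) / 2) * (Real.cos (A / 2) * Real.cos (B / 2)) = 0 := by
    linear_combination hk / 4 - e / 4 - e' / 4 - Real.sin ((A - B) / 2) * e'' / 2
  have : Real.sin ((A - B) / 2) = 0 := by
    rcases mul_eq_zero.1 hz with h | h
    · exact h
    · exact absurd h (mul_pos g1 g2).ne'
  rw [Real.sin_eq_zero_iff_of_lt_of_lt (by linarith) (by linarith)] at this
  linarith

end HexTile

namespace HexTile

variable {p : Fin 6 → ℂ}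

lemma rotp_rotp (k m : Fin 6) : rotp (rotp p k) m = rotp p (m + k) := by
  funext i; simp only [rotp, add_assoc]

lemma ofNat_add6 (i n : ℕ) : Fin.ofNat 6 (i + n) = Fin.ofNat 6 n + Fin.ofNat 6 i := by
  ext; simp [Fin.ofNat, Fin.val_add, add_comm]

lemma Ln_add (i n : ℕ) : Ln p (i + n) = len (rotp p (Fin.ofNat 6 i)) (Fin.ofNat 6 n) := by
  rw [len_rotp, Ln, ofNat_add6]

lemma dn_add (i n : ℕ) :
    dn p (i + n) = Real.pi / 3 - turn (rotp p (Fin.ofNat 6 i)) (Fin.ofNat 6 n) := by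
  rw [turn, ang_rotp, dn, ofNat_add6]; ring

/-- The hexagon has one of Reinhardt's types, for the given numbering of its vertices. -/
def Typed (p : Fin 6 → ℂ) : Prop := T1 p ∨ T2 p ∨ T2m p ∨ T3 p

/-- Every alternative left by the search is excluded or leads to one of Reinhardt's types. -/
lemma typed_of_case (hp : CCW p) {i : ℕ} (h : Case (Ln p) (dn p) i) : ∃ k, Typed (rotp p k) := by
  suffices H : ∃ k, Typed (rotp (rotp p (Fin.ofNat 6 i)) k) by
    obtain ⟨k, hk⟩ := H
    exact ⟨_, by rwa [rotp_rotp] at hk⟩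
  have L0 : Ln p i = len (rotp p (Fin.ofNat 6 i)) 0 := Ln_add i 0
  have L1 : Ln p (i + 1) = len (rotp p (Fin.ofNat 6 i)) 1 := Ln_add i 1
  have L2 : Ln p (i + 2) = len (rotp p (Fin.ofNat 6 i)) 2 := Ln_add i 2
  have L3 : Ln p (i + 3) = len (rotp p (Fin.ofNat 6 i)) 3 := Ln_add i 3
  have L4 : Ln p (i + 4) = len (rotp p (Fin.ofNat 6 i)) 4 := Ln_add i 4
  have L5 : Ln p (i + 5) = len (rotp p (Fin.ofNat 6 i)) 5 := Ln_add i 5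
  have d0 : dn p i = Real.pi / 3 - turn (rotp p (Fin.ofNat 6 i)) 0 := dn_add i 0
  have d1 : dn p (i + 1) = Real.pi / 3 - turn (rotp p (Fin.ofNat 6 i)) 1 := dn_add i 1
  have d2 : dn p (i + 2) = Real.pi / 3 - turn (rotp p (Fin.ofNat 6 i)) 2 := dn_add i 2
  have d3 : dn p (i + 3) = Real.pi / 3 - turn (rotp p (Fin.ofNat 6 i)) 3 := dn_add i 3
  have d4 : dn p (i + 4) = Real.pi / 3 - turn (rotp p (Fin.ofNat 6 i)) 4 := dn_add i 4
  have d5 : dn p (i + 5) = Real.pi / 3 - turn (rotp p (Fin.ofNat 6 i)) 5 := dn_add i 5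
  unfold Case at h
  rw [L0, L1, L2, L3, L4, L5, d0, d1, d2, d3, d4, d5] at h
  replace hp := hp.rotp (Fin.ofNat 6 i)
  clear L0 L1 L2 L3 L4 L5 d0 d1 d2 d3 d4 d5
  generalize rotp p (Fin.ofNat 6 i) = q at *
  have q0 : rotp q 0 = q := by funext j; simp [rotp]
  have ht : ∀ j, ang q j = Real.pi - turn q j := fun j => by rw [turn]; ring
  rcases h with ⟨h1, h2⟩ | ⟨h1, h2, h3⟩ | ⟨h1, h2, h3⟩ | ⟨h1, h2, h3, h4⟩ | ⟨h1, h2, h3, h4⟩ |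
    ⟨h1, h2, h3, h4, h5⟩ | ⟨⟨h1, h2, h3, h4, h5⟩, h6⟩ | ⟨⟨h1, h2, h3, h4⟩, h5, h6, h7, h8⟩ |
    ⟨⟨h1, h2, h3⟩, h4, h5, h6⟩
  · exact ⟨0, .inl ⟨by rw [q0, h1], by rw [q0, ht, ht, ht]; linarith⟩⟩
  · exact ⟨0, .inr <| .inl ⟨by rw [q0, h1], by rw [q0, h2], by rw [q0, ht, ht, ht]; linarith⟩⟩
  · exact ⟨0, .inr <| .inr <| .inl ⟨by rw [q0, h1], by rw [q0, h2],
      by rw [q0, ht, ht, ht]; linarith⟩⟩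
  · have := caseG3 hp h1 h2 h3 (by linarith)
    refine ⟨2, .inl ⟨?_, ?_⟩⟩
    · rw [len_rotp, len_rotp]; exact h3
    · rw [ang_rotp, ang_rotp, ang_rotp]
      change ang q 2 + ang q 3 + ang q 4 = _
      rw [ht, ht, ht]; linarith
  · have := caseG1 hp h1 h2 h3 (by linarith)
    refine ⟨1, .inl ⟨?_, ?_⟩⟩
    · rw [len_rotp, len_rotp]; exact h1
    · rw [ang_rotp, ang_rotp, ang_rotp]
      change ang q 1 + ang q 2 + ang q 3 = _
      rw [ht, ht, ht]; linarith
  · exact absurd (caseG2 hp h1 h2 (by linarith) (by linarith)) h3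
  · refine absurd (caseG5 hp h1 h2 h3 h4 ?_) h5
    rcases h6 with ⟨a, b⟩ | ⟨a, b⟩
    · exact .inl ⟨by linarith, by linarith⟩
    · exact .inr ⟨by linarith, by linarith⟩
  · have := caseG6 hp h1 h2 h3 h4 (by linarith) (by linarith) (by linarith) (by linarith)
    refine ⟨5, .inr <| .inl ⟨?_, ?_, ?_⟩⟩
    · rw [len_rotp, len_rotp]; exact h4.symm.trans h1
    · rw [len_rotp, len_rotp]; exact h2
    · rw [ang_rotp, ang_rotp, ang_rotp]
      change ang q 5 + ang q 0 + ang q 2 = _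
      rw [ht, ht, ht]; linarith
  · exact ⟨0, .inr <| .inr <| .inr ⟨by rw [q0, h1], by rw [q0, h2], by rw [q0, h3],
      by rw [q0, ht]; linarith, by rw [q0, ht]; linarith, by rw [q0, ht]; linarith⟩⟩

/-- A convex hexagon that tiles the plane has one of the three types. -/
theorem Tiles.exists_typed {ι : Type*} {F : ι → ℂ ≃ᵃⁱ[ℝ] ℂ} (hT : Tiles p F) :
    ∃ k, Typed (rotp p k) := by
  obtain ⟨G, hG⟩ := hT.exists_rel
  obtain ⟨k, i, h⟩ := exists_case hT.ccw hG
  obtain ⟨m, hm⟩ := typed_of_case (hT.ccw.rotp k) h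
  exact ⟨m + k, by rwa [rotp_rotp] at hm⟩

end HexTile

namespace HexTile

variable {p : Fin 6 → ℂ} {ι : Type*} {F : ι → ℂ ≃ᵃⁱ[ℝ] ℂ}

/-! ### Families of tiles sharing their sides -/

/-- The tiles `φ (Hex p)` and `ψ (Hex p)` share a side, which is side `i` of the former and side
`j` of the latter, and they lie on different sides of it. -/
structure Glued (p : Fin 6 → ℂ) (φ ψ : ℂ ≃ᵃⁱ[ℝ] ℂ) (i j : Fin 6) : Prop where
  side : (φ (p i) = ψ (p j) ∧ φ (p (i + 1)) = ψ (p (j + 1))) ∨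
    (φ (p i) = ψ (p (j + 1)) ∧ φ (p (i + 1)) = ψ (p j))
  opp : ∀ x, ed p i (φ.symm x) = -ed p j (ψ.symm x)

/-- Every side of every tile of the family is shared with another tile of the family. -/
def Adjacent (p : Fin 6 → ℂ) (F : ι → ℂ ≃ᵃⁱ[ℝ] ℂ) : Prop :=
  ∀ t i, ∃ t' j, Glued p (F t) (F t') i j

lemma exists_open_side (hp : CCW p) {x : ℂ} {i : Fin 6} (hi : ed p i x = 0)
    (hk : ∀ k, k ≠ i → 0 < ed p k x) :
    ∃ s : ℝ, 0 < s ∧ s < 1 ∧ x = (1 - s) • p i + s • p (i + 1) := by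
  have hx : x ∈ Hex p := (mem_Hex_iff hp).2 fun k => by
    by_cases h : k = i
    · rw [h, hi]
    · exact (hk k h).le
  obtain ⟨s, h0, h1, rfl⟩ := mem_edge hp hx hi
  refine ⟨s, h0.lt_of_ne ?_, h1.lt_of_ne ?_, rfl⟩
  · rintro rfl
    have := hk (i - 1) ((by decide : ∀ i : Fin 6, i - 1 ≠ i) i)
    have e := ed_succ p (i - 1)
    rw [sub_add_cancel] at e
    simp [e] at this
  · rintro rfl
    have := hk (i + 1) ((by decide : ∀ i : Fin 6, i + 1 ≠ i) i)
    simp [ed_self] at this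

lemma Glued.open_side (hp : CCW p) {φ ψ : ℂ ≃ᵃⁱ[ℝ] ℂ} {i j : Fin 6} (h : Glued p φ ψ i j) {x : ℂ}
    (hi : ed p i (φ.symm x) = 0) (hk : ∀ k, k ≠ i → 0 < ed p k (φ.symm x)) :
    ed p j (ψ.symm x) = 0 ∧ ∀ k, k ≠ j → 0 < ed p k (ψ.symm x) := by
  obtain ⟨s, h0, h1, hs⟩ := exists_open_side hp hi hk
  have hx : x = φ ((1 - s) • p i + s • p (i + 1)) := by rw [← hs]; simp
  rw [aff_comb] at hx
  rcases h.side with ⟨e1, e2⟩ | ⟨e1, e2⟩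
  · rw [e1, e2, ← aff_comb] at hx
    rw [hx, AffineIsometryEquiv.symm_apply_apply]
    exact side_interior hp j h0 h1
  · rw [e1, e2] at hx
    have : x = ψ ((1 - (1 - s)) • p j + (1 - s) • p (j + 1)) := by
      rw [aff_comb, hx, add_comm]; congr 2; ring
    rw [this, AffineIsometryEquiv.symm_apply_apply]
    exact side_interior hp j (by linarith) (by linarith)

lemma Glued.eventually (hp : CCW p) {φ ψ : ℂ ≃ᵃⁱ[ℝ] ℂ} {i j : Fin 6} (h : Glued p φ ψ i j) {x : ℂ}
    (hi : ed p i (φ.symm x) = 0) (hk : ∀ k, k ≠ i → 0 < ed p k (φ.symm x)) :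
    ∀ᶠ y in nhds x, φ.symm y ∈ Hex p ∨ ψ.symm y ∈ Hex p := by
  obtain ⟨-, hk'⟩ := h.open_side hp hi hk
  have key : ∀ (χ : ℂ ≃ᵃⁱ[ℝ] ℂ) (m : Fin 6), (∀ k, k ≠ m → 0 < ed p k (χ.symm x)) →
      ∀ᶠ y in nhds x, ∀ k, k ≠ m → 0 < ed p k (χ.symm y) := by
    intro χ m hm
    rw [Filter.eventually_all]
    intro k
    by_cases hkm : k = m
    · exact Filter.Eventually.of_forall fun y h => absurd hkm h
    · have hc : Continuous fun y => ed p k (χ.symm y) :=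
        (ed_continuous p k).comp χ.symm.continuous
      filter_upwards [hc.continuousAt.eventually (lt_mem_nhds (hm k hkm))] with y hy _ using hy
  filter_upwards [key φ i hk, key ψ j hk'] with y h1 h2
  rcases le_total 0 (ed p i (φ.symm y)) with h3 | h3
  · left
    refine (mem_Hex_iff hp).2 fun k => ?_
    by_cases h : k = i
    · rwa [h]
    · exact (h1 k h).le
  · right
    refine (mem_Hex_iff hp).2 fun k => ?_
    by_cases h' : k = j
    · rw [h']; have := h.opp y; linarith
    · exact (h2 k h').le

/-- A nonempty family in which all sides are shared covers the plane, if its union is closed: off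
the countable set of corners, whose complement is connected, the union is also open. -/
lemma Adjacent.cover [Countable ι] [Nonempty ι] (hp : CCW p) (hF : Adjacent p F)
    (hcl : IsClosed {x | ∃ t, (F t).symm x ∈ Hex p}) (x : ℂ) : ∃ t, (F t).symm x ∈ Hex p := by
  set A := {x | ∃ t, (F t).symm x ∈ Hex p} with hA
  set V := Set.range fun a : ι × Fin 6 => F a.1 (p a.2) with hV
  have hVc : V.Countable := Set.countable_range _
  have hconn : IsPreconnected Vᶜ :=
    (hVc.isPathConnected_compl_of_one_lt_rank (by
      rw [Complex.rank_real_complex]; norm_num)).isConnected.isPreconnected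
  have hsub : Vᶜ ⊆ interior A ∪ Aᶜ := by
    intro y hy
    by_cases hyA : y ∈ A
    · left
      obtain ⟨t, ht⟩ := hyA
      rw [mem_interior_iff_mem_nhds]
      rcases trichotomy hp ht with h | ⟨i, hi, hk⟩ | ⟨i, hi⟩
      · have : ∀ᶠ z in nhds y, (F t).symm z ∈ interior (Hex p) :=
          (F t).symm.continuous.continuousAt.eventually (isOpen_interior.mem_nhds h)
        filter_upwards [this] with z hz using ⟨t, interior_subset hz⟩
      · obtain ⟨t', j, hg⟩ := hF t i
        filter_upwards [hg.eventually hp hi hk] with z hz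
        rcases hz with hz | hz
        · exact ⟨_, hz⟩
        · exact ⟨_, hz⟩
      · exact absurd ⟨(t, i), by simp [← hi]⟩ hy
    · exact Or.inr hyA
  have hne : (Vᶜ ∩ interior A).Nonempty := by
    obtain ⟨t⟩ := ‹Nonempty ι›
    have hop : IsOpen ((F t).symm ⁻¹' interior (Hex p)) :=
      isOpen_interior.preimage (F t).symm.continuous
    have hn : ((F t).symm ⁻¹' interior (Hex p)).Nonempty := by
      obtain ⟨z, hz⟩ := interior_Hex_nonempty hp
      exact ⟨F t z, by simpa using hz⟩
    obtain ⟨z, hz1, hz2⟩ := (hVc.dense_compl ℝ).inter_open_nonempty _ hop hn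
    refine ⟨z, hz2, mem_interior.2 ⟨_, ?_, hop, hz1⟩⟩
    exact fun w hw => ⟨t, interior_subset hw⟩
  have hVA : Vᶜ ⊆ interior A := hconn.subset_left_of_subset_union isOpen_interior
    hcl.isOpen_compl (Set.disjoint_compl_right_iff_subset.2 interior_subset) hsub hne
  have : closure Vᶜ ⊆ A := closure_minimal (hVA.trans interior_subset) hcl
  exact this ((hVc.dense_compl ℝ) x)

/-- In a tiling all of whose sides are shared, distinct tiles are disjoint or meet in a common
corner or in a common side. -/
lemma Tiles.edge_to_edge (hT : Tiles p F) (hF : Adjacent p F) {s t : ι} (hst : s ≠ t) :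
    (∀ x, (F s).symm x ∈ Hex p → (F t).symm x ∉ Hex p) ∨
    (∃ i j, F s (p i) = F t (p j) ∧
      ∀ x, (F s).symm x ∈ Hex p ∧ (F t).symm x ∈ Hex p ↔ x = F s (p i)) ∨
    (∃ i j, Glued p (F s) (F t) i j ∧
      ∀ x, (F s).symm x ∈ Hex p ∧ (F t).symm x ∈ Hex p ↔
        x ∈ segment ℝ (F s (p i)) (F s (p (i + 1)))) := by
  have hp := hT.ccw
  have hnb : ∀ {s t : ι}, s ≠ t → ∀ x i, ed p i ((F s).symm x) = 0 →
      (∀ k, k ≠ i → 0 < ed p k ((F s).symm x)) → (F t).symm x ∈ Hex p →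
      ∃ j, Glued p (F s) (F t) i j := by
    intro s t hst x i hi hk hx
    obtain ⟨t', j, hg⟩ := hF s i
    have hev := hg.eventually hp hi hk
    have hmem : x ∈ closure ((F t).symm ⁻¹' interior (Hex p)) := by
      have := (F t).toHomeomorph.image_closure (interior (Hex p))
      have h2 : x ∈ F t '' closure (interior (Hex p)) :=
        ⟨_, mem_closure_interior hp hx, by simp⟩
      have h3 : F t '' closure (interior (Hex p)) = closure (F t '' interior (Hex p)) := this
      rw [h3] at h2
      refine closure_mono ?_ h2
      rintro _ ⟨z, hz, rfl⟩
      simpa using hz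
    obtain ⟨y, hy1, hy2⟩ := mem_closure_iff_nhds.1 hmem _ hev
    rcases hy1 with hy1 | hy1
    · exact absurd (hT.eq_of_interior hy1 hy2).symm hst
    · rw [hT.eq_of_interior hy1 hy2]; exact ⟨j, hg⟩
  have hni : ∀ {s t : ι}, s ≠ t → ∀ x, (F s).symm x ∈ interior (Hex p) → (F t).symm x ∉ Hex p :=
    fun hst x h1 h2 => hst (hT.eq_of_interior h2 h1)
  by_cases hE : ∃ x i, ed p i ((F s).symm x) = 0 ∧ (∀ k, k ≠ i → 0 < ed p k ((F s).symm x)) ∧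
      (F t).symm x ∈ Hex p
  · right; right
    obtain ⟨x, i, hi, hk, hx⟩ := hE
    obtain ⟨j, hg⟩ := hnb hst x i hi hk hx
    refine ⟨i, j, hg, fun y => ⟨fun ⟨h1, h2⟩ => ?_, fun h => ?_⟩⟩
    · have e1 := (mem_Hex_iff hp).1 h1 i
      have e2 := (mem_Hex_iff hp).1 h2 j
      have e3 := hg.opp y
      obtain ⟨r, r0, r1, hr⟩ := mem_edge hp h1 (by linarith : ed p i ((F s).symm y) = 0)
      have hy : y = F s ((1 - r) • p i + r • p (i + 1)) := by rw [← hr]; simp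
      rw [hy, aff_comb]
      exact ⟨1 - r, r, by linarith, r0, by ring, rfl⟩
    · obtain ⟨a, b, ha, hb, hab, rfl⟩ := h
      obtain rfl : a = 1 - b := by linarith
      constructor
      · rw [← aff_comb, AffineIsometryEquiv.symm_apply_apply]
        exact comb_mem_Hex _ _ hb (by linarith)
      · rcases hg.side with ⟨e1, e2⟩ | ⟨e1, e2⟩
        · rw [e1, e2, ← aff_comb, AffineIsometryEquiv.symm_apply_apply]
          exact comb_mem_Hex _ _ hb (by linarith)
        · rw [e1, e2, ← aff_comb, AffineIsometryEquiv.symm_apply_apply]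
          exact comb_mem_Hex _ _ hb (by linarith)
  · have hv : ∀ x, (F s).symm x ∈ Hex p → (F t).symm x ∈ Hex p →
        ∃ i j, x = F s (p i) ∧ x = F t (p j) := by
      intro x h1 h2
      rcases trichotomy hp h1 with h | ⟨i, hi, hk⟩ | ⟨i, hi⟩
      · exact absurd h2 (hni hst x h)
      · exact absurd ⟨x, i, hi, hk, h2⟩ hE
      · rcases trichotomy hp h2 with h | ⟨j, hj, hk⟩ | ⟨j, hj⟩
        · exact absurd h1 (hni hst.symm x h)
        · obtain ⟨m, hg⟩ := hnb hst.symm x j hj hk h1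
          have := hg.open_side hp hj hk
          exact absurd ⟨x, m, this.1, this.2, h2⟩ hE
        · exact ⟨i, j, by rw [← hi]; simp, by rw [← hj]; simp⟩
    by_cases hne : ∃ x, (F s).symm x ∈ Hex p ∧ (F t).symm x ∈ Hex p
    · right; left
      obtain ⟨x, h1, h2⟩ := hne
      obtain ⟨i, j, hi, hj⟩ := hv x h1 h2
      refine ⟨i, j, hi.symm.trans hj, fun y => ⟨fun ⟨h3, h4⟩ => ?_, ?_⟩⟩
      · by_contra hxy
        rw [← hi] at hxy
        -- a nondegenerate segment is infinite, but all common points are corners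
        have hseg : segment ℝ x y ⊆ Set.range fun i => F s (p i) := by
          rintro z ⟨a, b, ha, hb, hab, rfl⟩
          obtain rfl : a = 1 - b := by linarith
          obtain ⟨k, -, hk, -⟩ := hv ((1 - b) • x + b • y)
            (by rw [aff_comb]; exact Hex_convex p h1 h3 ha hb hab)
            (by rw [aff_comb]; exact Hex_convex p h2 h4 ha hb hab)
          exact ⟨k, hk.symm⟩
        have hinf : (segment ℝ x y).Infinite := by
          rw [segment_eq_image_lineMap]
          exact (Set.Icc_infinite one_pos).image
            ((AffineMap.lineMap_injective ℝ (Ne.symm hxy)).injOn)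
        exact hinf ((Set.finite_range _).subset hseg)
      · rintro rfl
        rw [← hi]; exact ⟨h1, h2⟩
    · left
      exact fun x h1 h2 => hne ⟨x, h1, h2⟩

end HexTile

namespace HexTile

open MeasureTheory
open scoped Pointwise

/-! ### Lattices of tiles and areas -/

/-- A countable cover whose total measure does not exceed that of the covered set is almost
disjoint. -/
lemma measure_inter_eq_zero_of_tsum_le {α ι : Type*} [MeasurableSpace α] {μ : Measure α}
    [Countable ι] {A : ι → Set α} (hA : ∀ i, MeasurableSet (A i)) {D : Set α} (hD : μ D ≠ ⊤)
    (hcov : D ⊆ ⋃ i, A i) (hsum : ∑' i, μ (A i) ≤ μ D) {s t : ι} (hst : s ≠ t) :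
    μ (A s ∩ A t) = 0 := by
  classical
  let B : ι → Set α := fun i => if i = s then A s \ A t else A i
  have h1 : D ⊆ ⋃ i, B i := by
    intro x hx
    obtain ⟨i, hi⟩ := Set.mem_iUnion.1 (hcov hx)
    by_cases h : i = s
    · by_cases ht : x ∈ A t
      · exact Set.mem_iUnion.2 ⟨t, by simp [B, Ne.symm hst, ht]⟩
      · exact Set.mem_iUnion.2 ⟨s, by simp only [B, if_pos]; exact ⟨h ▸ hi, ht⟩⟩
    · exact Set.mem_iUnion.2 ⟨i, by simp [B, h, hi]⟩
  have h2 : μ D ≤ ∑' i, μ (B i) := (measure_mono h1).trans (measure_iUnion_le _)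
  have h3 : ∀ i, μ (A i) = μ (B i) + if i = s then μ (A s ∩ A t) else 0 := by
    intro i
    by_cases h : i = s
    · subst h
      simp only [B, if_pos]
      rw [add_comm, measure_inter_add_sdiff _ (hA t)]
    · simp [B, h]
  have h4 : ∑' i, μ (A i) = ∑' i, μ (B i) + μ (A s ∩ A t) := by
    rw [tsum_congr h3, ENNReal.tsum_add, tsum_ite_eq]
  rw [h4] at hsum
  have h5 : ∑' i, μ (B i) ≠ ⊤ := ne_top_of_le_ne_top hD (le_self_add.trans hsum)
  have h6 := hsum.trans h2
  by_contra h0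
  exact absurd h6 (not_le.2 (ENNReal.lt_add_right h5 h0))

variable {p : Fin 6 → ℂ} {J : Type*}

/-- The lattice spanned by a basis of the plane. -/
abbrev Lat (b : Module.Basis (Fin 2) ℝ ℂ) : Submodule ℤ ℂ := Submodule.span ℤ (Set.range b)

/-- All translates of the isometries `F j` by the vectors of a lattice. -/
def latFam (b : Module.Basis (Fin 2) ℝ ℂ) (F : J → ℂ ≃ᵃⁱ[ℝ] ℂ) (t : J × Lat b) : ℂ ≃ᵃⁱ[ℝ] ℂ :=
  (F t.1).trans (AffineIsometryEquiv.constVAdd ℝ ℂ (t.2 : ℂ))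

lemma latFam_apply (b : Module.Basis (Fin 2) ℝ ℂ) (F : J → ℂ ≃ᵃⁱ[ℝ] ℂ) (t : J × Lat b) (x : ℂ) :
    latFam b F t x = t.2 + F t.1 x := by simp [latFam]

lemma latFam_symm (b : Module.Basis (Fin 2) ℝ ℂ) (F : J → ℂ ≃ᵃⁱ[ℝ] ℂ) (t : J × Lat b) (x : ℂ) :
    (latFam b F t).symm x = (F t.1).symm (-t.2 + x) := by
  rw [AffineIsometryEquiv.symm_apply_eq, latFam_apply]; simp

lemma latFam_closed [Finite J] (b : Module.Basis (Fin 2) ℝ ℂ) (F : J → ℂ ≃ᵃⁱ[ℝ] ℂ) :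
    IsClosed {x | ∃ t, (latFam b F t).symm x ∈ Hex p} := by
  have : {x | ∃ t, (latFam b F t).symm x ∈ Hex p} =
      ⋃ j, ((Lat b : Set ℂ) + (F j) '' Hex p) := by
    ext x
    simp only [Set.mem_ofPred_eq, Prod.exists, Set.mem_iUnion, Set.mem_add, latFam_symm]
    constructor
    · rintro ⟨j, l, h⟩
      exact ⟨j, l, l.2, -l + x, ⟨_, h, by simp⟩, by simp⟩
    · rintro ⟨j, l, hl, _, ⟨y, hy, rfl⟩, rfl⟩
      exact ⟨j, ⟨l, hl⟩, by simpa using hy⟩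
  rw [this]
  refine isClosed_iUnion_of_finite fun j => IsClosed.add_right_of_isCompact ?_ ?_
  · exact AddSubgroup.isClosed_of_discrete (H := (Lat b).toAddSubgroup)
  · exact (Hex_compact p).image (F j).continuous

/-- If a lattice family covers the plane, and its tiles have total area per cell at most that of a
cell, then it is a tiling. -/
lemma latFam_tiles [Fintype J] (hp : CCW p) (b : Module.Basis (Fin 2) ℝ ℂ)
    (F : J → ℂ ≃ᵃⁱ[ℝ] ℂ) (hcov : ∀ x, ∃ t, (latFam b F t).symm x ∈ Hex p)
    (hvol : Fintype.card J * volume (Hex p) ≤ volume (ZSpan.fundamentalDomain b)) :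
    Tiles p (latFam b F) := by
  refine ⟨hp, hcov, ?_⟩
  have hfd : IsAddFundamentalDomain (Lat b).toAddSubgroup (ZSpan.fundamentalDomain b) volume :=
    ZSpan.isAddFundamentalDomain' b volume
  have : Countable (Lat b).toAddSubgroup := inferInstanceAs (Countable (Lat b))
  set D := ZSpan.fundamentalDomain b with hDdef
  have hDm : MeasurableSet D := ZSpan.fundamentalDomain_measurableSet b
  have hDf : volume D ≠ ⊤ :=
    ((ZSpan.fundamentalDomain_isBounded b).measure_lt_top).ne
  let A : J × Lat b → Set ℂ := fun t => (latFam b F t).symm ⁻¹' (Hex p) ∩ D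
  have hHm : MeasurableSet (Hex p) := (Hex_compact p).isClosed.measurableSet
  have hAm : ∀ t, MeasurableSet (A t) := fun t =>
    ((latFam b F t).symm.continuous.measurable hHm).inter hDm
  have hsum : ∑' t, volume (A t) ≤ volume D := by
    refine le_trans (le_of_eq ?_) hvol
    rw [ENNReal.tsum_prod', tsum_fintype]
    have : ∀ j, ∑' l : Lat b, volume (A (j, l)) = volume (Hex p) := by
      intro j
      have h1 := hfd.measure_eq_tsum ((F j).symm ⁻¹' Hex p)
      rw [aff_volume_preimage] at h1
      rw [h1]
      refine tsum_congr fun l => ?_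
      congr 2
      ext x
      change (latFam b F (j, l)).symm x ∈ Hex p ∧ x ∈ D ↔ _
      rw [latFam_symm, Set.mem_inter_iff, Set.mem_vadd_set_iff_neg_vadd_mem]
      rfl
    rw [Finset.sum_congr rfl fun j _ => this j]
    simp
  intro s t x hs ht
  by_contra hne
  let U : Set ℂ := (latFam b F s).symm ⁻¹' interior (Hex p) ∩
    (latFam b F t).symm ⁻¹' interior (Hex p)
  have hU : IsOpen U := (isOpen_interior.preimage (latFam b F s).symm.continuous).inter
    (isOpen_interior.preimage (latFam b F t).symm.continuous)
  have hU0 : volume U ≠ 0 := (hU.measure_pos _ ⟨x, hs, ht⟩).ne'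
  apply hU0
  rw [hfd.measure_eq_tsum U, ENNReal.tsum_eq_zero]
  intro l
  let s' : J × Lat b := (s.1, ⟨l + s.2, add_mem l.2 s.2.2⟩)
  let t' : J × Lat b := (t.1, ⟨l + t.2, add_mem l.2 t.2.2⟩)
  have hne' : s' ≠ t' := by
    intro h
    apply hne
    have h1 : s.1 = t.1 := (congrArg Prod.fst h : s'.1 = t'.1)
    have h2 : (l : ℂ) + s.2 = l + t.2 := congrArg (fun q : J × Lat b => (q.2 : ℂ)) h
    exact Prod.ext h1 (Subtype.ext (add_left_cancel h2))
  refine measure_mono_null ?_ (measure_inter_eq_zero_of_tsum_le hAm hDf ?_ hsum hne')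
  · rintro y ⟨hy, hyD⟩
    rw [Set.mem_vadd_set_iff_neg_vadd_mem] at hy
    obtain ⟨h1, h2⟩ := hy
    have e : ∀ q : J × Lat b, -((l : ℂ) + q.2) + y = -q.2 + (-l + y) := fun q => by ring
    refine ⟨⟨?_, hyD⟩, ⟨?_, hyD⟩⟩
    · rw [Set.mem_preimage, latFam_symm] at h1 ⊢
      exact interior_subset (by rw [e s]; exact h1)
    · rw [Set.mem_preimage, latFam_symm] at h2 ⊢
      exact interior_subset (by rw [e t]; exact h2)
  · intro y hy
    obtain ⟨q, hq⟩ := hcov y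
    exact Set.mem_iUnion.2 ⟨q, hq, hy⟩

end HexTile

namespace HexTile

open MeasureTheory

lemma cr_comb (a b : ℂ) (x y : ℝ) : cr a (x • a + y • b) = y * cr a b := by
  simp [cr]; ring

lemma linearIndependent_of_cr {v w : ℂ} (h : cr v w ≠ 0) : LinearIndependent ℝ ![v, w] := by
  rw [LinearIndependent.pair_iff]
  intro s t hst
  have ht : t = 0 := by
    have := cr_comb v w s t
    have h3 : cr v 0 = 0 := by simp [cr]
    rw [hst, h3] at this
    simpa [h] using this.symm
  have hs : s = 0 := by
    have := cr_comb w v t s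
    rw [add_comm, hst] at this
    have h2 : cr w v ≠ 0 := fun h2 => h (by simp only [cr] at h2 ⊢; linarith)
    have h3 : cr w 0 = 0 := by simp [cr]
    rw [h3] at this
    simpa [h2] using this.symm
  exact ⟨hs, ht⟩

/-- The basis of the plane formed by two linearly independent vectors. -/
def crBasis (v w : ℂ) (h : cr v w ≠ 0) : Module.Basis (Fin 2) ℝ ℂ :=
  basisOfLinearIndependentOfCardEqFinrank (linearIndependent_of_cr h)
    (by simp [Complex.finrank_real_complex])

lemma coe_crBasis (v w : ℂ) (h : cr v w ≠ 0) : ⇑(crBasis v w h) = ![v, w] := by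
  simp [crBasis]

lemma volume_crBasis (v w : ℂ) (h : cr v w ≠ 0) :
    volume (ZSpan.fundamentalDomain (crBasis v w h)) = ENNReal.ofReal |cr v w| := by
  rw [ZSpan.measure_fundamentalDomain _ volume Complex.orthonormalBasisOneI.toBasis,
    measure_congr (ZSpan.fundamentalDomain_ae_parallelepiped _ volume),
    OrthonormalBasis.coe_toBasis, OrthonormalBasis.volume_parallelepiped, mul_one, coe_crBasis,
    Module.Basis.det_apply, Matrix.det_fin_two]
  simp [Module.Basis.toMatrix_apply, cr, mul_comm]

lemma volume_triangle_le {a b : ℂ} (h : cr a b ≠ 0) (q : ℂ) :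
    2 * volume {z | ∃ x y : ℝ, 0 ≤ x ∧ 0 ≤ y ∧ x + y ≤ 1 ∧ z = q + (x • a + y • b)} ≤
      ENNReal.ofReal |cr a b| := by
  set T : Set ℂ := {z | ∃ x y : ℝ, 0 ≤ x ∧ 0 ≤ y ∧ x + y ≤ 1 ∧ z = x • a + y • b} with hTd
  have hq : volume {z | ∃ x y : ℝ, 0 ≤ x ∧ 0 ≤ y ∧ x + y ≤ 1 ∧ z = q + (x • a + y • b)} =
      volume T := by
    rw [← aff_volume_preimage (AffineIsometryEquiv.constVAdd ℝ ℂ q).symm T]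
    congr 1
    ext z
    have e : (AffineIsometryEquiv.constVAdd ℝ ℂ q).symm z = -q + z := by
      rw [AffineIsometryEquiv.symm_apply_eq]; simp
    rw [Set.mem_preimage, e, hTd]
    simp only [Set.mem_ofPred_eq, neg_add_eq_iff_eq_add]
  rw [hq]
  set P : Set ℂ := parallelepiped (crBasis a b h)
  have hP : volume P = ENNReal.ofReal |cr a b| := by
    rw [← volume_crBasis a b h, measure_congr (ZSpan.fundamentalDomain_ae_parallelepiped _ volume)]
  have memP : ∀ x y : ℝ, 0 ≤ x → 0 ≤ y → x ≤ 1 → y ≤ 1 → x • a + y • b ∈ P := by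
    intro x y hx hy hx1 hy1
    rw [mem_parallelepiped_iff]
    refine ⟨![x, y], ⟨?_, ?_⟩, ?_⟩
    · intro i; fin_cases i <;> simpa
    · intro i; fin_cases i <;> simpa
    · simp [coe_crBasis]
  -- the half-plane `x + y < 1`, in the coordinates given by `a` and `b`
  let f : ℂ → ℝ := fun z => (cr z b + cr a z) / cr a b
  have hf : ∀ x y : ℝ, f (x • a + y • b) = x + y := by
    intro x y
    have : cr (x • a + y • b) b + cr a (x • a + y • b) = (x + y) * cr a b := by
      simp [cr]; ring
    simp only [f]
    rw [this, mul_div_assoc, div_self h, mul_one]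
  have hfc : Continuous f := by
    simp only [f, cr]; fun_prop
  have hU : MeasurableSet {z | f z < 1} := (isOpen_lt hfc continuous_const).measurableSet
  -- the reflection exchanging the two triangles of the parallelogram
  let ρ : ℂ ≃ᵃⁱ[ℝ] ℂ := AffineIsometryEquiv.pointReflection ℝ ((1 / 2 : ℝ) • (a + b))
  have hρ : ∀ z, ρ z = a + b - z := by
    intro z
    simp only [ρ, AffineIsometryEquiv.pointReflection_apply]
    simp only [vsub_eq_sub, vadd_eq_add, Complex.real_smul]
    push_cast
    ring
  set E := T ∩ {z | f z < 1}
  have hline : volume (T \ {z | f z < 1}) = 0 := by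
    refine measure_mono_null (t := (line[ℝ, a, b] : Set ℂ)) ?_
      (Measure.addHaar_affineSubspace volume _ ?_)
    · rintro z ⟨⟨x, y, hx, hy, hxy, rfl⟩, hz⟩
      rw [Set.mem_ofPred_eq, hf] at hz
      have e : x = 1 - y := by linarith
      refine (AffineSubspace.mem_coe _ _).2 (mem_affineSpan_pair_iff_exists_lineMap_eq.2 ⟨y, ?_⟩)
      rw [AffineMap.lineMap_apply_module, e]
    · intro htop
      have h0 : (0 : ℂ) ∈ line[ℝ, a, b] := by rw [htop]; trivial
      obtain ⟨r, hr⟩ := mem_affineSpan_pair_iff_exists_lineMap_eq.1 h0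
      rw [AffineMap.lineMap_apply_module] at hr
      have := hf (1 - r) r
      rw [hr] at this
      simp [f, cr] at this
  have hTE : volume T ≤ volume E := by
    rw [← measure_inter_add_sdiff T hU, hline, add_zero]
  have h1 : volume E ≤ volume (P ∩ {z | f z < 1}) := by
    apply measure_mono
    rintro z ⟨⟨x, y, hx, hy, hxy, rfl⟩, hz⟩
    exact ⟨memP x y hx hy (by linarith) (by linarith), hz⟩
  have h2 : volume E ≤ volume (P \ {z | f z < 1}) := by
    rw [← aff_volume_preimage ρ E]
    apply measure_mono
    rintro z ⟨⟨x, y, hx, hy, hxy, e⟩, hz⟩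
    have e2 : z = (1 - x) • a + (1 - y) • b := by
      rw [hρ] at e
      rw [sub_smul, sub_smul, one_smul, one_smul]
      linear_combination -e
    rw [Set.mem_ofPred_eq, e, hf] at hz
    rw [e2]
    refine ⟨memP _ _ (by linarith) (by linarith) (by linarith) (by linarith), ?_⟩
    rw [Set.mem_ofPred_eq, hf]; linarith
  calc 2 * volume T ≤ volume E + volume E := by rw [two_mul]; gcongr
    _ ≤ volume (P ∩ {z | f z < 1}) + volume (P \ {z | f z < 1}) := by gcongr
    _ = ENNReal.ofReal |cr a b| := by rw [measure_inter_add_sdiff P hU, hP]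

/-- Twice the area of the hexagon, summed over the triangles with apex `p 0`. -/
def shoe (p : Fin 6 → ℂ) : ℝ :=
  cr (p 1 - p 0) (p 2 - p 0) + cr (p 2 - p 0) (p 3 - p 0) + cr (p 3 - p 0) (p 4 - p 0) +
    cr (p 4 - p 0) (p 5 - p 0)

variable {p : Fin 6 → ℂ}

lemma fan_pos (hp : CCW p) (k : Fin 6) (h0 : k ≠ 0) (h5 : k ≠ 5) :
    0 < cr (p k - p 0) (p (k + 1) - p 0) := by
  have := hp k 0 h0.symm ((by decide : ∀ k : Fin 6, k ≠ 5 → 0 ≠ k + 1) k h5)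
  convert this using 1
  simp only [ed, cr, Complex.sub_re, Complex.sub_im]; ring

lemma shoe_pos (hp : CCW p) : 0 < shoe p := by
  have h1 := fan_pos hp 1 (by decide) (by decide)
  have h2 := fan_pos hp 2 (by decide) (by decide)
  have h3 := fan_pos hp 3 (by decide) (by decide)
  have h4 := fan_pos hp 4 (by decide) (by decide)
  have := add_pos (add_pos (add_pos h1 h2) h3) h4
  exact this

lemma volume_Hex_le (hp : CCW p) : 2 * volume (Hex p) ≤ ENNReal.ofReal (shoe p) := by
  let T : Fin 6 → Set ℂ := fun k => {z | ∃ x y : ℝ, 0 ≤ x ∧ 0 ≤ y ∧ x + y ≤ 1 ∧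
    z = p 0 + (x • (p k - p 0) + y • (p (k + 1) - p 0))}
  have hsub : Hex p ⊆ T 1 ∪ T 2 ∪ T 3 ∪ T 4 := by
    intro z hz
    obtain ⟨k, hk, u, v, w, hu, hv, hw, hs, rfl⟩ := mem_fan hp ((mem_Hex_iff hp).1 hz)
    have : u • p 0 + v • p k + w • p (k + 1) ∈ T k := by
      refine ⟨v, w, hv, hw, by linarith, ?_⟩
      have e : u = 1 - v - w := by linarith
      rw [e]; module
    rcases hk with rfl | rfl | rfl | rfl
    · exact Or.inl (Or.inl (Or.inl this))
    · exact Or.inl (Or.inl (Or.inr this))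
    · exact Or.inl (Or.inr this)
    · exact Or.inr this
  have hT : ∀ k : Fin 6, k ≠ 0 → k ≠ 5 →
      2 * volume (T k) ≤ ENNReal.ofReal (cr (p k - p 0) (p (k + 1) - p 0)) := by
    intro k h0 h5
    have hc := fan_pos hp k h0 h5
    have := volume_triangle_le hc.ne' (p 0)
    rwa [abs_of_pos hc] at this
  have h1 := fan_pos hp 1 (by decide) (by decide)
  have h2 := fan_pos hp 2 (by decide) (by decide)
  have h3 := fan_pos hp 3 (by decide) (by decide)
  have h4 := fan_pos hp 4 (by decide) (by decide)
  have hvol : volume (Hex p) ≤ volume (T 1) + volume (T 2) + volume (T 3) + volume (T 4) := by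
    refine (measure_mono hsub).trans ((measure_union_le _ _).trans ?_)
    gcongr
    refine (measure_union_le _ _).trans ?_
    gcongr
    exact measure_union_le _ _
  calc 2 * volume (Hex p) ≤ 2 * (volume (T 1) + volume (T 2) + volume (T 3) + volume (T 4)) := by
        gcongr
    _ = 2 * volume (T 1) + 2 * volume (T 2) + 2 * volume (T 3) + 2 * volume (T 4) := by ring
    _ ≤ ENNReal.ofReal (cr (p 1 - p 0) (p (1 + 1) - p 0)) +
        ENNReal.ofReal (cr (p 2 - p 0) (p (2 + 1) - p 0)) +
        ENNReal.ofReal (cr (p 3 - p 0) (p (3 + 1) - p 0)) +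
        ENNReal.ofReal (cr (p 4 - p 0) (p (4 + 1) - p 0)) := by
        have g1 := hT 1 (by decide) (by decide)
        have g2 := hT 2 (by decide) (by decide)
        have g3 := hT 3 (by decide) (by decide)
        have g4 := hT 4 (by decide) (by decide)
        gcongr
    _ = ENNReal.ofReal (shoe p) := by
        rw [← ENNReal.ofReal_add h1.le h2.le, ← ENNReal.ofReal_add (add_pos h1 h2).le h3.le,
          ← ENNReal.ofReal_add (add_pos (add_pos h1 h2) h3).le h4.le]
        rfl

/-- A lattice family of tiles in which each of the finitely many representatives is glued along
all its sides, and with a cell of at least the right area, is a tiling. -/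
theorem tiles_of_glued {J : Type*} [Fintype J] [Nonempty J] (hp : CCW p) {v w : ℂ}
    (h : cr v w ≠ 0) (F : J → ℂ ≃ᵃⁱ[ℝ] ℂ)
    (hF : ∀ j i, ∃ j' i', ∃ m n : ℤ, Glued p (F j)
      ((F j').trans (AffineIsometryEquiv.constVAdd ℝ ℂ (m * v + n * w : ℂ))) i i')
    (hvol : Fintype.card J * shoe p ≤ 2 * |cr v w|) :
    Tiles p (latFam (crBasis v w h) F) ∧ Adjacent p (latFam (crBasis v w h) F) := by
  have hadj : Adjacent p (latFam (crBasis v w h) F) := by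
    rintro ⟨j, l⟩ i
    obtain ⟨j', i', m, n, hg⟩ := hF j i
    have hmem : (m * v + n * w : ℂ) ∈ Lat (crBasis v w h) := by
      have hv : v ∈ Lat (crBasis v w h) :=
        Submodule.subset_span ⟨0, by simp [coe_crBasis]⟩
      have hw : w ∈ Lat (crBasis v w h) :=
        Submodule.subset_span ⟨1, by simp [coe_crBasis]⟩
      have := add_mem (Submodule.smul_mem _ m hv) (Submodule.smul_mem _ n hw)
      simpa using this
    refine ⟨(j', l + ⟨_, hmem⟩), i', ⟨?_, ?_⟩⟩
    · have := hg.side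
      simp only [latFam_apply]
      simp only [AffineIsometryEquiv.coe_trans, Function.comp_apply,
        AffineIsometryEquiv.coe_constVAdd, vadd_eq_add, Submodule.coe_add] at this ⊢
      simp only [add_assoc, add_right_inj] at this ⊢
      exact this
    · intro x
      have := hg.opp (-l + x)
      simp only [latFam_symm]
      rw [this]
      congr 2
      rw [AffineIsometryEquiv.symm_apply_eq]
      simp only [AffineIsometryEquiv.coe_trans, Function.comp_apply,
        AffineIsometryEquiv.coe_constVAdd, vadd_eq_add, Submodule.coe_add,
        AffineIsometryEquiv.apply_symm_apply]
      ring
  refine ⟨latFam_tiles hp _ F (hadj.cover hp (latFam_closed _ F)) ?_, hadj⟩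
  rw [volume_crBasis]
  have h2 : 2 * (Fintype.card J * volume (Hex p)) ≤ 2 * ENNReal.ofReal |cr v w| := by
    calc 2 * (Fintype.card J * volume (Hex p)) = Fintype.card J * (2 * volume (Hex p)) := by ring
      _ ≤ Fintype.card J * ENNReal.ofReal (shoe p) := by gcongr; exact volume_Hex_le hp
      _ = ENNReal.ofReal (Fintype.card J * shoe p) := by
        rw [ENNReal.ofReal_mul (by positivity), ENNReal.ofReal_natCast]
      _ ≤ ENNReal.ofReal (2 * |cr v w|) := ENNReal.ofReal_le_ofReal hvol
      _ = 2 * ENNReal.ofReal |cr v w| := by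
        rw [ENNReal.ofReal_mul (by norm_num)]; norm_num
  exact (ENNReal.mul_le_mul_iff_right (by norm_num) (by norm_num)).1 h2

end HexTile

namespace HexTile

open MeasureTheory

/-! ### Gluing isometries -/

/-- The isometry `φ` multiplies signed areas by `ε`. -/
def Orient (φ : ℂ ≃ᵃⁱ[ℝ] ℂ) (ε : ℝ) : Prop :=
  ∀ a b c, cr (φ a - φ c) (φ b - φ c) = ε * cr (a - c) (b - c)

lemma normSq_eq {u : ℂ} (hu : ‖u‖ = 1) : u.re * u.re + u.im * u.im = 1 := by
  have := Complex.normSq_eq_norm_sq u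
  rw [hu, Complex.normSq_apply] at this
  linarith

lemma orient_rot (x u : ℂ) (hu : ‖u‖ = 1) : Orient (rot x u hu) 1 := by
  intro a b c
  have h := normSq_eq hu
  simp only [rot_apply, cr, Complex.sub_re, Complex.sub_im, Complex.add_re, Complex.add_im,
    Complex.mul_re, Complex.mul_im]
  linear_combination ((a.re - c.re) * (b.im - c.im) - (a.im - c.im) * (b.re - c.re)) * h

/-- The orientation-reversing isometry `z ↦ x + u * conj z`. -/
def refl (x u : ℂ) (hu : ‖u‖ = 1) : ℂ ≃ᵃⁱ[ℝ] ℂ :=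
  Complex.conjLIE.toAffineIsometryEquiv.trans (rot x u hu)

lemma refl_apply (x u : ℂ) (hu : ‖u‖ = 1) (z : ℂ) :
    refl x u hu z = x + u * (starRingEnd ℂ) z := by
  simp [refl, rot_apply]

lemma orient_refl (x u : ℂ) (hu : ‖u‖ = 1) : Orient (refl x u hu) (-1) := by
  intro a b c
  have h := normSq_eq hu
  simp only [refl_apply, cr, Complex.sub_re, Complex.sub_im, Complex.add_re, Complex.add_im,
    Complex.mul_re, Complex.mul_im, Complex.conj_re, Complex.conj_im]
  linear_combination (-(a.re - c.re) * (b.im - c.im) + (a.im - c.im) * (b.re - c.re)) * h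

variable {p : Fin 6 → ℂ}

lemma Orient.ed_symm {φ : ℂ ≃ᵃⁱ[ℝ] ℂ} {ε : ℝ} (h : Orient φ ε) (i : Fin 6) (x : ℂ) :
    cr (φ (p (i + 1)) - φ (p i)) (x - φ (p i)) = ε * ed p i (φ.symm x) := by
  have := h (p (i + 1)) (φ.symm x) (p i)
  rwa [AffineIsometryEquiv.apply_symm_apply] at this

/-- The identity, as a rotation. -/
def one : ℂ ≃ᵃⁱ[ℝ] ℂ := rot 0 1 (by simp)

lemma one_apply (z : ℂ) : one z = z := by simp [one, rot_apply]

lemma one_symm (z : ℂ) : one.symm z = z := by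
  rw [AffineIsometryEquiv.symm_apply_eq, one_apply]

/-- An orientation-preserving isometry that reverses a side glues. -/
lemma glued_swap {g : ℂ ≃ᵃⁱ[ℝ] ℂ} (hg : Orient g 1) {i j : Fin 6} (h1 : p i = g (p (j + 1)))
    (h2 : p (i + 1) = g (p j)) : Glued p one g i j := by
  refine ⟨Or.inr ⟨by rwa [one_apply], by rwa [one_apply]⟩, fun x => ?_⟩
  have := hg.ed_symm (p := p) j x
  rw [← h1, ← h2] at this
  rw [one_symm]
  simp only [ed, cr, Complex.sub_re, Complex.sub_im] at this ⊢
  linarith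

/-- An orientation-reversing isometry that carries a side to a side in order glues. -/
lemma glued_same {g : ℂ ≃ᵃⁱ[ℝ] ℂ} (hg : Orient g (-1)) {i j : Fin 6} (h1 : p i = g (p j))
    (h2 : p (i + 1) = g (p (j + 1))) : Glued p one g i j := by
  refine ⟨Or.inl ⟨by rwa [one_apply], by rwa [one_apply]⟩, fun x => ?_⟩
  have := hg.ed_symm (p := p) j x
  rw [← h1, ← h2] at this
  rw [one_symm]
  simp only [ed, cr, Complex.sub_re, Complex.sub_im] at this ⊢
  linarith

lemma Glued.comp {g φ ψ : ℂ ≃ᵃⁱ[ℝ] ℂ} {i j : Fin 6} (h : Glued p one g i j)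
    (hψ : ∀ z, φ (g z) = ψ z) : Glued p φ ψ i j := by
  constructor
  · have := h.side
    simp only [one_apply] at this
    simp only [← hψ]
    rcases this with ⟨e1, e2⟩ | ⟨e1, e2⟩
    · exact Or.inl ⟨by rw [← e1], by rw [← e2]⟩
    · exact Or.inr ⟨by rw [← e1], by rw [← e2]⟩
  · intro x
    have := h.opp (φ.symm x)
    rw [one_symm] at this
    rw [this]
    congr 2
    rw [AffineIsometryEquiv.symm_apply_eq]
    apply φ.injective
    rw [AffineIsometryEquiv.apply_symm_apply, hψ, AffineIsometryEquiv.apply_symm_apply]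

/-- The hexagon is the prototile of a lattice family that is a tiling in which all sides are
shared. -/
def LatTile (p : Fin 6 → ℂ) : Prop :=
  ∃ (v w : ℂ) (h : cr v w ≠ 0) (k : ℕ) (F : Fin k → ℂ ≃ᵃⁱ[ℝ] ℂ),
    Tiles p (latFam (crBasis v w h) F) ∧ Adjacent p (latFam (crBasis v w h) F)

/-- If each side of the hexagon is glued by an isometry `G i`, and the finitely many `F j` are
representatives, modulo a lattice of translations, of a set closed under composition on the right
with all `G i`, then the family is a tiling as soon as the areas fit. -/
theorem latTile_of_gens {k : ℕ} (hk : 0 < k) (hp : CCW p) {v w : ℂ} (F : Fin k → ℂ ≃ᵃⁱ[ℝ] ℂ)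
    (hvol : k * shoe p ≤ 2 * |cr v w|)
    (hG : ∀ i, ∃ g : ℂ ≃ᵃⁱ[ℝ] ℂ, (∃ i', Glued p one g i i') ∧
      ∀ j, ∃ j', ∃ m n : ℤ, ∀ z, F j (g z) = m * v + n * w + F j' z) : LatTile p := by
  have h : cr v w ≠ 0 := by
    intro h
    rw [h] at hvol
    have := mul_pos (Nat.cast_pos (α := ℝ).2 hk) (shoe_pos hp)
    simp at hvol
    linarith
  have : Nonempty (Fin k) := ⟨⟨0, hk⟩⟩
  refine ⟨v, w, h, k, F, tiles_of_glued hp h F (fun j i => ?_) (by simpa using hvol)⟩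
  obtain ⟨g, ⟨i', hg⟩, hcl⟩ := hG i
  obtain ⟨j', m, n, e⟩ := hcl j
  exact ⟨j', i', m, n, hg.comp fun z => by rw [e]; simp⟩

lemma side_eq (hp : CCW p) (i : Fin 6) : p (i + 1) - p i = len p i * dir p i :=
  (len_mul_dir hp i).symm

end HexTile

namespace HexTile

/-! ### Periodic tilings for the three types of hexagons -/

variable {p : Fin 6 → ℂ}

lemma dir_turns (hp : CCW p) (i : Fin 6) :
    dir p (i + 3) = Complex.exp ((turn p (i + 1) + turn p (i + 2) + turn p (i + 3) : ℝ) *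
      Complex.I) * dir p i := by
  have h1 := dir_turn hp i
  have h2 := dir_turn hp (i + 1)
  have h3 := dir_turn hp (i + 2)
  rw [(by decide : ∀ i : Fin 6, i + 1 + 1 = i + 2) i] at h2
  rw [(by decide : ∀ i : Fin 6, i + 2 + 1 = i + 3) i] at h3
  rw [h3, h2, h1]
  push_cast
  rw [add_mul, add_mul, Complex.exp_add, Complex.exp_add]
  ring

/-- Type 1: two opposite sides are parallel translates, and half-turns about the midpoints of the
other four sides generate the tiling. -/
lemma latTile_T1 (hp : CCW p) (h : T1 p) : LatTile p := by
  obtain ⟨hl, ha⟩ := h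
  have h5 : p 5 = p 3 - p 2 + p 0 := by
    have hd : dir p 2 = -dir p 5 := by
      have := dir_turns hp 5
      have e : turn p (5 + 1) + turn p (5 + 2) + turn p (5 + 3) = Real.pi := by
        change turn p 0 + turn p 1 + turn p 2 = _
        simp only [turn]; linarith
      rw [e, Complex.exp_pi_mul_I] at this
      change dir p 2 = _ at this
      rw [this]; ring
    have e5 : p 0 - p 5 = _ := side_eq hp 5
    have e2 : p 3 - p 2 = _ := side_eq hp 2
    rw [hl] at e5
    rw [hd] at e2
    linear_combination -e5 - e2
  have hh : ∀ a b : ℂ, ∃ g : ℂ ≃ᵃⁱ[ℝ] ℂ, Orient g 1 ∧ ∀ z, g z = a + b - z := fun a b =>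
    ⟨rot (a + b) (-1) (by simp), orient_rot _ _ _, fun z => by rw [rot_apply]; ring⟩
  have ht : ∀ a : ℂ, ∃ g : ℂ ≃ᵃⁱ[ℝ] ℂ, Orient g 1 ∧ ∀ z, g z = a + z := fun a =>
    ⟨rot a 1 (by simp), orient_rot _ _ _, fun z => by rw [rot_apply]; ring⟩
  refine latTile_of_gens (k := 2) (by norm_num) hp (v := p 2 - p 0) (w := p 3 + p 4 - p 0 - p 1)
    ![one, rot (p 0 + p 1) (-1) (by simp)] ?_ ?_
  · have : shoe p = cr (p 2 - p 0) (p 3 + p 4 - p 0 - p 1) := by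
      simp only [shoe, h5, cr, Complex.sub_re, Complex.sub_im, Complex.add_re, Complex.add_im]
      ring
    rw [← this]
    push_cast
    gcongr
    exact le_abs_self _
  · intro i
    have half : ∀ i : Fin 6, ∀ m n : ℤ, p i + p (i + 1) = p 0 + p 1 + (m * (p 2 - p 0) +
        n * (p 3 + p 4 - p 0 - p 1)) → ∃ g : ℂ ≃ᵃⁱ[ℝ] ℂ, (∃ i', Glued p one g i i') ∧
        ∀ j, ∃ j', ∃ m n : ℤ, ∀ z, (![one, rot (p 0 + p 1) (-1) (by simp)] :
          Fin 2 → ℂ ≃ᵃⁱ[ℝ] ℂ) j (g z) = m * (p 2 - p 0) + n * (p 3 + p 4 - p 0 - p 1) +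
          (![one, rot (p 0 + p 1) (-1) (by simp)] : Fin 2 → ℂ ≃ᵃⁱ[ℝ] ℂ) j' z := by
      intro i m n e
      obtain ⟨g, hg, hgz⟩ := hh (p i) (p (i + 1))
      refine ⟨g, ⟨i, glued_swap hg (by rw [hgz]; ring) (by rw [hgz]; ring)⟩, fun j => ?_⟩
      fin_cases j
      · refine ⟨1, m, n, fun z => ?_⟩
        simp only [Fin.zero_eta, Matrix.cons_val_zero, Matrix.cons_val_one, one_apply, rot_apply,
          hgz]
        linear_combination e
      · refine ⟨0, -m, -n, fun z => ?_⟩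
        simp only [Fin.mk_one, Matrix.cons_val_zero, Matrix.cons_val_one, one_apply, rot_apply,
          hgz]
        push_cast
        linear_combination -e
    have trans : ∀ i i' : Fin 6, ∀ m : ℤ, p i = m * (p 2 - p 0) + p (i' + 1) →
        p (i + 1) = m * (p 2 - p 0) + p i' → ∃ g : ℂ ≃ᵃⁱ[ℝ] ℂ, (∃ i', Glued p one g i i') ∧
        ∀ j, ∃ j', ∃ m n : ℤ, ∀ z, (![one, rot (p 0 + p 1) (-1) (by simp)] :
          Fin 2 → ℂ ≃ᵃⁱ[ℝ] ℂ) j (g z) = m * (p 2 - p 0) + n * (p 3 + p 4 - p 0 - p 1) +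
          (![one, rot (p 0 + p 1) (-1) (by simp)] : Fin 2 → ℂ ≃ᵃⁱ[ℝ] ℂ) j' z := by
      intro i i' m e1 e2
      obtain ⟨g, hg, hgz⟩ := ht (m * (p 2 - p 0))
      refine ⟨g, ⟨i', glued_swap hg (by rw [hgz, e1]) (by rw [hgz, e2])⟩, fun j => ?_⟩
      fin_cases j
      · refine ⟨0, m, 0, fun z => ?_⟩
        simp only [Fin.zero_eta, Matrix.cons_val_zero, one_apply, hgz]
        push_cast
        ring
      · refine ⟨1, -m, 0, fun z => ?_⟩
        simp only [Fin.mk_one, Matrix.cons_val_zero, Matrix.cons_val_one, rot_apply, hgz]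
        push_cast
        ring
    fin_cases i
    · exact half 0 0 0 (by simp)
    · refine half 1 1 0 ?_
      change p 1 + p 2 = _
      push_cast; ring
    · refine trans 2 5 1 ?_ ?_
      · change p 2 = _ + p 0
        push_cast; ring
      · change p 3 = _
        rw [h5]; push_cast; ring
    · refine half 3 0 1 ?_
      change p 3 + p 4 = _
      push_cast; ring
    · refine half 4 (-1) 1 ?_
      change p 4 + p 5 = _
      rw [h5]; push_cast; ring
    · refine trans 5 2 (-1) ?_ ?_
      · change p 5 = _ + p 3
        rw [h5]; push_cast; ring
      · change p 0 = _
        push_cast; ring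

lemma glide_area (s a b : ℂ) (hs : s.re * s.re + s.im * s.im = 1) :
    (s.re * a.re + s.im * a.im) * (s.im * b.re - s.re * b.im) -
      (s.im * a.re - s.re * a.im) * (s.re * b.re + s.im * b.im) =
    -(a.re * b.im - a.im * b.re) := by
  linear_combination (-(a.re * b.im - a.im * b.re)) * hs

/-- Type 2: glide reflections `g` and `h` along perpendicular axes glue sides 1 and 3, and sides
2 and 5; half-turns glue sides 0 and 4 to themselves. -/
lemma latTile_T2 (hp : CCW p) (h : T2 p) : LatTile p := by
  obtain ⟨hl5, hl1, ha⟩ := h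
  set s : ℂ := dir p 3 * dir p 1 with hsd
  have hs1 : ‖s‖ = 1 := by rw [hsd, norm_mul, norm_dir hp, norm_dir hp, one_mul]
  have hs0 : s ≠ 0 := by rw [← norm_ne_zero_iff, hs1]; norm_num
  have hcs : ∀ u : ℂ, ‖u‖ = 1 → (starRingEnd ℂ) u = u⁻¹ := by
    intro u hu
    rw [Complex.inv_def, Complex.normSq_eq_norm_sq, hu]; simp
  have hsc := hcs s hs1
  have hd : dir p 5 * dir p 2 = -s := by
    have e1 := dir_turn hp 5
    have e2 := dir_turn hp 0
    have e3 := dir_turn hp 1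
    have e4 := dir_turn hp 2
    change dir p 0 = Complex.exp ((turn p 0 : ℝ) * Complex.I) * _ at e1
    change dir p 1 = Complex.exp ((turn p 1 : ℝ) * Complex.I) * _ at e2
    change dir p 2 = Complex.exp ((turn p 2 : ℝ) * Complex.I) * _ at e3
    change dir p 3 = Complex.exp ((turn p 3 : ℝ) * Complex.I) * _ at e4
    have hpi : Complex.exp ((turn p 0 : ℝ) * Complex.I) * Complex.exp ((turn p 1 : ℝ) * Complex.I) *
        Complex.exp ((turn p 3 : ℝ) * Complex.I) = -1 := by
      rw [← Complex.exp_add, ← Complex.exp_add, ← Complex.exp_pi_mul_I]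
      congr 1
      have : turn p 0 + turn p 1 + turn p 3 = Real.pi := by simp only [turn]; linarith
      rw [← this]; push_cast; ring
    rw [hsd, e4, e3, e2, e1]
    set x0 := Complex.exp ((turn p 0 : ℝ) * Complex.I)
    set x1 := Complex.exp ((turn p 1 : ℝ) * Complex.I)
    set x2 := Complex.exp ((turn p 2 : ℝ) * Complex.I)
    set x3 := Complex.exp ((turn p 3 : ℝ) * Complex.I)
    linear_combination (x0 * x1 * x2 * dir p 5 ^ 2) * hpi
  have hne : ∀ i, dir p i ≠ 0 := fun i => by rw [← norm_ne_zero_iff, norm_dir hp]; norm_num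
  obtain ⟨b, hb⟩ : ∃ b, b = p 3 - s * (starRingEnd ℂ) (p 1) := ⟨_, rfl⟩
  obtain ⟨c, hc⟩ : ∃ c, c = p 5 + s * (starRingEnd ℂ) (p 2) := ⟨_, rfl⟩
  have q3 : p 3 = b + s * (starRingEnd ℂ) (p 1) := by rw [hb]; ring
  have q5 : p 5 = c + -s * (starRingEnd ℂ) (p 2) := by rw [hc]; ring
  have q4 : p 4 = b + s * (starRingEnd ℂ) (p 2) := by
    have e1 : p 2 - p 1 = _ := side_eq hp 1
    have e3 : p 4 - p 3 = _ := side_eq hp 3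
    have e1c := congrArg (starRingEnd ℂ) e1
    rw [map_sub, map_mul, Complex.conj_ofReal, hcs _ (norm_dir hp 1)] at e1c
    have : s * (dir p 1)⁻¹ = dir p 3 := by rw [hsd, mul_inv_cancel_right₀ (hne 1)]
    rw [hl1] at e1c
    linear_combination e3 + q3 - s * e1c - len p 3 * this
  have q0 : p 0 = c + -s * (starRingEnd ℂ) (p 3) := by
    have e2 : p 3 - p 2 = _ := side_eq hp 2
    have e5 : p 0 - p 5 = _ := side_eq hp 5
    have e2c := congrArg (starRingEnd ℂ) e2
    rw [map_sub, map_mul, Complex.conj_ofReal, hcs _ (norm_dir hp 2)] at e2c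
    have : -s * (dir p 2)⁻¹ = dir p 5 := by rw [← hd, mul_inv_cancel_right₀ (hne 2)]
    rw [hl5] at e5
    linear_combination e5 + q5 + s * e2c - len p 2 * this
  have q0' : p 0 = c - p 1 - s * (starRingEnd ℂ) b := by
    rw [q0, q3, map_add, map_mul, Complex.conj_conj, hsc]
    field_simp
    ring
  have hs2 : ‖-s‖ = 1 := by rw [norm_neg, hs1]
  refine latTile_of_gens (k := 4) (by norm_num) hp (v := b + s * (starRingEnd ℂ) b)
    (w := c - s * (starRingEnd ℂ) c)
    ![one, refl b s hs1, refl c (-s) hs2, rot (c - s * (starRingEnd ℂ) b) (-1) (by simp)] ?_ ?_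
  · have : 2 * shoe p = cr (b + s * (starRingEnd ℂ) b) (c - s * (starRingEnd ℂ) c) := by
      have hn := normSq_eq hs1
      have H1 := glide_area s (p 1) (p 2) hn
      have H2 := glide_area s (p 2) b hn
      have H3 := glide_area s b c hn
      simp only [shoe]
      rw [q4, q5, q3, q0']
      simp only [cr, Complex.sub_re, Complex.sub_im, Complex.add_re,
        Complex.add_im, Complex.mul_re, Complex.mul_im, Complex.neg_re, Complex.neg_im,
        Complex.conj_re, Complex.conj_im]
      linear_combination 2 * H1 + 2 * H2 + H3
    rw [← this, abs_of_pos (by linarith [shoe_pos hp])]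
    push_cast
    linarith
  · -- `f j`, `m j` and `n j` describe the coset and the translation of `F j ∘ g`
    have key : ∀ (i i' : Fin 6) (g : ℂ ≃ᵃⁱ[ℝ] ℂ), Glued p one g i i' →
        ∀ (f : Fin 4 → Fin 4) (m n : Fin 4 → ℤ), (∀ j z, (![one, refl b s hs1, refl c (-s) hs2,
          rot (c - s * (starRingEnd ℂ) b) (-1) (by simp)] : Fin 4 → ℂ ≃ᵃⁱ[ℝ] ℂ) j (g z) =
          m j * (b + s * (starRingEnd ℂ) b) + n j * (c - s * (starRingEnd ℂ) c) +
          (![one, refl b s hs1, refl c (-s) hs2,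
          rot (c - s * (starRingEnd ℂ) b) (-1) (by simp)] : Fin 4 → ℂ ≃ᵃⁱ[ℝ] ℂ) (f j) z) →
        ∃ g : ℂ ≃ᵃⁱ[ℝ] ℂ, (∃ i', Glued p one g i i') ∧ ∀ j, ∃ j', ∃ m n : ℤ, ∀ z,
          (![one, refl b s hs1, refl c (-s) hs2,
          rot (c - s * (starRingEnd ℂ) b) (-1) (by simp)] : Fin 4 → ℂ ≃ᵃⁱ[ℝ] ℂ) j (g z) =
          m * (b + s * (starRingEnd ℂ) b) + n * (c - s * (starRingEnd ℂ) c) +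
          (![one, refl b s hs1, refl c (-s) hs2,
          rot (c - s * (starRingEnd ℂ) b) (-1) (by simp)] : Fin 4 → ℂ ≃ᵃⁱ[ℝ] ℂ) j' z :=
      fun i i' g hg f m n hf => ⟨g, ⟨i', hg⟩, fun j => ⟨f j, m j, n j, hf j⟩⟩
    intro i
    fin_cases i
    · refine key 0 0 (rot (c - s * (starRingEnd ℂ) b) (-1) (by simp))
        (glued_swap (orient_rot _ _ _) ?_ ?_) ![3, 2, 1, 0] ![0, 0, 0, 0] ![0, -1, 1, 0] ?_
      · change p 0 = rot _ _ _ (p 1)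
        rw [rot_apply, q0']; ring
      · change p 1 = rot _ _ _ (p 0)
        rw [rot_apply, q0']; ring
      · intro j z
        fin_cases j <;> simp [one_apply, refl_apply, rot_apply, hsc] <;> field_simp <;> ring
    · refine key 1 3 (refl (b - (b + s * (starRingEnd ℂ) b)) s hs1)
        (glued_same (orient_refl _ _ _) ?_ ?_) ![1, 0, 3, 2] ![-1, 0, 1, 0] ![0, 0, 0, 0] ?_
      · rw [refl_apply, q3]; simp [hsc]; field_simp; ring
      · change p 2 = refl _ _ _ (p 4)
        rw [refl_apply, q4]; simp [hsc]; field_simp; ring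
      · intro j z
        fin_cases j <;> simp [one_apply, refl_apply, rot_apply, hsc] <;> field_simp <;> ring
    · refine key 2 5 (refl (c - (c - s * (starRingEnd ℂ) c)) (-s) hs2)
        (glued_same (orient_refl _ _ _) ?_ ?_) ![2, 3, 0, 1] ![0, 1, 0, -1] ![-1, 0, 0, 1] ?_
      · rw [refl_apply, q5]; simp [hsc]; field_simp; ring
      · change p 3 = refl _ _ _ (p 0)
        rw [refl_apply, q0]; simp [hsc]; field_simp; ring
      · intro j z
        fin_cases j <;> simp [one_apply, refl_apply, rot_apply, hsc] <;> field_simp <;> ring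
    · refine key 3 1 (refl b s hs1)
        (glued_same (orient_refl _ _ _) ?_ ?_) ![1, 0, 3, 2] ![0, 1, 0, -1] ![0, 0, 0, 0] ?_
      · rw [refl_apply, q3]
      · change p 4 = refl _ _ _ (p 2)
        rw [refl_apply, q4]
      · intro j z
        fin_cases j <;> simp [one_apply, refl_apply, rot_apply, hsc] <;> field_simp <;> ring
    · refine key 4 4 (rot (b + c) (-1) (by simp))
        (glued_swap (orient_rot _ _ _) ?_ ?_) ![3, 2, 1, 0] ![1, 1, -1, -1] ![0, -1, 1, 0] ?_
      · change p 4 = rot _ _ _ (p 5)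
        rw [rot_apply, q4, q5]; ring
      · change p 5 = rot _ _ _ (p 4)
        rw [rot_apply, q4, q5]; ring
      · intro j z
        fin_cases j <;> simp [one_apply, refl_apply, rot_apply] <;> field_simp <;> ring
    · refine key 5 2 (refl c (-s) hs2)
        (glued_same (orient_refl _ _ _) ?_ ?_) ![2, 3, 0, 1] ![0, 1, 0, -1] ![0, -1, 1, 0] ?_
      · rw [refl_apply, q5]
      · change p 0 = refl _ _ _ (p 3)
        rw [refl_apply, q0]
      · intro j z
        fin_cases j <;> simp [one_apply, refl_apply, rot_apply, hsc] <;> field_simp <;> ring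

/-- Type 3: rotations by `2π/3` about `p 0`, `p 2` and `p 4` glue the sides in pairs. -/
lemma latTile_T3 (hp : CCW p) (h : T3 p) : LatTile p := by
  obtain ⟨l0, l1, l3, a0, a2, a4⟩ := h
  set ω : ℂ := Complex.exp ((2 * Real.pi / 3 : ℝ) * Complex.I) with hω
  have hre : ω.re = -1 / 2 := by
    rw [hω, Complex.exp_ofReal_mul_I_re,
      show 2 * Real.pi / 3 = Real.pi - Real.pi / 3 by ring, Real.cos_pi_sub,
      Real.cos_pi_div_three]
    norm_num
  have him : ω.im * ω.im = 3 / 4 := by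
    rw [hω, Complex.exp_ofReal_mul_I_im,
      show 2 * Real.pi / 3 = Real.pi - Real.pi / 3 by ring, Real.sin_pi_sub,
      Real.sin_pi_div_three]
    have := Real.mul_self_sqrt (show (0 : ℝ) ≤ 3 by norm_num)
    linear_combination this / 4
  have hw : ω * ω + ω + 1 = 0 := by
    apply Complex.ext
    · simp only [Complex.add_re, Complex.mul_re, Complex.one_re, Complex.zero_re, hre]
      linear_combination -him
    · simp only [Complex.add_im, Complex.mul_im, Complex.one_im, Complex.zero_im, hre]
      ring
  have hn : ‖ω‖ = 1 := Complex.norm_exp_ofReal_mul_I _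
  have hn2 : ‖ω * ω‖ = 1 := by rw [norm_mul, hn, one_mul]
  have hrot : ∀ i, len p i = len p (i - 1) → ang p i = 2 * Real.pi / 3 →
      p (i - 1) - p i = ω * (p (i + 1) - p i) := by
    intro i hl ha
    have e1 := side_eq hp i
    have e2 := side_eq hp (i - 1)
    rw [sub_add_cancel, dir_pred hp, ha, ← hω, ← hl] at e2
    linear_combination -e2 - ω * e1
  have r0 : p 5 - p 0 = ω * (p 1 - p 0) := hrot 0 l0 a0
  have r2 : p 1 - p 2 = ω * (p 3 - p 2) := hrot 2 l1.symm a2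
  have r4 : p 3 - p 4 = ω * (p 5 - p 4) := hrot 4 l3.symm a4
  have h1 : ω ≠ 1 := by
    intro h
    rw [h] at hre
    norm_num at hre
  have r : p 2 - p 0 = -ω * (p 4 - p 0) := by
    have : (1 - ω) * (p 2 + ω * p 4 + ω * ω * p 0) = 0 := by
      linear_combination -r2 - ω * r4 - ω * ω * r0 + (p 1 - ω * p 1) * hw
    have := (mul_eq_zero.1 this).resolve_left (sub_ne_zero.2 h1.symm)
    linear_combination this - p 0 * hw
  obtain ⟨F, hF⟩ : ∃ F : Fin 3 → ℂ ≃ᵃⁱ[ℝ] ℂ,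
      F = ![one, rot (p 0 - ω * p 0) ω hn, rot (p 0 - ω * ω * p 0) (ω * ω) hn2] := ⟨_, rfl⟩
  have F0 : ∀ z, F 0 z = z := fun z => by rw [hF]; exact one_apply z
  have F1 : ∀ z, F 1 z = p 0 - ω * p 0 + ω * z := fun z => by rw [hF]; exact rot_apply _ _ hn z
  have F2 : ∀ z, F 2 z = p 0 - ω * ω * p 0 + ω * ω * z := fun z => by
    rw [hF]; exact rot_apply _ _ hn2 z
  refine latTile_of_gens (k := 3) (by norm_num) hp (v := (1 - ω) * (p 2 - p 0))
    (w := (1 - ω) * (p 4 - p 0)) F ?_ ?_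
  · have : 3 * shoe p = 2 * cr ((1 - ω) * (p 2 - p 0)) ((1 - ω) * (p 4 - p 0)) := by
      obtain ⟨A, hA⟩ : ∃ A, A = p 4 - p 0 := ⟨_, rfl⟩
      obtain ⟨B, hB⟩ : ∃ B, B = p 1 - p 0 := ⟨_, rfl⟩
      have e2 : p 2 - p 0 = -ω * A := by rw [r, hA]
      have e5 : p 5 - p 0 = ω * B := by rw [r0, hB]
      have e3 : p 3 - p 0 = A - ω * A - B - ω * B := by
        linear_combination r4 + ω * e5 + (1 - ω) * (-hA) + B * hw
      have ev : (1 - ω) * (p 2 - p 0) = -(1 + 2 * ω) * A := by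
        rw [e2]; linear_combination A * hw
      simp only [shoe]
      rw [ev, e2, e3, e5, ← hA, ← hB]
      simp only [cr, Complex.sub_re, Complex.sub_im, Complex.add_re, Complex.add_im,
        Complex.mul_re, Complex.mul_im, Complex.neg_re, Complex.neg_im, Complex.one_re,
        Complex.one_im, Complex.re_ofNat, Complex.im_ofNat, hre]
      linear_combination 3 * (A.re * B.im - A.im * B.re) * him
    rw [← abs_of_pos (two_pos (α := ℝ)), ← abs_mul, ← this]
    push_cast
    exact le_abs_self _
  · -- `f j`, `m j` and `n j` describe the coset and the translation of `F j ∘ g`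
    have key : ∀ (i i' : Fin 6) (g : ℂ ≃ᵃⁱ[ℝ] ℂ), Glued p one g i i' →
        ∀ (f : Fin 3 → Fin 3) (m n : Fin 3 → ℤ), (∀ j z, F j (g z) =
          m j * ((1 - ω) * (p 2 - p 0)) + n j * ((1 - ω) * (p 4 - p 0)) + F (f j) z) →
        ∃ g : ℂ ≃ᵃⁱ[ℝ] ℂ, (∃ i', Glued p one g i i') ∧ ∀ j, ∃ j', ∃ m n : ℤ, ∀ z, F j (g z) =
          m * ((1 - ω) * (p 2 - p 0)) + n * ((1 - ω) * (p 4 - p 0)) + F j' z :=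
      fun i i' g hg f m n hf => ⟨g, ⟨i', hg⟩, fun j => ⟨f j, m j, n j, hf j⟩⟩
    intro i
    fin_cases i
    · refine key 0 5 (rot (p 0 - ω * ω * p 0) (ω * ω) hn2)
        (glued_swap (orient_rot _ _ _) ?_ ?_) ![2, 0, 1] ![0, 0, 0] ![0, 0, 0] ?_
      · change p 0 = rot _ _ _ (p 0)
        rw [rot_apply]; ring
      · change p 1 = rot _ _ _ (p 5)
        rw [rot_apply]; grind
      · intro j z
        fin_cases j <;> simp [F0, F1, F2, rot_apply] <;> grind
    · refine key 1 2 (rot (p 2 - ω * p 2) ω hn)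
        (glued_swap (orient_rot _ _ _) ?_ ?_) ![1, 2, 0] ![1, -1, 0] ![0, 1, -1] ?_
      · change p 1 = rot _ _ _ (p 3)
        rw [rot_apply]; grind
      · change p 2 = rot _ _ _ (p 2)
        rw [rot_apply]; ring
      · intro j z
        fin_cases j <;> simp [F0, F1, F2, rot_apply] <;> grind
    · refine key 2 1 (rot (p 2 - ω * ω * p 2) (ω * ω) hn2)
        (glued_swap (orient_rot _ _ _) ?_ ?_) ![2, 0, 1] ![0, -1, 1] ![1, 0, -1] ?_
      · change p 2 = rot _ _ _ (p 2)
        rw [rot_apply]; ring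
      · change p 3 = rot _ _ _ (p 1)
        rw [rot_apply]; grind
      · intro j z
        fin_cases j <;> simp [F0, F1, F2, rot_apply] <;> grind
    · refine key 3 4 (rot (p 4 - ω * p 4) ω hn)
        (glued_swap (orient_rot _ _ _) ?_ ?_) ![1, 2, 0] ![0, -1, 1] ![1, 0, -1] ?_
      · change p 3 = rot _ _ _ (p 5)
        rw [rot_apply]; grind
      · change p 4 = rot _ _ _ (p 4)
        rw [rot_apply]; ring
      · intro j z
        fin_cases j <;> simp [F0, F1, F2, rot_apply] <;> grind
    · refine key 4 3 (rot (p 4 - ω * ω * p 4) (ω * ω) hn2)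
        (glued_swap (orient_rot _ _ _) ?_ ?_) ![2, 0, 1] ![-1, 0, 1] ![1, -1, 0] ?_
      · change p 4 = rot _ _ _ (p 4)
        rw [rot_apply]; ring
      · change p 5 = rot _ _ _ (p 3)
        rw [rot_apply]; grind
      · intro j z
        fin_cases j <;> simp [F0, F1, F2, rot_apply] <;> grind
    · refine key 5 0 (rot (p 0 - ω * p 0) ω hn)
        (glued_swap (orient_rot _ _ _) ?_ ?_) ![1, 2, 0] ![0, 0, 0] ![0, 0, 0] ?_
      · change p 5 = rot _ _ _ (p 1)
        rw [rot_apply]; grind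
      · change p 0 = rot _ _ _ (p 0)
        rw [rot_apply]; ring
      · intro j z
        fin_cases j <;> simp [F0, F1, F2, rot_apply] <;> grind

end HexTile

namespace HexTile

variable {p : Fin 6 → ℂ}

/-! ### Reflections and the conclusion in the complex plane -/

/-- The mirror image of a hexagon, with vertices again in counterclockwise order. -/
def mir (p : Fin 6 → ℂ) (i : Fin 6) : ℂ := (starRingEnd ℂ) (p (-i))

lemma ed_mir (p : Fin 6 → ℂ) (i : Fin 6) (y : ℂ) :
    ed (mir p) i ((starRingEnd ℂ) y) = ed p (-i - 1) y := by
  have e1 : -(i + 1) = -i - 1 := (by decide : ∀ i : Fin 6, -(i + 1) = -i - 1) i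
  have e2 : -i - 1 + 1 = -i := (by decide : ∀ i : Fin 6, -i - 1 + 1 = -i) i
  simp only [ed, mir, e1, e2, cr, Complex.sub_re, Complex.sub_im, Complex.conj_re,
    Complex.conj_im]
  ring

lemma CCW.mir (hp : CCW p) : CCW (mir p) := by
  intro i j h1 h2
  have := hp (-i - 1) (-j) ((by decide : ∀ i j : Fin 6, j ≠ i + 1 → -j ≠ -i - 1) i j h2)
    ((by decide : ∀ i j : Fin 6, j ≠ i → -j ≠ -i - 1 + 1) i j h1)
  rw [← ed_mir] at this
  exact this

lemma len_mir (p : Fin 6 → ℂ) (i : Fin 6) : len (mir p) i = len p (-i - 1) := by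
  have e1 : -(i + 1) = -i - 1 := (by decide : ∀ i : Fin 6, -(i + 1) = -i - 1) i
  have e2 : -i - 1 + 1 = -i := (by decide : ∀ i : Fin 6, -i - 1 + 1 = -i) i
  rw [len, len, mir, mir, ← map_sub, e1, e2, RCLike.norm_conj, norm_sub_rev]

lemma ang_mir (p : Fin 6 → ℂ) (i : Fin 6) : ang (mir p) i = ang p (-i) := by
  have e1 : -(i + 1) = -i - 1 := (by decide : ∀ i : Fin 6, -(i + 1) = -i - 1) i
  have e2 : -(i - 1) = -i + 1 := (by decide : ∀ i : Fin 6, -(i - 1) = -i + 1) i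
  simp only [ang, mir]
  rw [e1, e2, ← map_sub, ← map_sub, ← map_div₀]
  set z := (p (-i - 1) - p (-i)) / (p (-i + 1) - p (-i)) with hz
  rw [← inv_div, ← hz, Complex.inv_def, map_mul, Complex.conj_conj, Complex.conj_ofReal]
  by_cases h : z = 0
  · simp [h]
  · rw [mul_comm, Complex.arg_real_mul]
    exact inv_pos.2 (Complex.normSq_pos.2 h)

lemma Hex_mir (p : Fin 6 → ℂ) : Hex (mir p) = (starRingEnd ℂ) '' Hex p := by
  have h := (Complex.conjLIE.toLinearEquiv : ℂ →ₗ[ℝ] ℂ).isLinear.image_convexHull (Set.range p)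
  have e : ((Complex.conjLIE.toLinearEquiv : ℂ →ₗ[ℝ] ℂ) : ℂ → ℂ) = starRingEnd ℂ := rfl
  rw [e] at h
  rw [Hex, Hex, h]
  congr 1
  ext x
  constructor
  · rintro ⟨i, rfl⟩
    exact ⟨_, ⟨-i, rfl⟩, rfl⟩
  · rintro ⟨_, ⟨i, rfl⟩, rfl⟩
    exact ⟨-i, by simp [mir]⟩

lemma T2m.mir (h : T2m p) : T2 (mir p) := by
  obtain ⟨h1, h2, h3⟩ := h
  refine ⟨?_, ?_, ?_⟩
  · rw [len_mir, len_mir]; exact h1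
  · rw [len_mir, len_mir]; exact h2
  · rw [ang_mir, ang_mir, ang_mir]; exact h3

/-- A hexagon that tiles the plane is, up to relabelling and reflection, the prototile of a lattice
family that tiles edge-to-edge. -/
theorem Tiles.exists_latTile {ι : Type*} {F : ι → ℂ ≃ᵃⁱ[ℝ] ℂ} (hT : Tiles p F) :
    ∃ q, CCW q ∧ LatTile q ∧ (Hex q = Hex p ∨ Hex q = (starRingEnd ℂ) '' Hex p) := by
  obtain ⟨k, hk⟩ := hT.exists_typed
  have hp := hT.ccw.rotp k
  rcases hk with h | h | h | h
  · exact ⟨_, hp, latTile_T1 hp h, Or.inl (Hex_rotp k)⟩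
  · exact ⟨_, hp, latTile_T2 hp h, Or.inl (Hex_rotp k)⟩
  · exact ⟨_, hp.mir, latTile_T2 hp.mir h.mir, Or.inr (by rw [Hex_mir, Hex_rotp])⟩
  · exact ⟨_, hp, latTile_T3 hp h, Or.inl (Hex_rotp k)⟩

end HexTile

namespace HexTile

variable {p : Fin 6 → ℂ}

/-! ### Transport between `ℂ` and the Euclidean plane -/

lemma isExtreme_image (G : ℂ ≃ᵃⁱ[ℝ] Plane) {A B : Set ℂ} (h : IsExtreme ℝ A B) :
    IsExtreme ℝ (G '' A) (G '' B) := by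
  refine ⟨Set.image_mono h.subset, ?_⟩
  rintro _ ⟨x, hx, rfl⟩ _ ⟨y, hy, rfl⟩ _ ⟨z, hz, rfl⟩ hs
  have e := image_openSegment ℝ (G.toAffineEquiv : ℂ →ᵃ[ℝ] Plane) x y
  have hs' : G z ∈ (G.toAffineEquiv : ℂ →ᵃ[ℝ] Plane) '' openSegment ℝ x y := by
    rw [e]; exact hs
  obtain ⟨z', hz', e'⟩ := hs'
  obtain rfl : z' = z := G.injective e'
  exact ⟨x, h.left_mem_of_mem_openSegment hx hy hz hz', rfl⟩

lemma segment_image (G : ℂ ≃ᵃⁱ[ℝ] Plane) (x y : ℂ) :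
    G '' segment ℝ x y = segment ℝ (G x) (G y) :=
  image_segment ℝ (G.toAffineEquiv : ℂ →ᵃ[ℝ] Plane) x y

lemma isExtreme_side (hp : CCW p) (i : Fin 6) :
    IsExtreme ℝ (Hex p) (segment ℝ (p i) (p (i + 1))) := by
  refine ⟨(Hex_convex p).segment_subset (vertex_mem p i) (vertex_mem p _), ?_⟩
  rintro x hx y hy z ⟨a, b, ha, hb, hab, rfl⟩ ⟨c, d, hc, hd, hcd, e⟩
  have h0 : ed p i (c • x + d • y) = 0 := by
    rw [e, ed_comb _ _ _ _ _ _ hab, ed_self, ed_succ]; ring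
  rw [ed_comb _ _ _ _ _ _ hcd] at h0
  have hx0 := (mem_Hex_iff hp).1 hx i
  have hy0 := (mem_Hex_iff hp).1 hy i
  have hxz : ed p i x = 0 := by
    have := mul_nonneg hd.le hy0
    have := mul_nonneg hc.le hx0
    exact (mul_eq_zero.1 (by linarith : c * ed p i x = 0)).resolve_left hc.ne'
  obtain ⟨s, hs0, hs1, rfl⟩ := mem_edge hp hx hxz
  exact ⟨1 - s, s, by linarith, hs0, by ring, rfl⟩

lemma isExtreme_vertex (hp : CCW p) (i : Fin 6) : IsExtreme ℝ (Hex p) {p i} := by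
  have h := (isExtreme_side hp i).inter (isExtreme_side hp (i - 1))
  have e : i - 1 + 1 = i := by simp
  have : segment ℝ (p i) (p (i + 1)) ∩ segment ℝ (p (i - 1)) (p (i - 1 + 1)) = {p i} := by
    rw [e]
    ext x
    simp only [Set.mem_inter_iff, Set.mem_singleton_iff]
    constructor
    · rintro ⟨⟨a, b, ha, hb, hab, rfl⟩, c, d, hc, hd, hcd, e1⟩
      have h1 := ed_comb p (i - 1) (p (i - 1)) (p i) c d hcd
      have h2 := ed_comb p (i - 1) (p i) (p (i + 1)) a b hab
      have h3 : ed p (i - 1) (p i) = 0 := by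
        have := ed_succ p (i - 1); rwa [e] at this
      have h4 : 0 < ed p (i - 1) (p (i + 1)) :=
        hp _ _ ((by decide : ∀ i : Fin 6, i + 1 ≠ i - 1) i)
          ((by decide : ∀ i : Fin 6, i + 1 ≠ i - 1 + 1) i)
      rw [e1, h2, h3, ed_self] at h1
      have hb0 : b = 0 := by
        rcases mul_eq_zero.1 (by linarith : b * ed p (i - 1) (p (i + 1)) = 0) with h | h
        · exact h
        · exact absurd h h4.ne'
      obtain rfl : a = 1 := by linarith
      simp [hb0]
    · rintro rfl
      exact ⟨left_mem_segment ℝ _ _, right_mem_segment ℝ _ _⟩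
  rwa [this] at h

/-- The tile of index `t` of the family `Φ`, moved to the Euclidean plane by `G`. -/
def tile (p : Fin 6 → ℂ) {ι : Type*} (Φ : ι → ℂ ≃ᵃⁱ[ℝ] ℂ) (G : ℂ ≃ᵃⁱ[ℝ] Plane) (t : ι) :
    Set Plane :=
  (Φ t).trans G '' Hex p

section Family

variable {ι : Type*} {Φ : ι → ℂ ≃ᵃⁱ[ℝ] ℂ} {G : ℂ ≃ᵃⁱ[ℝ] Plane}

lemma mem_tile {t : ι} {y : Plane} :
    y ∈ tile p Φ G t ↔ (Φ t).symm (G.symm y) ∈ Hex p := by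
  constructor
  · rintro ⟨x, hx, rfl⟩
    simpa using hx
  · intro h
    exact ⟨_, h, by simp⟩

lemma mem_interior_tile {t : ι} {y : Plane} :
    y ∈ interior (tile p Φ G t) ↔ (Φ t).symm (G.symm y) ∈ interior (Hex p) := by
  have : interior (tile p Φ G t) = ((Φ t).trans G) '' interior (Hex p) :=
    ((((Φ t).trans G).toHomeomorph).image_interior (Hex p)).symm
  rw [this]
  constructor
  · rintro ⟨x, hx, rfl⟩
    simpa using hx
  · intro h
    exact ⟨_, h, by simp⟩

lemma isMonohedral_tile (hT : Tiles p Φ) :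
    IsMonohedralTiling (G '' Hex p) (Set.range (tile p Φ G)) := by
  refine ⟨?_, ?_, ?_⟩
  · rintro _ ⟨t, rfl⟩
    refine ⟨((G.symm.trans (Φ t)).trans G).toIsometryEquiv, ?_⟩
    rw [Set.image_image]
    refine Set.image_congr fun x _ => ?_
    simp
  · refine Set.eq_univ_of_forall fun y => ?_
    obtain ⟨t, ht⟩ := hT.cover (G.symm y)
    exact ⟨_, ⟨t, rfl⟩, mem_tile.2 ht⟩
  · rintro _ ⟨s, rfl⟩ _ ⟨t, rfl⟩ hne
    refine Set.disjoint_left.2 fun y hs ht => hne ?_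
    rw [hT.disj s t _ (mem_interior_tile.1 hs) (mem_interior_tile.1 ht)]

lemma mem_extremePoints_tile (hp : CCW p) (t : ι) (i : Fin 6) :
    G (Φ t (p i)) ∈ Set.extremePoints ℝ (tile p Φ G t) := by
  have := isExtreme_image ((Φ t).trans G) (isExtreme_vertex hp i)
  rw [Set.image_singleton, isExtreme_singleton] at this
  exact this

lemma isEdgeOf_tile (hp : CCW p) (t : ι) (i : Fin 6) :
    IsEdgeOf (segment ℝ (G (Φ t (p i))) (G (Φ t (p (i + 1))))) (tile p Φ G t) := by
  refine ⟨_, _, ?_, rfl, ?_⟩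
  · intro h
    exact hp.ne i ((Φ t).injective (G.injective h)).symm
  · have := isExtreme_image ((Φ t).trans G) (isExtreme_side hp i)
    rw [segment_image] at this
    exact this

lemma isEdgeToEdge_tile (hT : Tiles p Φ) (hA : Adjacent p Φ) :
    IsEdgeToEdge (Set.range (tile p Φ G)) := by
  rintro _ ⟨s, rfl⟩ _ ⟨t, rfl⟩ hne
  have hst : s ≠ t := fun h => hne (by rw [h])
  rcases hT.edge_to_edge hA hst with h | ⟨i, j, e, h⟩ | ⟨i, j, hg, h⟩
  · left
    exact Set.disjoint_left.2 fun y hs ht => h _ (mem_tile.1 hs) (mem_tile.1 ht)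
  · right; left
    refine ⟨G (Φ s (p i)), mem_extremePoints_tile hT.ccw s i, ?_, ?_⟩
    · rw [e]; exact mem_extremePoints_tile hT.ccw t j
    · ext y
      rw [Set.mem_inter_iff, mem_tile, mem_tile, h, Set.mem_singleton_iff,
        AffineIsometryEquiv.symm_apply_eq]
  · right; right
    refine ⟨_, isEdgeOf_tile hT.ccw s i, ?_, ?_⟩
    · rcases hg.side with ⟨e1, e2⟩ | ⟨e1, e2⟩
      · rw [e1, e2]; exact isEdgeOf_tile hT.ccw t j
      · rw [e1, e2, segment_symm]; exact isEdgeOf_tile hT.ccw t j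
    · ext y
      rw [Set.mem_inter_iff, mem_tile, mem_tile, h, ← segment_image]
      constructor
      · intro hy
        exact ⟨_, hy, by simp⟩
      · rintro ⟨x, hx, rfl⟩
        simpa using hx

end Family

lemma translate_tile {J : Type*} (b : Module.Basis (Fin 2) ℝ ℂ) (F : J → ℂ ≃ᵃⁱ[ℝ] ℂ)
    (G : ℂ ≃ᵃⁱ[ℝ] Plane) {u : ℂ} (hu : u ∈ Lat b) :
    ∀ t ∈ Set.range (tile p (latFam b F) G),
      TranslateSet (G.linearIsometryEquiv u) t ∈ Set.range (tile p (latFam b F) G) := by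
  rintro _ ⟨⟨j, l⟩, rfl⟩
  refine ⟨(j, ⟨u, hu⟩ + l), ?_⟩
  unfold TranslateSet tile
  rw [Set.image_image]
  refine Set.image_congr fun x _ => ?_
  have := G.map_vadd (l + F j x) u
  simp only [vadd_eq_add] at this
  simp only [AffineIsometryEquiv.coe_trans, Function.comp_apply, latFam_apply,
    Submodule.coe_add, add_assoc]
  rw [this, add_comm]

lemma isPeriodic_tile {J : Type*} {v w : ℂ} (h : cr v w ≠ 0) (F : J → ℂ ≃ᵃⁱ[ℝ] ℂ)
    (G : ℂ ≃ᵃⁱ[ℝ] Plane) :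
    IsPeriodicTiling (Set.range (tile p (latFam (crBasis v w h) F) G)) := by
  refine ⟨G.linearIsometryEquiv v, G.linearIsometryEquiv w, ?_, ?_, ?_⟩
  · have := (linearIndependent_of_cr h).map' (G.linearIsometryEquiv.toLinearEquiv : ℂ →ₗ[ℝ] Plane)
      (LinearEquiv.ker _)
    have e : (G.linearIsometryEquiv.toLinearEquiv : ℂ →ₗ[ℝ] Plane) ∘ ![v, w] =
        ![G.linearIsometryEquiv v, G.linearIsometryEquiv w] := by
      funext i
      fin_cases i <;> rfl
    rwa [e] at this
  · refine translate_tile _ F G (Submodule.subset_span ⟨0, ?_⟩)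
    rw [coe_crBasis]; rfl
  · refine translate_tile _ F G (Submodule.subset_span ⟨1, ?_⟩)
    rw [coe_crBasis]; rfl

/-- The tiles of a monohedral tiling, read in `ℂ` and indexed by themselves. -/
lemma exists_tiles {H : Set Plane} (G : ℂ ≃ᵃⁱ[ℝ] Plane) (hp : CCW p) (hG : H = G '' Hex p)
    {T : Set (Set Plane)} (hT : IsMonohedralTiling H T) :
    ∃ F : T → ℂ ≃ᵃⁱ[ℝ] ℂ, Tiles p F := by
  obtain ⟨h1, h2, h3⟩ := hT
  choose f hf using fun t : T => h1 t t.2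
  have key : ∀ t : T, (t : Set Plane) =
      tile p (fun t : T => (G.trans (f t).toRealAffineIsometryEquiv).trans G.symm) G t := by
    intro t
    rw [hf t, hG, tile, Set.image_image]
    refine Set.image_congr fun x _ => ?_
    simp
  refine ⟨fun t : T => (G.trans (f t).toRealAffineIsometryEquiv).trans G.symm, hp, ?_, ?_⟩
  · intro x
    obtain ⟨t, ht, hx⟩ := (Set.eq_univ_iff_forall.1 h2) (G x)
    refine ⟨⟨t, ht⟩, ?_⟩
    have hx' : G x ∈ ((⟨t, ht⟩ : T) : Set Plane) := hx
    rw [key, mem_tile, G.symm_apply_apply] at hx'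
    exact hx'
  · intro s t x hs ht
    by_contra hne
    have hd := h3 s.2 t.2 fun h => hne (Subtype.ext h)
    have bs : G x ∈ interior (s : Set Plane) := by
      rw [key, mem_interior_tile, G.symm_apply_apply]; exact hs
    have bt : G x ∈ interior (t : Set Plane) := by
      rw [key, mem_interior_tile, G.symm_apply_apply]; exact ht
    exact Set.disjoint_left.1 hd bs bt

lemma exists_hex {H : Set Plane} (hH : IsConvexNGon H 6) :
    ∃ p : Fin 6 → ℂ, CCW p ∧
      H = Complex.orthonormalBasisOneI.repr.toAffineIsometryEquiv '' Hex p := by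
  obtain ⟨hc, hv, -, hn⟩ := hH
  let E : Plane ≃ₗᵢ[ℝ] ℂ := Complex.orthonormalBasisOneI.repr.symm
  obtain ⟨p, hp, e⟩ := exists_ccw (K := E '' H) (hc.image E.continuous)
    (hv.linear_image (E.toLinearEquiv : Plane →ₗ[ℝ] ℂ)) (by
      rw [← image_extremePoints, Set.ncard_image_of_injective _ E.injective, hn])
  refine ⟨p, hp, ?_⟩
  rw [← e, Set.image_image]
  have : ∀ x, Complex.orthonormalBasisOneI.repr.toAffineIsometryEquiv (E x) = x :=
    fun x => Complex.orthonormalBasisOneI.repr.apply_symm_apply x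
  simp only [this, Set.image_id']

end HexTile

open HexTile in
/-- Every convex hexagon that admits a monohedral tiling of the plane admits a
periodic edge-to-edge monohedral tiling of the plane. -/
theorem hexagonal_tile_admits_periodic_edgeToEdge_tiling
    (H : Set Plane) (hH : IsConvexNGon H 6)
    (T : Set (Set Plane)) (hT : IsMonohedralTiling H T) :
    ∃ T' : Set (Set Plane),
      IsMonohedralTiling H T' ∧ IsEdgeToEdge T' ∧ IsPeriodicTiling T' := by
  obtain ⟨p, hp, hE⟩ := exists_hex hH
  obtain ⟨F, hF⟩ := exists_tiles _ hp hE hT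
  obtain ⟨q, hq, ⟨v, w, h, k, Φ, hΦ, hA⟩, hqp⟩ := hF.exists_latTile
  obtain ⟨G, hG⟩ : ∃ G : ℂ ≃ᵃⁱ[ℝ] Plane, H = G '' Hex q := by
    rcases hqp with e | e
    · exact ⟨_, by rw [e]; exact hE⟩
    · refine ⟨Complex.conjLIE.toAffineIsometryEquiv.trans
        Complex.orthonormalBasisOneI.repr.toAffineIsometryEquiv, ?_⟩
      rw [e, Set.image_image, hE]
      refine Set.image_congr fun x _ => ?_
      simp
  refine ⟨Set.range (tile q (latFam (crBasis v w h) Φ) G), ?_, isEdgeToEdge_tile hΦ hA,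
    isPeriodic_tile h Φ G⟩
  rw [hG]
  exact isMonohedral_tile hΦ
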